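/- arXiv:math/9812080 — 2 statements merged into one kernel-verified Lean document; each statement's English description precedes it below -/
import Mathlib

section
/- Let κ be a partition with at most n parts and δ := (n−1,n−2,…,1,0). Let P_κ(x;q,qt) be the symmetric Macdonald polynomial with parameters (q,qt) (i.e. with t replaced by qt throughout its definition) and let S_{κ+δ}(x;q,t) be the q-antisymmetric Macdonald polynomial with parameters (q,t); assume both exist and are unique. Then S_{κ+δ}(x;q,t) = t^{−n(n−1)/2}·Δ_t(x)·P_κ(x;q,qt), where Δ_t(x) := ∏_{1≤i<j≤n}(t x_i − x_j). -/
/- STATEMENT 17: S_{κ+δ}(x;q,t) = t^{−n(n−1)/2}·Δ_t(x)·P_κ(x;q,qt), where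
δ = (n−1,…,1,0) and Δ_t(x) = ∏_{i<j}(t·x_i − x_j). -/

open Finset MvPolynomial

namespace Stmt17

/-- leg colength l'_η(i) -/
def legCo (n : ℕ) (η : Fin n → ℕ) (i : Fin n) : ℕ :=
  (univ.filter fun k => k < i ∧ η i ≤ η k).card +
  (univ.filter fun k => i < k ∧ η i < η k).card

/-- leg length l(s) of the node s = (i,j) -/
def leg (n : ℕ) (η : Fin n → ℕ) (i : Fin n) (j : ℕ) : ℕ :=
  (univ.filter fun k => i < k ∧ j ≤ η k ∧ η k ≤ η i).card +
  (univ.filter fun k => k < i ∧ j ≤ η k + 1 ∧ η k + 1 ≤ η i).card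

/-- The field K = ℚ(q,t). -/
abbrev K : Type := FractionRing (MvPolynomial (Fin 2) ℚ)

noncomputable def q : K := algebraMap (MvPolynomial (Fin 2) ℚ) K (X 0)
noncomputable def t : K := algebraMap (MvPolynomial (Fin 2) ℚ) K (X 1)

/-- The polynomial ring K[x_1,…,x_n]. -/
abbrev P (n : ℕ) : Type := MvPolynomial (Fin n) K

/-- the automorphism s_k exchanging x_k and x_{k+1} (0-indexed; identity out of range) -/
noncomputable def sOp (n : ℕ) (k : ℕ) : P n →ₗ[K] P n :=
  if h : k + 1 < n then
    (rename (Equiv.swap (⟨k, Nat.lt_of_succ_lt h⟩ : Fin n) ⟨k + 1, h⟩)).toLinearMap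
  else LinearMap.id

/-- τ_1 : x_1 ↦ qv·x_1 (the first variable is 0-indexed) -/
noncomputable def tauOp (n : ℕ) (qv : K) : P n →ₗ[K] P n :=
  (aeval (fun j : Fin n => if (j : ℕ) = 0 then C qv * X j else X j)).toLinearMap

/-- ω := s_{n−1}⋯s_2 s_1 τ_1 -/
noncomputable def omegaOp (n : ℕ) (qv : K) : P n →ₗ[K] P n :=
  (List.range (n - 1)).foldl (fun acc k => sOp n k ∘ₗ acc) (tauOp n qv)

/-- The defining property of the Demazure–Lustig operators T_k (0-indexed), for the
parameter value tv: (x_k − x_{k+1})·(T_k f) = (x_k − x_{k+1})·tv·f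
+ (tv·x_k − x_{k+1})·(s_k f − f), i.e. T_k f is the polynomial quotient from the usual
definition. -/
def IsDL (n : ℕ) (tv : K) (T : ℕ → P n →ₗ[K] P n) : Prop :=
  ∀ k, ∀ hk : k + 1 < n, ∀ f : P n,
    (X (⟨k, Nat.lt_of_succ_lt hk⟩ : Fin n) - X ⟨k + 1, hk⟩) * T k f =
      (X (⟨k, Nat.lt_of_succ_lt hk⟩ : Fin n) - X ⟨k + 1, hk⟩) * (C tv * f) +
      (C tv * X (⟨k, Nat.lt_of_succ_lt hk⟩ : Fin n) - X ⟨k + 1, hk⟩) * (sOp n k f - f)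

/-- T_k⁻¹ = tv⁻¹ − 1 + tv⁻¹ T_k -/
noncomputable def Tinv (n : ℕ) (tv : K) (T : ℕ → P n →ₗ[K] P n) (k : ℕ) : P n →ₗ[K] P n :=
  tv⁻¹ • LinearMap.id - LinearMap.id + tv⁻¹ • T k

/-- The Cherednik operator Y_i (0-indexed i):
Y_i = tv^{i+1−n}·T_i⋯T_{n−2}·ω·T_0⁻¹⋯T_{i−1}⁻¹. -/
noncomputable def Yop (n : ℕ) (qv tv : K) (T : ℕ → P n →ₗ[K] P n) (i : Fin n) :
    P n →ₗ[K] P n :=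
  (tv ^ (n - 1 - (i : ℕ)))⁻¹ •
    (((List.range' (i : ℕ) (n - 1 - (i : ℕ))).foldr (fun k acc => T k ∘ₗ acc) LinearMap.id) ∘ₗ
      omegaOp n qv ∘ₗ
      ((List.range (i : ℕ)).foldr (fun k acc => Tinv n tv T k ∘ₗ acc) LinearMap.id))

/-- the decreasing rearrangement η⁺ of η -/
noncomputable def sortDesc (n : ℕ) (η : Fin n → ℕ) : Fin n → ℕ :=
  fun i => η (Tuple.sort η i.rev)

/-- dominance order on n-tuples (of equal sum) -/
def domLE (n : ℕ) (ν μ : Fin n → ℕ) : Prop :=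
  (∑ i, ν i = ∑ i, μ i) ∧
  ∀ p : Fin n, ∑ i ∈ univ.filter (· ≤ p), ν i ≤ ∑ i ∈ univ.filter (· ≤ p), μ i

def domLT (n : ℕ) (ν μ : Fin n → ℕ) : Prop := domLE n ν μ ∧ ν ≠ μ

/-- the order ≺ : ν ≺ η iff ν⁺ < η⁺, or ν⁺ = η⁺ and ν < η (dominance order) -/
noncomputable def prec (n : ℕ) (ν η : Fin n → ℕ) : Prop :=
  domLT n (sortDesc n ν) (sortDesc n η) ∨ (sortDesc n ν = sortDesc n η ∧ domLT n ν η)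

/-- E is the non-symmetric Macdonald polynomial for the composition η (with parameters
qv, tv and Demazure–Lustig operators T): it has the triangular form
E = x^η + Σ_{ν≺η} b_{ην} x^ν and satisfies Y_i E = qv^{η_i}·tv^{−l'_η(i)}·E for all i. -/
noncomputable def IsNSMac (n : ℕ) (qv tv : K) (T : ℕ → P n →ₗ[K] P n)
    (η : Fin n → ℕ) (E : P n) : Prop :=
  coeff (Finsupp.equivFunOnFinite.symm η) E = 1 ∧
  (∀ ν : Fin n →₀ ℕ, coeff ν E ≠ 0 → (ν : Fin n → ℕ) = η ∨ prec n (ν : Fin n → ℕ) η) ∧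
  ∀ i : Fin n, Yop n qv tv T i E = (qv ^ η i / tv ^ legCo n η i) • E

/-- the adjacent transposition s_k as a permutation (identity out of range, 0-indexed) -/
def sPerm (n : ℕ) (k : ℕ) : Equiv.Perm (Fin n) :=
  if h : k + 1 < n then Equiv.swap ⟨k, Nat.lt_of_succ_lt h⟩ ⟨k + 1, h⟩ else 1

/-- the length l(σ) of a permutation, i.e. its number of inversions -/
def inversions {n : ℕ} (σ : Equiv.Perm (Fin n)) : ℕ :=
  (univ.filter fun p : Fin n × Fin n => p.1 < p.2 ∧ σ p.2 < σ p.1).card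

/-- The defining property of σ ↦ T_σ: T_1 = id and T_{σ·s_k} = T_σ ∘ T_k whenever
l(σ·s_k) = l(σ)+1; by the braid relations this determines T_σ = T_{i_1}⋯T_{i_p} for any
reduced word σ = s_{i_1}⋯s_{i_p}. -/
def IsTsigma (n : ℕ) (T : ℕ → P n →ₗ[K] P n)
    (Tw : Equiv.Perm (Fin n) → P n →ₗ[K] P n) : Prop :=
  Tw 1 = LinearMap.id ∧
  ∀ σ : Equiv.Perm (Fin n), ∀ k, k + 1 < n →
    inversions (σ * sPerm n k) = inversions σ + 1 →
    Tw (σ * sPerm n k) = Tw σ ∘ₗ T k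

/-- U⁺ := Σ_σ T_σ -/
noncomputable def Uplus (n : ℕ) (Tw : Equiv.Perm (Fin n) → P n →ₗ[K] P n) :
    P n →ₗ[K] P n := ∑ σ : Equiv.Perm (Fin n), Tw σ

/-- U⁻ := Σ_σ (−tv)^{−l(σ)} T_σ -/
noncomputable def Uminus (n : ℕ) (tv : K) (Tw : Equiv.Perm (Fin n) → P n →ₗ[K] P n) :
    P n →ₗ[K] P n := ∑ σ : Equiv.Perm (Fin n), ((-tv) ^ inversions σ)⁻¹ • Tw σ

/-- the monomial x^η -/
noncomputable def xmon (n : ℕ) (η : Fin n → ℕ) : P n :=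
  monomial (Finsupp.equivFunOnFinite.symm η) 1

/-- S is the q-antisymmetric Macdonald polynomial for the partition-with-distinct-parts κ:
it is q-antisymmetric (T_k S = −S), of the form m'_κ + Σ_{μ<κ} v_{κμ} m'_μ with
m'_μ := U⁻ x^μ, and satisfies (Σ_i Y_i) S = (Σ_i qv^{κ_i}·tv^{1−i}) S. -/
noncomputable def IsQASMac (n : ℕ) (qv tv : K) (T : ℕ → P n →ₗ[K] P n)
    (Tw : Equiv.Perm (Fin n) → P n →ₗ[K] P n) (κ : Fin n → ℕ) (S : P n) : Prop :=
  (∀ k, k + 1 < n → T k S = -S) ∧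
  (∃ v : (Fin n → ℕ) → K,
    S = Uminus n tv Tw (xmon n κ) +
      ∑ᶠ μ ∈ {μ : Fin n → ℕ | StrictAnti μ ∧ domLT n μ κ},
        v μ • Uminus n tv Tw (xmon n μ)) ∧
  (∑ i : Fin n, Yop n qv tv T i) S = (∑ i : Fin n, qv ^ κ i * (tv ^ (i : ℕ))⁻¹) • S

/-- Pp is the symmetric Macdonald polynomial for the partition κ (with parameters qv, tv
and Demazure–Lustig operators T): it is symmetric, of the triangular form
m_κ + Σ_{μ<κ} u_{κμ} m_μ, and satisfies (Σ_i Y_i) Pp = (Σ_i qv^{κ_i}·tv^{1−i}) Pp. -/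
noncomputable def IsSymMac (n : ℕ) (qv tv : K) (T : ℕ → P n →ₗ[K] P n)
    (κ : Fin n → ℕ) (Pp : P n) : Prop :=
  Pp.IsSymmetric ∧
  coeff (Finsupp.equivFunOnFinite.symm κ) Pp = 1 ∧
  (∀ ν : Fin n →₀ ℕ, coeff ν Pp ≠ 0 →
    sortDesc n (ν : Fin n → ℕ) = κ ∨ domLT n (sortDesc n (ν : Fin n → ℕ)) κ) ∧
  (∑ i : Fin n, Yop n qv tv T i) Pp = (∑ i : Fin n, qv ^ κ i * (tv ^ (i : ℕ))⁻¹) • Pp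

end Stmt17

open Stmt17

/-!
Multiplication by `Δ_t` intertwines the operator `∑ Y_i` with parameters `(q, qt)` on symmetric
polynomials with, up to the factor `q ^ (n - 1)`, the one with parameters `(q, t)` on
`q`-antisymmetric polynomials, and every `q`-antisymmetric polynomial is `Δ_t` times a symmetric
one. Hence `S_{κ+δ}(x; q, t) / Δ_t` is a symmetric eigenfunction with the eigenvalue of
`P_κ(x; q, qt)`. On a symmetric eigenfunction the eigenvalue can be read off the lexicographically
leading exponent, and it determines that exponent, so the quotient is a multiple of `P_κ`. The
multiple is found by comparing coefficients of `x^(κ+δ)`.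
-/

namespace Macdonald

section MacdonaldSum

variable {ι L : Type*} [Field L]

/-- The rational function `(c x_i - x_j) / (x_i - x_j)` from which both the Demazure–Lustig
operators and the Macdonald operators are built. -/
def factor (c : L) (x : ι → L) (i j : ι) : L :=
  (c * x i - x j) / (x i - x j)

/-- The Demazure–Lustig operator with parameter `c` for the variables `x a`, `x b`; the map `φ`
plays the role of the transposition of these two variables. -/
def demazureLustig (c : L) (x : ι → L) (φ : L → L) (a b : ι) (z : L) : L :=
  factor c x a b * φ z + (c - factor c x a b) * z

theorem demazureLustig_mul_left {c r : L} {x : ι → L} {φ : L →+* L} (hr : φ r = r) (a b : ι)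
    (z : L) : demazureLustig c x φ a b (r * z) = r * demazureLustig c x φ a b z := by
  rw [demazureLustig, demazureLustig, map_mul, hr]
  ring

theorem factor_inv_mul {c : L} (hc : c ≠ 0) (d : L) {x : ι → L} {i j : ι}
    (hx : x i - x j ≠ 0) (hcx : c * x j - x i ≠ 0) :
    factor c⁻¹ x i j * ((c * (d * x i) - x j) / (c * x j - x i)) =
      -c⁻¹ * factor (d * c) x i j := by
  simp only [factor]
  field_simp
  ring

theorem factor_add_factor_swap (c : L) {x : ι → L} (hx : Function.Injective x) {a b : ι}
    (hab : a ≠ b) : factor c x a b + factor c x b a = c + 1 := by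
  have h₁ := sub_ne_zero.2 (hx.ne hab)
  have h₂ := sub_ne_zero.2 (hx.ne hab.symm)
  simp only [factor]
  field_simp
  ring

theorem factor_mul_add_factor_mul (c : L) {x : ι → L} (hx : Function.Injective x) {a b i : ι}
    (hab : a ≠ b) (hia : i ≠ a) (hib : i ≠ b) :
    factor c x a b * factor c x i a + factor c x b a * factor c x i b =
      factor c x i a * factor c x i b + c := by
  have h₁ := sub_ne_zero.2 (hx.ne hab)
  have h₂ := sub_ne_zero.2 (hx.ne hab.symm)
  have h₃ := sub_ne_zero.2 (hx.ne hia)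
  have h₄ := sub_ne_zero.2 (hx.ne hib)
  simp only [factor]
  field_simp
  ring

variable [DecidableEq ι]

/-- The weight of the `i`-th summand of the Macdonald operator on the variables indexed by `A`. -/
def macdonaldCoeff (c : L) (x : ι → L) (A : Finset ι) (i : ι) : L :=
  ∏ j ∈ A.erase i, factor c x i j

/-- The first Macdonald operator on the variables indexed by `A`, as a linear form in the values
`u i`, which stand for the `q`-shifts `τ_i f` of a polynomial `f`. -/
def macdonaldSum (c : L) (x u : ι → L) (A : Finset ι) : L :=
  ∑ i ∈ A, macdonaldCoeff c x A i * u i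

theorem macdonaldCoeff_inv_mul_prod {c : L} (hc : c ≠ 0) (d : L) {x : ι → L}
    (hx : Function.Injective x) {A : Finset ι} {i : ι}
    (hcx : ∀ j ∈ A.erase i, c * x j - x i ≠ 0) :
    macdonaldCoeff c⁻¹ x A i * ∏ j ∈ A.erase i, (c * (d * x i) - x j) / (c * x j - x i) =
      (-c⁻¹) ^ #(A.erase i) * macdonaldCoeff (d * c) x A i := by
  rw [macdonaldCoeff, macdonaldCoeff, ← prod_mul_distrib, ← prod_const, ← prod_mul_distrib]
  exact prod_congr rfl fun j hj =>
    factor_inv_mul hc d (sub_ne_zero.2 (hx.ne (ne_of_mem_erase hj).symm)) (hcx j hj)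

theorem macdonaldCoeff_insert_self (c : L) (x : ι → L) (A : Finset ι) (a : ι) :
    macdonaldCoeff c x (insert a A) a = macdonaldCoeff c x A a := by
  rw [macdonaldCoeff, erase_insert_eq_erase, macdonaldCoeff]

theorem macdonaldCoeff_insert_of_ne (c : L) (x : ι → L) {A : Finset ι} {a i : ι} (ha : a ∉ A)
    (hi : i ≠ a) :
    macdonaldCoeff c x (insert a A) i = factor c x i a * macdonaldCoeff c x A i := by
  rw [macdonaldCoeff, erase_insert_of_ne hi.symm,
    prod_insert fun h => ha (mem_of_mem_erase h), macdonaldCoeff]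

theorem macdonaldSum_insert (c : L) (x u : ι → L) {A : Finset ι} {a : ι} (ha : a ∉ A) :
    macdonaldSum c x u (insert a A) = macdonaldCoeff c x A a * u a +
      ∑ i ∈ A, factor c x i a * macdonaldCoeff c x A i * u i := by
  rw [macdonaldSum, sum_insert ha, macdonaldCoeff_insert_self]
  congr 1
  exact sum_congr rfl fun i hi => by
    rw [macdonaldCoeff_insert_of_ne c x ha (ne_of_mem_of_not_mem hi ha)]

theorem macdonaldSum_insert_insert (c : L) (x u : ι → L) {A : Finset ι} {a b : ι} (hab : a ≠ b)
    (ha : a ∉ A) (hb : b ∉ A) :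
    macdonaldSum c x u (insert a (insert b A)) =
      factor c x a b * macdonaldCoeff c x A a * u a +
        factor c x b a * macdonaldCoeff c x A b * u b +
        ∑ i ∈ A, factor c x i a * (factor c x i b * macdonaldCoeff c x A i) * u i := by
  rw [macdonaldSum_insert c x u (by simp [hab, ha] : a ∉ insert b A), sum_insert hb,
    macdonaldCoeff_insert_of_ne c x hb hab, macdonaldCoeff_insert_self, ← add_assoc]
  congr 1
  exact sum_congr rfl fun i hi => by
    rw [macdonaldCoeff_insert_of_ne c x hb (ne_of_mem_of_not_mem hi hb)]

theorem macdonaldSum_exchange (c : L) {x : ι → L} (hx : Function.Injective x) (u : ι → L)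
    {A : Finset ι} {a b : ι} (hab : a ≠ b) (ha : a ∉ A) (hb : b ∉ A) :
    factor c x a b * macdonaldSum c x u (insert a A) +
        factor c x b a * macdonaldSum c x u (insert b A) =
      macdonaldSum c x u (insert a (insert b A)) + c * macdonaldSum c x u A := by
  have hsum : ∑ i ∈ A, (factor c x a b * (factor c x i a * macdonaldCoeff c x A i * u i) +
        factor c x b a * (factor c x i b * macdonaldCoeff c x A i * u i)) =
      ∑ i ∈ A, (factor c x i a * (factor c x i b * macdonaldCoeff c x A i) * u i +
        c * (macdonaldCoeff c x A i * u i)) :=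
    sum_congr rfl fun i hi => by
      linear_combination macdonaldCoeff c x A i * u i * factor_mul_add_factor_mul c hx hab
        (ne_of_mem_of_not_mem hi ha) (ne_of_mem_of_not_mem hi hb)
  simp only [sum_add_distrib, ← mul_sum] at hsum
  rw [macdonaldSum_insert c x u ha, macdonaldSum_insert c x u hb,
    macdonaldSum_insert_insert c x u hab ha hb, macdonaldSum]
  linear_combination hsum

theorem map_macdonaldSum (φ : L →+* L) (σ : Equiv.Perm ι) {c : L} {x u : ι → L} (hc : φ c = c)
    (hx : ∀ i, φ (x i) = x (σ i)) (hu : ∀ i, φ (u i) = u (σ i)) (A : Finset ι) :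
    φ (macdonaldSum c x u A) = macdonaldSum c x u (A.map σ.toEmbedding) := by
  simp only [macdonaldSum, macdonaldCoeff, factor, map_sum, map_mul, map_prod, map_div₀, map_sub,
    hc, hx, hu, sum_map, Equiv.coe_toEmbedding]
  refine sum_congr rfl fun i _ => ?_
  rw [← Equiv.coe_toEmbedding, ← map_erase, prod_map]

theorem map_swap_eq_self {A : Finset ι} {a b : ι} (ha : a ∉ A) (hb : b ∉ A) :
    A.map (Equiv.swap a b).toEmbedding = A := by
  rw [map_eq_image, ← image_id (s := A), image_image]
  exact image_congr fun i hi => Equiv.swap_apply_of_ne_of_ne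
    (ne_of_mem_of_not_mem hi ha) (ne_of_mem_of_not_mem hi hb)

theorem demazureLustig_macdonaldSum_sub (φ : L →+* L) {c : L} {x u : ι → L}
    (hxi : Function.Injective x) {A : Finset ι} {a b : ι} (hab : a ≠ b) (ha : a ∉ A) (hb : b ∉ A)
    (hc : φ c = c) (hx : ∀ i, φ (x i) = x (Equiv.swap a b i))
    (hu : ∀ i, φ (u i) = u (Equiv.swap a b i)) :
    demazureLustig c x φ a b (macdonaldSum c x u (insert b A) - macdonaldSum c x u A) =
      macdonaldSum c x u (insert a (insert b A)) - macdonaldSum c x u (insert b A) := by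
  have hA : φ (macdonaldSum c x u A) = macdonaldSum c x u A := by
    rw [map_macdonaldSum φ _ hc hx hu, map_swap_eq_self ha hb]
  have hbA : φ (macdonaldSum c x u (insert b A)) = macdonaldSum c x u (insert a A) := by
    rw [map_macdonaldSum φ _ hc hx hu, map_insert, map_swap_eq_self ha hb,
      Equiv.coe_toEmbedding, Equiv.swap_apply_right]
  rw [demazureLustig, map_sub, hA, hbA]
  linear_combination macdonaldSum_exchange c hxi u hab ha hb -
    macdonaldSum c x u (insert b A) * factor_add_factor_swap c hxi hab

end MacdonaldSum

section Telescope

variable {L : Type*} [Field L] {n : ℕ}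

theorem filter_le_eq_insert (a : Fin n) :
    (univ.filter fun i : Fin n => (a : ℕ) ≤ i) =
      insert a (univ.filter fun i : Fin n => (a : ℕ) + 1 ≤ i) := by
  ext i
  simp only [mem_filter, mem_univ, true_and, mem_insert, Fin.ext_iff]
  lia

/-- The sum telescopes: with `M k` the Macdonald sum over the indices `≥ k`, the exchange relation
gives `z i = M i - M (i + 1)`. -/
theorem sum_eq_macdonaldSum_univ {c : L} {x u : Fin n → L} (hxi : Function.Injective x)
    (φ : Equiv.Perm (Fin n) → L →+* L) (hc : ∀ σ, φ σ c = c) (hx : ∀ σ i, φ σ (x i) = x (σ i))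
    (hu : ∀ σ i, φ σ (u i) = u (σ i)) {z : Fin n → L}
    (hlast : ∀ i : Fin n, (i : ℕ) + 1 = n → z i = u i)
    (hstep : ∀ a b : Fin n, (a : ℕ) + 1 = b →
      z a = demazureLustig c x (φ (Equiv.swap a b)) a b (z b)) :
    ∑ i, z i = macdonaldSum c x u univ := by
  set M : ℕ → L := fun k => macdonaldSum c x u (univ.filter fun i : Fin n => k ≤ i) with hM
  have hempty : (univ.filter fun i : Fin n => n ≤ i) = ∅ :=
    filter_eq_empty_iff.2 fun i _ => by lia
  have hz : ∀ m, ∀ i : Fin n, (i : ℕ) + 1 + m = n → z i = M i - M (i + 1) := by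
    intro m
    induction m with
    | zero =>
      intro i hi
      rw [add_zero] at hi
      simp only [hM, filter_le_eq_insert i, hi, hempty]
      simp [macdonaldSum, macdonaldCoeff, hlast i hi]
    | succ m ih =>
      intro a ha
      let b : Fin n := ⟨a + 1, by lia⟩
      have hab : a ≠ b := by simp [Fin.ext_iff, b]
      rw [hstep a b rfl, ih b (by simp only [b]; lia)]
      simp only [hM, filter_le_eq_insert a]
      rw [show (a : ℕ) + 1 = b from rfl, filter_le_eq_insert b]
      exact demazureLustig_macdonaldSum_sub _ hxi hab (by simp [b]) (by simp)
        (hc _) (hx _) (hu _)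
  calc ∑ i, z i = ∑ i : Fin n, (M i - M (i + 1)) :=
        sum_congr rfl fun i _ => hz (n - 1 - i) i (by lia)
    _ = M 0 - M n := by
      rw [Fin.sum_univ_eq_sum_range fun k => M k - M (k + 1), sum_range_sub']
    _ = macdonaldSum c x u univ := by simp [hM, hempty, macdonaldSum]

end Telescope

section PairProducts

variable {M : Type*} [CommMonoid M] {n : ℕ}

/-- The positive roots of type `A_{n-1}`, that is the pairs `i < j` of indices. -/
def increasingPairs (n : ℕ) : Finset (Fin n × Fin n) :=
  univ.filter fun p => p.1 < p.2

theorem mem_increasingPairs {p : Fin n × Fin n} : p ∈ increasingPairs n ↔ p.1 < p.2 := by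
  simp [increasingPairs]

theorem swap_lt_swap_iff {a b : Fin n} (hab : (a : ℕ) + 1 = b) {i j : Fin n}
    (h₁ : (i, j) ≠ (a, b)) (h₂ : (i, j) ≠ (b, a)) :
    Equiv.swap a b i < Equiv.swap a b j ↔ i < j := by
  simp only [ne_eq, Prod.mk.injEq, Fin.ext_iff] at h₁ h₂
  simp only [Equiv.swap_apply_def, Fin.ext_iff, Fin.lt_def]
  split_ifs <;> lia

theorem map_swap_increasingPairs_erase {a b : Fin n} (hab : (a : ℕ) + 1 = b) :
    ((increasingPairs n).erase (a, b)).map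
        ((Equiv.swap a b).prodCongr (Equiv.swap a b)).toEmbedding =
      (increasingPairs n).erase (a, b) := by
  have hlt : a < b := by lia
  refine map_eq_of_subset fun p hp => ?_
  obtain ⟨⟨i, j⟩, hij, rfl⟩ := mem_map.1 hp
  obtain ⟨hne, hlt'⟩ := mem_erase.1 hij
  rw [mem_increasingPairs] at hlt'
  have hne' : (i, j) ≠ (b, a) := by
    rintro ⟨⟩
    exact hlt.not_gt hlt'
  simp only [Equiv.coe_toEmbedding, Equiv.prodCongr_apply, Prod.map_apply, mem_erase,
    mem_increasingPairs, swap_lt_swap_iff hab hne hne', hlt', and_true]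
  intro h
  refine hne' ?_
  simp only [Prod.mk.injEq, Equiv.swap_apply_eq_iff, Equiv.swap_apply_left,
    Equiv.swap_apply_right] at h
  simp [h]

theorem prod_univ_erase (f : Fin n → M) (i : Fin n) :
    ∏ j ∈ univ.erase i, f j = (∏ j ∈ Iio i, f j) * ∏ j ∈ Ioi i, f j := by
  rw [← prod_union (disjoint_left.2 fun j h h' => (mem_Iio.1 h).not_gt (mem_Ioi.1 h'))]
  congr 1
  ext j
  simp

@[to_additive]
theorem prod_increasingPairs (f : Fin n × Fin n → M) :
    ∏ p ∈ increasingPairs n, f p = ∏ i, ∏ j ∈ Ioi i, f (i, j) := by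
  rw [prod_sigma']
  exact prod_nbij' (fun p => ⟨p.1, p.2⟩) (fun s => (s.1, s.2)) (by simp [increasingPairs])
    (by simp [increasingPairs]) (by simp) (by simp) (by simp)

theorem prod_increasingPairs_split (f : Fin n × Fin n → M) (i : Fin n) :
    ∏ p ∈ increasingPairs n, f p =
      (∏ p ∈ increasingPairs n with p.1 ≠ i ∧ p.2 ≠ i, f p) *
        ((∏ j ∈ Iio i, f (j, i)) * ∏ j ∈ Ioi i, f (i, j)) := by
  rw [← prod_filter_mul_prod_filter_not _ fun p => p.1 ≠ i ∧ p.2 ≠ i]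
  congr 1
  have hlow : ∏ j ∈ Iio i, f (j, i) = ∏ p ∈ (Iio i).map (.sectL _ i), f p := by simp
  have hupp : ∏ j ∈ Ioi i, f (i, j) = ∏ p ∈ (Ioi i).map (.sectR i _), f p := by simp
  rw [hlow, hupp, ← prod_union]
  · congr 1
    ext ⟨j, k⟩
    simp only [ne_eq, not_and, Decidable.not_not, mem_filter, mem_increasingPairs, mem_union,
      mem_map, Function.Embedding.sectL_apply, Function.Embedding.sectR_apply, Prod.mk.injEq]
    grind
  · simp only [disjoint_left, mem_map, Function.Embedding.sectL_apply,
      Function.Embedding.sectR_apply]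
    grind

end PairProducts

section Scale

variable {σ R : Type*} [CommRing R]

open Classical in
/-- The substitution `x_i ↦ c x_i`; for `c = q` it is the `q`-shift operator `τ_i`. -/
noncomputable def scale (c : R) (i : σ) : MvPolynomial σ R →ₐ[R] MvPolynomial σ R :=
  aeval (Function.update X i (C c * X i))

theorem scale_X_self (c : R) (i : σ) : scale c i (X i) = C c * X i := by
  simp [scale]

theorem scale_X_of_ne (c : R) {i j : σ} (h : j ≠ i) : scale c i (X j) = X j := by
  simp [scale, h]

theorem rename_scale {τ : Type*} (c : R) (e : σ ≃ τ) (i : σ) (f : MvPolynomial σ R) :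
    rename e (scale c i f) = scale c (e i) (rename e f) := by
  suffices h : (rename e).comp (scale c i) = (scale c (e i)).comp (rename e) from
    DFunLike.congr_fun h f
  refine algHom_ext fun j => ?_
  by_cases hj : j = i
  · subst hj
    simp [scale_X_self]
  · simp [scale_X_of_ne c hj, scale_X_of_ne c (e.injective.ne hj)]

theorem scale_monomial (c : R) (i : σ) (ν : σ →₀ ℕ) (r : R) :
    scale c i (monomial ν r) = monomial ν (c ^ ν i * r) := by
  classical
  have hprod : (ν.prod fun j m => scale c i (X j) ^ m) =
      C (c ^ ν i) * ν.prod fun j m => X j ^ m := by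
    by_cases hi : i ∈ ν.support
    · rw [Finsupp.prod, Finsupp.prod, ← mul_prod_erase _ _ hi, ← mul_prod_erase _ _ hi,
        scale_X_self, mul_pow, C_pow, mul_assoc]
      congr 2
      exact prod_congr rfl fun j hj => by simp only [scale_X_of_ne c (ne_of_mem_erase hj)]
    · rw [Finsupp.notMem_support_iff.1 hi, pow_zero, C_1, one_mul]
      exact prod_congr rfl fun j hj => by
        simp only [scale_X_of_ne c (ne_of_mem_of_not_mem hj hi)]
  simp only [monomial_eq, map_mul, map_finsuppProd, map_pow, hprod, algHom_C, algebraMap_eq]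
  ring

theorem coeff_scale (c : R) (i : σ) (f : MvPolynomial σ R) (ν : σ →₀ ℕ) :
    coeff ν (scale c i f) = c ^ ν i * coeff ν f := by
  classical
  induction f using MvPolynomial.induction_on' with
  | monomial μ r =>
    rw [scale_monomial, coeff_monomial, coeff_monomial]
    split_ifs with h <;> simp [h]
  | add f g hf hg => rw [map_add, coeff_add, hf, hg, coeff_add, mul_add]

end Scale

section FractionField

variable {n : ℕ} {F : Type*} [Field F]

variable (n F) in
/-- The field of rational functions in `x_0, …, x_{n-1}`. -/
abbrev Frac : Type _ := FractionRing (MvPolynomial (Fin n) F)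

/-- The inclusion of polynomials into rational functions. -/
noncomputable abbrev toFrac : MvPolynomial (Fin n) F →+* Frac n F := algebraMap _ _

variable (n F) in
/-- The `i`-th variable as a rational function. -/
noncomputable def var (i : Fin n) : Frac n F := toFrac (X i)

theorem toFrac_X (i : Fin n) : toFrac (X i) = var n F i := rfl

theorem toFrac_injective : Function.Injective (toFrac : MvPolynomial (Fin n) F →+* Frac n F) :=
  IsFractionRing.injective _ _

/-- The permutation `σ` of the variables, acting on rational functions. -/
noncomputable def permFrac (σ : Equiv.Perm (Fin n)) : Frac n F →+* Frac n F :=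
  IsFractionRing.lift (A := MvPolynomial (Fin n) F)
    (g := toFrac.comp (rename σ : MvPolynomial (Fin n) F →ₐ[F] _))
    (toFrac_injective.comp (rename_injective σ σ.injective))

theorem permFrac_toFrac (σ : Equiv.Perm (Fin n)) (f : MvPolynomial (Fin n) F) :
    permFrac σ (toFrac f) = toFrac (rename σ f) :=
  IsFractionRing.lift_algebraMap _ f

theorem permFrac_toFrac_C (σ : Equiv.Perm (Fin n)) (c : F) :
    permFrac σ (toFrac (C c)) = toFrac (C c) := by
  rw [permFrac_toFrac, rename_C]

theorem permFrac_var (σ : Equiv.Perm (Fin n)) (i : Fin n) :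
    permFrac σ (var n F i) = var n F (σ i) := by
  rw [← toFrac_X, permFrac_toFrac, rename_X, toFrac_X]

theorem C_mul_X_sub_X_ne_zero (c : F) {i j : Fin n} (h : i ≠ j) :
    (C c * X i - X j : MvPolynomial (Fin n) F) ≠ 0 := fun h0 => by
  simpa [h] using congrArg (aeval (Pi.single j (1 : F))) h0

theorem toFrac_C_mul_var_sub_var_ne_zero (c : F) {i j : Fin n} (h : i ≠ j) :
    toFrac (C c) * var n F i - var n F j ≠ 0 := by
  rw [← toFrac_X, ← toFrac_X, ← map_mul, ← map_sub]
  exact (map_ne_zero_iff _ toFrac_injective).2 (C_mul_X_sub_X_ne_zero c h)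

theorem var_injective : Function.Injective (var n F) :=
  toFrac_injective.comp (X_injective)

theorem toFrac_C_ne_zero {c : F} (hc : c ≠ 0) : (toFrac (C c) : Frac n F) ≠ 0 :=
  (map_ne_zero_iff _ toFrac_injective).2 (C_ne_zero.2 hc)

theorem toFrac_C_inv_pow (c : F) (m : ℕ) :
    (toFrac (C (c ^ m)⁻¹) : Frac n F) = (toFrac (C c))⁻¹ ^ m := by
  rw [← inv_pow, C_pow, map_pow]
  exact congrArg (· ^ m) (map_inv₀ ((toFrac : MvPolynomial (Fin n) F →+* _).comp C) c)

end FractionField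

section TVandermonde

variable {n : ℕ} {F : Type*} [Field F]

variable (n) in
/-- The `t`-Vandermonde product `Δ_c = ∏_{i < j} (c x_i - x_j)`; `Δ_1` is the Vandermonde
determinant up to sign. -/
noncomputable def tVandermonde (c : F) : MvPolynomial (Fin n) F :=
  ∏ p ∈ increasingPairs n, (C c * X p.1 - X p.2)

theorem tVandermonde_ne_zero (c : F) : tVandermonde n c ≠ 0 :=
  prod_ne_zero_iff.2 fun _ hp => C_mul_X_sub_X_ne_zero c (mem_increasingPairs.1 hp).ne

theorem rename_swap_tVandermonde (c : F) {a b : Fin n} (hab : (a : ℕ) + 1 = b) :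
    rename (Equiv.swap a b) (tVandermonde n c) * (C c * X a - X b) =
      (C c * X b - X a) * tVandermonde n c := by
  have hmem : (a, b) ∈ increasingPairs n := mem_increasingPairs.2 (by simp only; lia)
  have hrest : rename (Equiv.swap a b)
        (∏ p ∈ (increasingPairs n).erase (a, b), (C c * X p.1 - X p.2)) =
      ∏ p ∈ (increasingPairs n).erase (a, b), (C c * X p.1 - X p.2 : MvPolynomial (Fin n) F) := by
    conv_rhs => rw [← map_swap_increasingPairs_erase hab, prod_map]
    simp [map_prod]
  rw [tVandermonde, ← mul_prod_erase _ _ hmem, map_mul, hrest]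
  simp only [map_sub, map_mul, rename_C, rename_X, Equiv.swap_apply_left, Equiv.swap_apply_right]
  ring

theorem permFrac_swap_tVandermonde (c : F) {a b : Fin n} (hab : (a : ℕ) + 1 = b) :
    permFrac (Equiv.swap a b) (toFrac (tVandermonde n c)) =
      (toFrac (C c) * var n F b - var n F a) / (toFrac (C c) * var n F a - var n F b) *
        toFrac (tVandermonde n c) := by
  have hne := toFrac_C_mul_var_sub_var_ne_zero (n := n) c (show a ≠ b by lia)
  have h := congrArg toFrac (rename_swap_tVandermonde c hab)
  simp only [map_mul, map_sub, ← permFrac_toFrac, toFrac_X] at h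
  rw [div_mul_eq_mul_div, eq_div_iff hne]
  exact h

theorem demazureLustig_tVandermonde_mul {c : F} (hc : c ≠ 0) {a b : Fin n}
    (hab : (a : ℕ) + 1 = b) (y : Frac n F) :
    demazureLustig (toFrac (C c)) (var n F) (permFrac (Equiv.swap a b)) a b
        (toFrac (tVandermonde n c) * y) =
      -toFrac (C c) * toFrac (tVandermonde n c) *
        demazureLustig (toFrac (C c))⁻¹ (var n F) (permFrac (Equiv.swap a b)) a b y := by
  have h₁ := toFrac_C_ne_zero (n := n) hc
  have h₂ := toFrac_C_mul_var_sub_var_ne_zero (n := n) c (show a ≠ b by lia)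
  have h₃ : var n F a - var n F b ≠ 0 := sub_ne_zero.2 (var_injective.ne (by lia))
  simp only [demazureLustig, factor, map_mul, permFrac_swap_tVandermonde c hab]
  field_simp
  ring

theorem toFrac_scale_tVandermonde (a c : F) (i : Fin n) :
    toFrac (scale c i (tVandermonde n a)) = toFrac (tVandermonde n a) *
      ((∏ j ∈ Iio i, (toFrac (C a) * var n F j - toFrac (C c) * var n F i) /
          (toFrac (C a) * var n F j - var n F i)) *
        ∏ j ∈ Ioi i, (toFrac (C a) * (toFrac (C c) * var n F i) - var n F j) /
          (toFrac (C a) * var n F i - var n F j)) := by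
  have hfix : ∀ p ∈ (increasingPairs n).filter fun p => p.1 ≠ i ∧ p.2 ≠ i,
      toFrac (scale c i (C a * X p.1 - X p.2)) =
        toFrac (C a * X p.1 - X p.2 : MvPolynomial (Fin n) F) := fun p hp => by
    obtain ⟨-, h₁, h₂⟩ := mem_filter.1 hp
    rw [map_sub, map_mul, scale_X_of_ne c h₁, scale_X_of_ne c h₂, algHom_C, algebraMap_eq]
  have hlow : ∀ j ∈ Iio i, toFrac (scale c i (C a * X j - X i)) =
      toFrac (C a) * var n F j - toFrac (C c) * var n F i := fun j hj => by
    rw [map_sub, map_mul, scale_X_of_ne c (mem_Iio.1 hj).ne, scale_X_self, algHom_C,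
      algebraMap_eq, map_sub, map_mul, map_mul, toFrac_X, toFrac_X]
  have hupp : ∀ j ∈ Ioi i, toFrac (scale c i (C a * X i - X j)) =
      toFrac (C a) * (toFrac (C c) * var n F i) - var n F j := fun j hj => by
    rw [map_sub, map_mul, scale_X_of_ne c (mem_Ioi.1 hj).ne', scale_X_self, algHom_C,
      algebraMap_eq, map_sub, map_mul, map_mul, toFrac_X, toFrac_X]
  have hne_low : ∏ j ∈ Iio i, (toFrac (C a) * var n F j - var n F i) ≠ 0 :=
    prod_ne_zero_iff.2 fun j hj => toFrac_C_mul_var_sub_var_ne_zero a (mem_Iio.1 hj).ne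
  have hne_upp : ∏ j ∈ Ioi i, (toFrac (C a) * var n F i - var n F j) ≠ 0 :=
    prod_ne_zero_iff.2 fun j hj => toFrac_C_mul_var_sub_var_ne_zero a (mem_Ioi.1 hj).ne
  simp only [tVandermonde, map_prod]
  rw [prod_increasingPairs_split _ i, prod_increasingPairs_split _ i, prod_congr rfl hfix,
    prod_congr rfl hlow, prod_congr rfl hupp, prod_div_distrib, prod_div_distrib]
  simp only [map_sub, map_mul, toFrac_X]
  field_simp

theorem toFrac_scale_vandermonde (c : F) (i : Fin n) :
    toFrac (scale c i (tVandermonde n 1)) = toFrac (tVandermonde n 1) *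
      macdonaldCoeff (toFrac (C c)) (var n F) univ i := by
  rw [toFrac_scale_tVandermonde, macdonaldCoeff, prod_univ_erase]
  simp only [map_one, one_mul, factor]
  congr 2
  exact prod_congr rfl fun j _ => by rw [← neg_sub, ← neg_sub (var n F i), neg_div_neg_eq]

end TVandermonde

section DemazureLustig

variable {n : ℕ} {tv : K} {T : ℕ → P n →ₗ[K] P n} {a b : Fin n}

theorem sPerm_eq_swap (hab : (a : ℕ) + 1 = b) : sPerm n a = Equiv.swap a b := by
  rw [sPerm, dif_pos (by lia)]
  congr 1
  exact Fin.ext hab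

theorem sOp_eq_rename_swap (hab : (a : ℕ) + 1 = b) (f : P n) :
    sOp n a f = rename (Equiv.swap a b) f := by
  rw [← sPerm_eq_swap hab, sOp, sPerm, dif_pos (by lia), dif_pos (by lia)]
  rfl

theorem X_sub_X_mul_T (hT : IsDL n tv T) (hab : (a : ℕ) + 1 = b) (f : P n) :
    (X a - X b) * T a f = (X a - X b) * (C tv * f) +
      (C tv * X a - X b) * (rename (Equiv.swap a b) f - f) := by
  have hb : (⟨a + 1, by lia⟩ : Fin n) = b := Fin.ext hab
  have h := hT a (by lia) f
  rwa [sOp_eq_rename_swap hab, hb] at h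

theorem toFrac_T (hT : IsDL n tv T) (hab : (a : ℕ) + 1 = b) (f : P n) :
    toFrac (T a f) = demazureLustig (toFrac (C tv)) (var n K) (permFrac (Equiv.swap a b)) a b
      (toFrac f) := by
  have hne : var n K a - var n K b ≠ 0 := sub_ne_zero.2 (var_injective.ne (by lia))
  have h := congrArg toFrac (X_sub_X_mul_T hT hab f)
  simp only [map_mul, map_add, map_sub, toFrac_X, ← permFrac_toFrac] at h
  rw [demazureLustig, factor]
  field_simp
  linear_combination h

theorem T_eq_smul_of_rename_swap_eq (hT : IsDL n tv T) (hab : (a : ℕ) + 1 = b) {f : P n}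
    (hf : rename (Equiv.swap a b) f = f) : T a f = tv • f := by
  refine toFrac_injective ?_
  rw [toFrac_T hT hab, demazureLustig, permFrac_toFrac, hf, smul_eq_C_mul, map_mul]
  ring

theorem T_mul_of_rename_swap_eq (hT : IsDL n tv T) (hab : (a : ℕ) + 1 = b) {f : P n}
    (hf : rename (Equiv.swap a b) f = f) (g : P n) : T a (f * g) = f * T a g := by
  refine toFrac_injective ?_
  rw [map_mul toFrac, toFrac_T hT hab, toFrac_T hT hab, demazureLustig, demazureLustig, map_mul,
    map_mul, permFrac_toFrac _ f, hf]
  ring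

theorem Tinv_apply (k : ℕ) (f : P n) : Tinv n tv T k f = tv⁻¹ • f - f + tv⁻¹ • T k f := rfl

end DemazureLustig

section Cherednik

variable {n : ℕ} {qv tv : K} {T : ℕ → P n →ₗ[K] P n} {a b : Fin n}

/-- The polynomial `T_i T_{i+1} ⋯ T_{n-2} u`. -/
noncomputable def chain (T : ℕ → P n →ₗ[K] P n) (u : P n) (i : Fin n) : P n :=
  (List.range' i (n - 1 - i)).foldr (fun k acc => T k ∘ₗ acc) LinearMap.id u

theorem chain_last (T : ℕ → P n →ₗ[K] P n) (u : P n) {i : Fin n} (hi : (i : ℕ) + 1 = n) :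
    chain T u i = u := by
  simp [chain, show n - 1 - (i : ℕ) = 0 by lia]

theorem chain_succ (T : ℕ → P n →ₗ[K] P n) (u : P n) (hab : (a : ℕ) + 1 = b) :
    chain T u a = T a (chain T u b) := by
  rw [chain, show n - 1 - (a : ℕ) = (n - 1 - b) + 1 by lia, List.range'_succ, hab]
  rfl

theorem foldr_comp_apply_of_eigen {V : Type*} [AddCommGroup V] [Module K V] {A : ℕ → V →ₗ[K] V}
    {c : K} {f : V} {l : List ℕ} (h : ∀ k ∈ l, A k f = c • f) :
    l.foldr (fun k acc => A k ∘ₗ acc) LinearMap.id f = c ^ l.length • f := by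
  induction l with
  | nil => simp
  | cons k l ih =>
    rw [List.foldr_cons, LinearMap.comp_apply, ih fun j hj => h j (List.mem_cons_of_mem k hj),
      map_smul, h k List.mem_cons_self, smul_smul, List.length_cons, pow_succ]

theorem Yop_apply_of_eigen {c : K} {f : P n} (h : ∀ k, k + 1 < n → Tinv n tv T k f = c • f)
    (i : Fin n) :
    Yop n qv tv T i f = (tv ^ (n - 1 - (i : ℕ)))⁻¹ • c ^ (i : ℕ) • chain T (omegaOp n qv f) i := by
  have hfold : (List.range i).foldr (fun k acc => Tinv n tv T k ∘ₗ acc) LinearMap.id f =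
      c ^ (i : ℕ) • f := by
    simpa using foldr_comp_apply_of_eigen (l := List.range i) fun k hk =>
      h k (by have := List.mem_range.1 hk; lia)
  rw [Yop, LinearMap.smul_apply, LinearMap.comp_apply, LinearMap.comp_apply, hfold, map_smul,
    map_smul, chain]

/-- The operator `s_i ⋯ s_2 s_1 τ_1`, through which `ω` is built up. -/
noncomputable def partialOmega (qv : K) (i : Fin n) : P n →ₗ[K] P n :=
  (List.range i).foldl (fun acc k => sOp n k ∘ₗ acc) (tauOp n qv)

theorem partialOmega_zero (qv : K) {i : Fin n} (hi : (i : ℕ) = 0) (f : P n) :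
    partialOmega qv i f = scale qv i f := by
  rw [partialOmega, hi, tauOp, scale]
  refine congrArg (fun v => aeval v f) (funext fun j => ?_)
  by_cases hj : j = i
  · simp [hj, hi]
  · simp [hj, show (j : ℕ) ≠ 0 by lia]

theorem partialOmega_succ (qv : K) (hab : (a : ℕ) + 1 = b) (f : P n) :
    partialOmega qv b f = rename (Equiv.swap a b) (partialOmega qv a f) := by
  rw [partialOmega, ← hab, List.range_succ, List.foldl_append, ← sOp_eq_rename_swap hab]
  rfl

theorem omegaOp_eq_partialOmega (qv : K) {i : Fin n} (hi : (i : ℕ) + 1 = n) :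
    omegaOp n qv = partialOmega qv i := by
  rw [omegaOp, partialOmega, show n - 1 = (i : ℕ) by lia]

theorem fin_induction {p : Fin n → Prop} (zero : ∀ i : Fin n, (i : ℕ) = 0 → p i)
    (succ : ∀ a b : Fin n, (a : ℕ) + 1 = b → p a → p b) (i : Fin n) : p i := by
  obtain ⟨m, hm⟩ := i
  induction m with
  | zero => exact zero _ rfl
  | succ m ih => exact succ ⟨m, by lia⟩ _ rfl (ih _)

/-- The first Macdonald operator
`D f = ∑ i, (∏_{j ≠ i} (c x_i - x_j) / (x_i - x_j)) τ_i f`. -/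
noncomputable def macdonaldOp (qv c : K) (f : P n) : Frac n K :=
  macdonaldSum (toFrac (C c)) (var n K) (fun i => toFrac (scale qv i f)) univ

theorem permFrac_toFrac_scale {f : P n} (hf : f.IsSymmetric) (c : K) (σ : Equiv.Perm (Fin n))
    (i : Fin n) : permFrac σ (toFrac (scale c i f)) = toFrac (scale c (σ i) f) := by
  rw [permFrac_toFrac, rename_scale, hf]

theorem partialOmega_of_isSymmetric {f : P n} (hf : f.IsSymmetric) (qv : K) (i : Fin n) :
    partialOmega qv i f = scale qv i f := by
  induction i using fin_induction with
  | zero i hi => exact partialOmega_zero qv hi f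
  | succ a b hab ih =>
    rw [partialOmega_succ qv hab, ih, rename_scale, hf, Equiv.swap_apply_left]

theorem toFrac_sum_Yop_of_isSymmetric (hT : IsDL n tv T) (htv : tv ≠ 0) {f : P n}
    (hf : f.IsSymmetric) :
    toFrac ((∑ i, Yop n qv tv T i) f) =
      toFrac (C (tv ^ (n - 1))⁻¹) * macdonaldOp qv tv f := by
  have hTinv (k : ℕ) (hk : k + 1 < n) : Tinv n tv T k f = tv⁻¹ • f := by
    have h := T_eq_smul_of_rename_swap_eq hT (a := ⟨k, by lia⟩) (b := ⟨k + 1, hk⟩) rfl (hf _)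
    rw [Tinv_apply, h, inv_smul_smul₀ htv, sub_add_cancel]
  have hY (i : Fin n) : Yop n qv tv T i f = (tv ^ (n - 1))⁻¹ • chain T (omegaOp n qv f) i := by
    rw [Yop_apply_of_eigen hTinv, smul_smul, inv_pow, ← mul_inv, ← pow_add,
      Nat.sub_add_cancel (by lia)]
  have hsum := sum_eq_macdonaldSum_univ var_injective permFrac (permFrac_toFrac_C · tv)
    permFrac_var (permFrac_toFrac_scale hf qv)
    (z := fun i => toFrac (chain T (omegaOp n qv f) i))
    (fun i hi => by
      rw [chain_last T _ hi, omegaOp_eq_partialOmega qv hi, partialOmega_of_isSymmetric hf])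
    (fun a b hab => by rw [chain_succ T _ hab, toFrac_T hT hab])
  rw [LinearMap.sum_apply, sum_congr rfl fun i _ => hY i, ← smul_sum, smul_eq_C_mul, map_mul,
    map_sum, hsum, macdonaldOp]

end Cherednik

section Antisymmetric

variable {n : ℕ} {qv tv : K} {T : ℕ → P n →ₗ[K] P n} {a b : Fin n} {g : P n}

/-- The rational function that replaces `τ_i g` when the Cherednik operators act on
`tVandermonde n tv * g` instead of `g`. -/
noncomputable def twistedShift (qv tv : K) (g : P n) (i : Fin n) : Frac n K :=
  (∏ j ∈ univ.erase i, (toFrac (C tv) * (toFrac (C qv) * var n K i) - var n K j) /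
    (toFrac (C tv) * var n K j - var n K i)) * toFrac (scale qv i g)

theorem permFrac_twistedShift (hg : g.IsSymmetric) (qv tv : K) (σ : Equiv.Perm (Fin n))
    (i : Fin n) : permFrac σ (twistedShift qv tv g i) = twistedShift qv tv g (σ i) := by
  have hmap : univ.erase (σ i) = (univ.erase i).map σ.toEmbedding := by
    rw [map_erase, map_univ_equiv, Equiv.coe_toEmbedding]
  simp only [twistedShift, hmap, prod_map, map_mul, map_prod, map_div₀, map_sub, permFrac_var,
    permFrac_toFrac_C, permFrac_toFrac_scale hg, Equiv.coe_toEmbedding]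

theorem macdonaldCoeff_mul_twistedShift (htv : tv ≠ 0) (qv : K) (g : P n) (i : Fin n) :
    macdonaldCoeff (toFrac (C tv))⁻¹ (var n K) univ i * twistedShift qv tv g i =
      (-(toFrac (C tv))⁻¹) ^ (n - 1) *
        (macdonaldCoeff (toFrac (C (qv * tv))) (var n K) univ i * toFrac (scale qv i g)) := by
  have hcard : n - 1 = #(univ.erase i) := by simp
  rw [twistedShift, ← mul_assoc, macdonaldCoeff_inv_mul_prod (toFrac_C_ne_zero htv) _ var_injective
    fun j hj => toFrac_C_mul_var_sub_var_ne_zero tv (ne_of_mem_erase hj), hcard, C_mul,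
    RingHom.map_mul toFrac, mul_assoc]

theorem Ioi_eq_insert (hab : (a : ℕ) + 1 = b) : Ioi a = insert b (Ioi b) := by
  ext j
  simp only [mem_Ioi, mem_insert, Fin.lt_def, Fin.ext_iff]
  lia

theorem toFrac_partialOmega_tVandermonde_mul (hg : g.IsSymmetric) (qv tv : K) (i : Fin n) :
    toFrac (partialOmega qv i (tVandermonde n tv * g)) =
      toFrac (tVandermonde n tv) * (twistedShift qv tv g i *
        ∏ j ∈ Ioi i, (toFrac (C tv) * var n K j - var n K i) /
          (toFrac (C tv) * var n K i - var n K j)) := by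
  induction i using fin_induction with
  | zero i hi =>
    have hIio : Iio i = ∅ := by
      ext j
      simp [Fin.lt_def, hi]
    rw [partialOmega_zero qv hi, map_mul, map_mul, toFrac_scale_tVandermonde, twistedShift,
      prod_univ_erase, hIio, prod_empty, prod_empty, one_mul, one_mul, mul_right_comm _ (toFrac _),
      ← prod_mul_distrib, mul_assoc]
    congr 2
    refine prod_congr rfl fun j hj => ?_
    have hne := toFrac_C_mul_var_sub_var_ne_zero (n := n) tv (mem_Ioi.1 hj).ne'
    rw [div_mul_div_cancel₀ hne]
  | succ a b hab ih =>
    have hne : a ≠ b := by lia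
    have h₁ := toFrac_C_mul_var_sub_var_ne_zero (n := n) tv hne
    have h₂ := toFrac_C_mul_var_sub_var_ne_zero (n := n) tv hne.symm
    have hrest : ∏ j ∈ Ioi b, (toFrac (C tv) * var n K (Equiv.swap a b j) - var n K b) /
          (toFrac (C tv) * var n K b - var n K (Equiv.swap a b j)) =
        ∏ j ∈ Ioi b, (toFrac (C tv) * var n K j - var n K b) /
          (toFrac (C tv) * var n K b - var n K j) := prod_congr rfl fun j hj => by
      have hj := mem_Ioi.1 hj
      rw [Equiv.swap_apply_of_ne_of_ne (by lia) hj.ne']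
    rw [partialOmega_succ qv hab, ← permFrac_toFrac, ih, Ioi_eq_insert hab,
      prod_insert (by simp)]
    simp only [map_mul, map_prod, map_div₀, map_sub, permFrac_toFrac_C, permFrac_var,
      permFrac_twistedShift hg, permFrac_swap_tVandermonde tv hab, Equiv.swap_apply_left,
      Equiv.swap_apply_right, hrest]
    field_simp

theorem T_tVandermonde_mul (hT : IsDL n tv T) (htv : tv ≠ 0) (hg : g.IsSymmetric)
    (hab : (a : ℕ) + 1 = b) : T a (tVandermonde n tv * g) = -(tVandermonde n tv * g) := by
  have ht := toFrac_C_ne_zero (n := n) htv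
  refine toFrac_injective ?_
  rw [toFrac_T hT hab, map_mul, demazureLustig_tVandermonde_mul htv hab, demazureLustig,
    permFrac_toFrac, hg, map_neg, map_mul]
  field_simp
  ring

theorem sum_chain_omegaOp_tVandermonde_mul (hT : IsDL n tv T) (htv : tv ≠ 0)
    (hg : g.IsSymmetric) (qv : K) :
    ∑ i : Fin n, (-(toFrac (C tv))⁻¹) ^ (n - 1 - i) *
        (toFrac (chain T (omegaOp n qv (tVandermonde n tv * g)) i) / toFrac (tVandermonde n tv)) =
      (-(toFrac (C tv))⁻¹) ^ (n - 1) * macdonaldOp qv (qv * tv) g := by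
  have hΔ : (toFrac (tVandermonde n tv) : Frac n K) ≠ 0 :=
    (map_ne_zero_iff _ toFrac_injective).2 (tVandermonde_ne_zero tv)
  have ht := toFrac_C_ne_zero (n := n) htv
  rw [sum_eq_macdonaldSum_univ (c := (toFrac (C tv))⁻¹) (u := twistedShift qv tv g)
    var_injective permFrac (fun σ => by rw [map_inv₀, permFrac_toFrac_C]) permFrac_var
    (permFrac_twistedShift hg qv tv), macdonaldOp, macdonaldSum, macdonaldSum, mul_sum,
    sum_congr rfl fun i _ => macdonaldCoeff_mul_twistedShift htv qv g i]
  · intro i hi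
    have hIoi : Ioi i = ∅ := by
      ext j
      simp only [mem_Ioi, Fin.lt_def, notMem_empty, iff_false]
      lia
    rw [chain_last T _ hi, omegaOp_eq_partialOmega qv hi,
      toFrac_partialOmega_tVandermonde_mul hg, hIoi, prod_empty, mul_one,
      mul_div_cancel_left₀ _ hΔ, show n - 1 - (i : ℕ) = 0 by lia, pow_zero, one_mul]
  · intro a b hab
    have hfix : permFrac (Equiv.swap a b) ((-(toFrac (C tv))⁻¹ : Frac n K) ^ (n - 1 - (b : ℕ))) =
        (-(toFrac (C tv))⁻¹) ^ (n - 1 - (b : ℕ)) := by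
      rw [map_pow, map_neg, map_inv₀, permFrac_toFrac_C]
    rw [demazureLustig_mul_left hfix, show n - 1 - (a : ℕ) = n - 1 - b + 1 by lia, pow_succ,
      chain_succ T _ hab, toFrac_T hT hab]
    set h := toFrac (chain T (omegaOp n qv (tVandermonde n tv * g)) b)
    have hDL := demazureLustig_tVandermonde_mul htv hab (h / toFrac (tVandermonde n tv))
    rw [mul_div_cancel₀ h hΔ] at hDL
    rw [hDL]
    field_simp

theorem toFrac_sum_Yop_tVandermonde_mul (hT : IsDL n tv T) (htv : tv ≠ 0)
    (hg : g.IsSymmetric) (qv : K) :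
    toFrac ((∑ i, Yop n qv tv T i) (tVandermonde n tv * g)) =
      toFrac (C (tv ^ (n - 1))⁻¹) *
        (toFrac (tVandermonde n tv) * macdonaldOp qv (qv * tv) g) := by
  have hΔ : (toFrac (tVandermonde n tv) : Frac n K) ≠ 0 :=
    (map_ne_zero_iff _ toFrac_injective).2 (tVandermonde_ne_zero tv)
  have hTinv (k : ℕ) (hk : k + 1 < n) :
      Tinv n tv T k (tVandermonde n tv * g) = (-1 : K) • (tVandermonde n tv * g) := by
    have h := T_tVandermonde_mul hT htv hg (a := ⟨k, by lia⟩) (b := ⟨k + 1, hk⟩) rfl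
    rw [Tinv_apply, h, smul_neg, neg_one_smul]
    abel
  have hY (i : Fin n) : toFrac (Yop n qv tv T i (tVandermonde n tv * g)) =
      (-1) ^ (n - 1) * toFrac (tVandermonde n tv) * ((-(toFrac (C tv))⁻¹) ^ (n - 1 - (i : ℕ)) *
        (toFrac (chain T (omegaOp n qv (tVandermonde n tv * g)) i) /
          toFrac (tVandermonde n tv))) := by
    have hsign : (-1 : Frac n K) ^ (i : ℕ) = (-1) ^ (n - 1) * (-1) ^ (n - 1 - (i : ℕ)) := by
      rw [← pow_add, show n - 1 + (n - 1 - (i : ℕ)) = i + 2 * (n - 1 - i) by lia, pow_add,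
        (even_two_mul _).neg_one_pow, mul_one]
    rw [Yop_apply_of_eigen hTinv, smul_eq_C_mul, smul_eq_C_mul, map_mul, map_mul, C_pow, map_pow,
      C_neg, C_1, map_neg, map_one, hsign, toFrac_C_inv_pow, neg_pow (toFrac (C tv))⁻¹]
    field_simp
  have hneg : (-1 : Frac n K) ^ (n - 1) * (-1) ^ (n - 1) = 1 := by
    rw [← mul_pow, neg_one_mul, neg_neg, one_pow]
  rw [LinearMap.sum_apply, map_sum, sum_congr rfl fun i _ => hY i, ← mul_sum,
    sum_chain_omegaOp_tVandermonde_mul hT htv hg, toFrac_C_inv_pow, neg_pow (toFrac (C tv))⁻¹]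
  linear_combination (toFrac (tVandermonde n tv) * (toFrac (C tv))⁻¹ ^ (n - 1) *
    macdonaldOp qv (qv * tv) g) * hneg

theorem sum_Yop_tVandermonde_mul {T' : ℕ → P n →ₗ[K] P n} (hT : IsDL n tv T)
    (hT' : IsDL n (qv * tv) T') (hqv : qv ≠ 0) (htv : tv ≠ 0) (hg : g.IsSymmetric) :
    (∑ i, Yop n qv tv T i) (tVandermonde n tv * g) =
      qv ^ (n - 1) • (tVandermonde n tv * (∑ i, Yop n qv (qv * tv) T' i) g) := by
  refine toFrac_injective ?_
  have hC : (tv ^ (n - 1))⁻¹ = qv ^ (n - 1) * ((qv * tv) ^ (n - 1))⁻¹ := by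
    rw [mul_pow, mul_inv, mul_inv_cancel_left₀ (pow_ne_zero _ hqv)]
  rw [toFrac_sum_Yop_tVandermonde_mul hT htv hg, smul_eq_C_mul, map_mul, map_mul,
    toFrac_sum_Yop_of_isSymmetric hT' (mul_ne_zero hqv htv) hg, hC, C_mul, map_mul]
  ring

end Antisymmetric

section LeadingExponent

variable {n : ℕ} {F : Type*} [Field F]

theorem lex_degree_C_mul_X {c : F} (hc : c ≠ 0) (i : Fin n) :
    MonomialOrder.lex.degree (C c * X i : MvPolynomial (Fin n) F) = Finsupp.single i 1 := by
  classical
  rw [C_mul_X_eq_monomial, MonomialOrder.degree_monomial, if_neg hc]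

theorem lex_degree_X_lt {c : F} (hc : c ≠ 0) {i j : Fin n} (h : i < j) :
    MonomialOrder.lex.toSyn (MonomialOrder.lex.degree (X j : MvPolynomial (Fin n) F)) <
      MonomialOrder.lex.toSyn (MonomialOrder.lex.degree (C c * X i : MvPolynomial (Fin n) F)) := by
  rw [MonomialOrder.degree_X, lex_degree_C_mul_X hc, MonomialOrder.lex_lt_iff]
  exact Finsupp.Lex.single_lt_iff.2 h

theorem lex_degree_C_mul_X_sub_X {c : F} (hc : c ≠ 0) {i j : Fin n} (h : i < j) :
    MonomialOrder.lex.degree (C c * X i - X j : MvPolynomial (Fin n) F) = Finsupp.single i 1 := by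
  rw [MonomialOrder.degree_sub_of_lt (lex_degree_X_lt hc h), lex_degree_C_mul_X hc]

theorem lex_leadingCoeff_C_mul_X_sub_X {c : F} (hc : c ≠ 0) {i j : Fin n} (h : i < j) :
    MonomialOrder.lex.leadingCoeff (C c * X i - X j : MvPolynomial (Fin n) F) = c := by
  rw [MonomialOrder.leadingCoeff_sub_of_lt (lex_degree_X_lt hc h), C_mul_X_eq_monomial,
    MonomialOrder.leadingCoeff_monomial]

/-- The exponent `δ = (n-1, …, 1, 0)`. -/
noncomputable def staircase (n : ℕ) : Fin n →₀ ℕ :=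
  Finsupp.equivFunOnFinite.symm fun i => n - 1 - i

theorem staircase_apply (i : Fin n) : staircase n i = n - 1 - i := rfl

theorem sum_increasingPairs_single :
    ∑ p ∈ increasingPairs n, Finsupp.single p.1 1 = staircase n := by
  ext i
  have hcard : n - 1 - (i : ℕ) = #(Ioi i) := (Fin.card_Ioi i).symm
  rw [sum_increasingPairs, staircase_apply, hcard]
  simp only [sum_const, Finsupp.finsetSum_apply, Finsupp.smul_apply, Finsupp.single_apply,
    smul_eq_mul, mul_ite, mul_one, mul_zero, sum_ite_eq', mem_univ, if_true]

theorem card_increasingPairs : #(increasingPairs n) = n * (n - 1) / 2 := by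
  rw [card_eq_sum_ones, sum_increasingPairs, ← Finset.sum_range_id_mul_two n]
  simp only [sum_const, Fin.card_Ioi, smul_eq_mul, mul_one]
  rw [Nat.mul_div_cancel _ two_pos, Fin.sum_univ_eq_sum_range fun i => n - 1 - i,
    Finset.sum_range_reflect fun i => i]

theorem lex_degree_tVandermonde {c : F} (hc : c ≠ 0) :
    MonomialOrder.lex.degree (tVandermonde n c) = staircase n := by
  rw [tVandermonde, MonomialOrder.degree_prod fun p hp =>
    C_mul_X_sub_X_ne_zero c (mem_increasingPairs.1 hp).ne, ← sum_increasingPairs_single]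
  exact sum_congr rfl fun p hp => lex_degree_C_mul_X_sub_X hc (mem_increasingPairs.1 hp)

theorem coeff_staircase_tVandermonde {c : F} (hc : c ≠ 0) :
    coeff (staircase n) (tVandermonde n c) = c ^ (n * (n - 1) / 2) := by
  rw [← lex_degree_tVandermonde hc]
  change MonomialOrder.lex.leadingCoeff _ = _
  have hlead : ∀ p ∈ increasingPairs n,
      MonomialOrder.lex.leadingCoeff (C c * X p.1 - X p.2 : MvPolynomial (Fin n) F) = c :=
    fun p hp => lex_leadingCoeff_C_mul_X_sub_X hc (mem_increasingPairs.1 hp)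
  rw [tVandermonde, MonomialOrder.leadingCoeff_prod_of_regular fun p hp =>
    IsRegular.of_ne_zero ((hlead p hp).trans_ne hc), prod_congr rfl hlead, prod_const,
    card_increasingPairs]

theorem lex_degree_scale_le (c : F) (i : Fin n) (f : MvPolynomial (Fin n) F) :
    MonomialOrder.lex.toSyn (MonomialOrder.lex.degree (scale c i f)) ≤
      MonomialOrder.lex.toSyn (MonomialOrder.lex.degree f) := by
  refine MonomialOrder.degree_le_degree_of_support_subset fun ν hν => ?_
  rw [mem_support_iff, coeff_scale] at hν
  exact mem_support_iff.2 (right_ne_zero_of_mul hν)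

theorem coeff_degree_add_scale_mul_scale (b c : F) (i : Fin n) (f g : MvPolynomial (Fin n) F) :
    coeff (MonomialOrder.lex.degree f + MonomialOrder.lex.degree g) (scale b i f * scale c i g) =
      b ^ MonomialOrder.lex.degree f i * c ^ MonomialOrder.lex.degree g i *
        (MonomialOrder.lex.leadingCoeff f * MonomialOrder.lex.leadingCoeff g) := by
  rw [MonomialOrder.coeff_mul_of_add_of_degree_le (lex_degree_scale_le b i f)
    (lex_degree_scale_le c i g), coeff_scale, coeff_scale, mul_mul_mul_comm]
  rfl

end LeadingExponent

section Eigenvalue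

variable {n : ℕ} {qv tv e : K} {T : ℕ → P n →ₗ[K] P n} {f : P n}

theorem C_mul_vandermonde_mul_of_eigen (hT : IsDL n tv T) (htv : tv ≠ 0) (hf : f.IsSymmetric)
    (he : (∑ i, Yop n qv tv T i) f = e • f) :
    C (e * tv ^ (n - 1)) * (tVandermonde n 1 * f) =
      ∑ i, scale tv i (tVandermonde n 1) * scale qv i f := by
  refine toFrac_injective ?_
  have htvn : toFrac (C (tv ^ (n - 1)) : P n) * toFrac (C (tv ^ (n - 1))⁻¹) = 1 := by
    rw [← map_mul, ← C_mul, mul_inv_cancel₀ (pow_ne_zero _ htv), C_1, map_one]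
  have h := toFrac_sum_Yop_of_isSymmetric (qv := qv) hT htv hf
  rw [he, smul_eq_C_mul, map_mul] at h
  have hsum : toFrac (∑ i, scale tv i (tVandermonde n 1) * scale qv i f) =
      toFrac (tVandermonde n 1) * macdonaldOp qv tv f := by
    simp only [map_sum, map_mul, toFrac_scale_vandermonde, macdonaldOp, macdonaldSum, mul_sum,
      mul_assoc]
  rw [hsum, C_mul, map_mul, map_mul, map_mul]
  linear_combination (toFrac (C (tv ^ (n - 1))) * toFrac (tVandermonde n 1)) * h +
    toFrac (tVandermonde n 1) * macdonaldOp qv tv f * htvn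

theorem eigenvalue_eq_sum_lex_degree (hT : IsDL n tv T) (htv : tv ≠ 0) (hf : f.IsSymmetric)
    (hf₀ : f ≠ 0) (he : (∑ i, Yop n qv tv T i) f = e • f) :
    e = ∑ i : Fin n, qv ^ MonomialOrder.lex.degree f i * (tv ^ (i : ℕ))⁻¹ := by
  have hlc : MonomialOrder.lex.leadingCoeff (tVandermonde n (1 : K)) *
      MonomialOrder.lex.leadingCoeff f ≠ 0 :=
    mul_ne_zero (MonomialOrder.leadingCoeff_ne_zero_iff.2 (tVandermonde_ne_zero 1))
      (MonomialOrder.leadingCoeff_ne_zero_iff.2 hf₀)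
  have h := congrArg (coeff (MonomialOrder.lex.degree (tVandermonde n (1 : K)) +
    MonomialOrder.lex.degree f)) (C_mul_vandermonde_mul_of_eigen hT htv hf he)
  rw [coeff_C_mul, MonomialOrder.coeff_mul_of_degree_add, coeff_sum,
    sum_congr rfl fun i _ => coeff_degree_add_scale_mul_scale tv qv i _ f, ← sum_mul] at h
  refine mul_right_cancel₀ (pow_ne_zero (n - 1) htv) ((mul_right_cancel₀ hlc h).trans ?_)
  rw [sum_mul]
  refine sum_congr rfl fun i _ => ?_
  rw [lex_degree_tVandermonde one_ne_zero, staircase_apply, mul_assoc, mul_comm,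
    show n - 1 = n - 1 - i + i by lia, pow_add, Nat.add_sub_cancel, mul_comm (_ ^ _) (tv ^ (i : ℕ)),
    inv_mul_cancel_left₀ (pow_ne_zero _ htv)]

theorem q_ne_zero : q ≠ 0 :=
  (map_ne_zero_iff _ (IsFractionRing.injective (MvPolynomial (Fin 2) ℚ) K)).2 (X_ne_zero 0)

theorem t_ne_zero : t ≠ 0 :=
  (map_ne_zero_iff _ (IsFractionRing.injective (MvPolynomial (Fin 2) ℚ) K)).2 (X_ne_zero 1)

theorem pow_t_injective : Function.Injective fun k : ℕ => t ^ k := fun a b h => by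
  have h' := IsFractionRing.injective (MvPolynomial (Fin 2) ℚ) K
    ((map_pow _ _ a).trans (h.trans (map_pow _ _ b).symm))
  simpa using congrArg totalDegree h'

theorem coeff_sum_X_pow_mul_X_pow (ρ : Fin n → ℕ) (i : Fin n) (a : ℕ) :
    coeff (Finsupp.single 0 a + Finsupp.single 1 (n - 1 - i))
        (∑ j : Fin n, X 0 ^ ρ j * X 1 ^ (n - 1 - j) : MvPolynomial (Fin 2) ℚ) =
      if ρ i = a then 1 else 0 := by
  have hexp (j : Fin n) :
      (Finsupp.single 0 (ρ j) + Finsupp.single 1 (n - 1 - j) : Fin 2 →₀ ℕ) =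
        Finsupp.single 0 a + Finsupp.single 1 (n - 1 - i) ↔ i = j ∧ ρ i = a := by
    constructor
    · intro h
      have h₀ : ρ j = a := by simpa using DFunLike.congr_fun h 0
      have h₁ : n - 1 - (j : ℕ) = n - 1 - i := by simpa using DFunLike.congr_fun h 1
      obtain rfl : i = j := by lia
      exact ⟨rfl, h₀⟩
    · rintro ⟨rfl, rfl⟩
      rfl
  simp only [coeff_sum, X_pow_eq_monomial, monomial_mul, mul_one, coeff_monomial, hexp, ite_and,
    sum_ite_eq, mem_univ, if_true]

theorem sum_q_pow_mul_qt_pow_injective :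
    Function.Injective fun ρ : Fin n → ℕ =>
      ∑ i : Fin n, q ^ ρ i * ((q * t) ^ (i : ℕ))⁻¹ := by
  have hqt : q * t ≠ 0 := mul_ne_zero q_ne_zero t_ne_zero
  have hpoly (ρ : Fin n → ℕ) : (∑ i : Fin n, q ^ ρ i * ((q * t) ^ (i : ℕ))⁻¹) * (q * t) ^ (n - 1) =
      algebraMap (MvPolynomial (Fin 2) ℚ) K
        (∑ i : Fin n, X 0 ^ (ρ i + (n - 1 - i)) * X 1 ^ (n - 1 - i)) := by
    rw [sum_mul, map_sum]
    refine sum_congr rfl fun i _ => ?_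
    rw [map_mul, map_pow, map_pow, ← q, ← t, pow_add, mul_assoc, mul_assoc, ← mul_pow,
      show n - 1 = i + (n - 1 - i) by lia, pow_add, inv_mul_cancel_left₀ (pow_ne_zero _ hqt),
      Nat.add_sub_cancel_left]
  intro κ μ h
  funext i
  have hsum := congrArg (coeff (Finsupp.single 0 (μ i + (n - 1 - i)) +
    Finsupp.single 1 (n - 1 - i))) (IsFractionRing.injective (MvPolynomial (Fin 2) ℚ) K
      ((hpoly κ).symm.trans ((congrArg (· * (q * t) ^ (n - 1)) h).trans (hpoly μ))))
  rw [coeff_sum_X_pow_mul_X_pow, coeff_sum_X_pow_mul_X_pow, if_pos rfl] at hsum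
  by_contra hne
  rw [if_neg fun h => hne (Nat.add_right_cancel h)] at hsum
  exact zero_ne_one hsum

theorem lex_degree_eq_of_eigen {κ : Fin n →₀ ℕ} (hT : IsDL n (q * t) T) (hf : f.IsSymmetric)
    (hf₀ : f ≠ 0) (he : (∑ i, Yop n q (q * t) T i) f =
      (∑ i : Fin n, q ^ κ i * ((q * t) ^ (i : ℕ))⁻¹) • f) :
    MonomialOrder.lex.degree f = κ :=
  DFunLike.coe_injective (sum_q_pow_mul_qt_pow_injective
    (eigenvalue_eq_sum_lex_degree hT (mul_ne_zero q_ne_zero t_ne_zero) hf hf₀ he)).symm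

theorem eq_smul_of_eigen {κ : Fin n →₀ ℕ} {g : P n} (hT : IsDL n (q * t) T) (hf : f.IsSymmetric)
    (hg : g.IsSymmetric) (hf₁ : coeff κ f = 1)
    (hef : (∑ i, Yop n q (q * t) T i) f =
      (∑ i : Fin n, q ^ κ i * ((q * t) ^ (i : ℕ))⁻¹) • f)
    (heg : (∑ i, Yop n q (q * t) T i) g =
      (∑ i : Fin n, q ^ κ i * ((q * t) ^ (i : ℕ))⁻¹) • g) :
    g = coeff κ g • f := by
  by_contra hne
  have h₀ := sub_ne_zero.2 hne
  have hdeg := lex_degree_eq_of_eigen hT (hg.sub (hf.smul _)) h₀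
    (by rw [map_sub, map_smul, hef, heg, smul_sub, smul_comm])
  refine (MonomialOrder.leadingCoeff_ne_zero_iff (m := MonomialOrder.lex)).2 h₀ ?_
  rw [MonomialOrder.leadingCoeff, hdeg, coeff_sub, coeff_smul, hf₁, smul_eq_mul, mul_one, sub_self]

end Eigenvalue

section AdjacentTransposition

variable {n : ℕ} {a b : Fin n}

theorem inversions_eq_card_filter (σ : Equiv.Perm (Fin n)) :
    inversions σ = #{p ∈ increasingPairs n | σ p.2 < σ p.1} := by
  rw [inversions, increasingPairs, filter_filter]

theorem inversions_mul_swap {σ : Equiv.Perm (Fin n)} (hab : (a : ℕ) + 1 = b) (h : σ a < σ b) :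
    inversions (σ * Equiv.swap a b) = inversions σ + 1 := by
  have hmem : (a, b) ∈ increasingPairs n := mem_increasingPairs.2 (by simp only; lia)
  have hrest : #{p ∈ (increasingPairs n).erase (a, b) |
        (σ * Equiv.swap a b) p.2 < (σ * Equiv.swap a b) p.1} =
      #{p ∈ (increasingPairs n).erase (a, b) | σ p.2 < σ p.1} := by
    conv_rhs => rw [← map_swap_increasingPairs_erase hab, filter_map, card_map]
    rfl
  rw [inversions_eq_card_filter, inversions_eq_card_filter, ← insert_erase hmem, filter_insert,
    filter_insert, if_neg h.not_gt, if_pos (by simpa using h), card_insert_of_notMem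
    fun h' => notMem_erase _ _ (mem_filter.1 h').1, hrest]

theorem eq_one_of_forall_lt {σ : Equiv.Perm (Fin n)}
    (h : ∀ a b : Fin n, (a : ℕ) + 1 = b → σ a < σ b) : σ = 1 := by
  refine (Equiv.Perm.monotone_iff σ).1 fun i j => ?_
  induction j using fin_induction with
  | zero j hj => exact fun hij => (congrArg σ (show i = j by lia)).le
  | succ a b hab ih =>
    intro hib
    rcases hib.eq_or_lt with rfl | hlt
    · exact le_rfl
    · exact (ih (by lia)).trans (h a b hab).le

theorem perm_induction {p : Equiv.Perm (Fin n) → Prop} (one : p 1)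
    (mul_swap : ∀ (σ : Equiv.Perm (Fin n)) (a b : Fin n), (a : ℕ) + 1 = b → σ a < σ b → p σ →
      p (σ * Equiv.swap a b)) (σ : Equiv.Perm (Fin n)) : p σ := by
  induction hm : inversions σ generalizing σ with
  | zero =>
    suffices h : σ = 1 from h ▸ one
    refine eq_one_of_forall_lt fun a b hab => not_le.1 fun hle => ?_
    have hlt : (σ * Equiv.swap a b) a < (σ * Equiv.swap a b) b := by
      simpa using hle.lt_of_ne (σ.injective.ne (by lia))
    have := inversions_mul_swap hab hlt
    rw [mul_assoc, Equiv.swap_mul_self, mul_one] at this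
    lia
  | succ m ih =>
    by_cases h : ∀ a b : Fin n, (a : ℕ) + 1 = b → σ a < σ b
    · exact eq_one_of_forall_lt h ▸ one
    push Not at h
    obtain ⟨a, b, hab, hle⟩ := h
    have hlt : (σ * Equiv.swap a b) a < (σ * Equiv.swap a b) b := by
      simpa using hle.lt_of_ne (σ.injective.ne (by lia))
    have hinv := inversions_mul_swap hab hlt
    have hp := mul_swap _ a b hab hlt
    rw [mul_assoc, Equiv.swap_mul_self, mul_one] at hinv hp
    exact hp (ih _ (by lia))

end AdjacentTransposition

section Divisibility

variable {n : ℕ} {F : Type*} [Field F]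

theorem irreducible_C_mul_X_sub_X (c : F) {i j : Fin n} (h : i ≠ j) :
    Irreducible (C c * X i - X j : MvPolynomial (Fin n) F) := by
  have hcoeff : coeff (Finsupp.single j 1) (C c * X i - X j : MvPolynomial (Fin n) F) = -1 := by
    classical
    rw [coeff_sub, coeff_C_mul, coeff_X, coeff_X, if_pos rfl, if_neg fun h' =>
      h (Finsupp.single_left_injective one_ne_zero h'), mul_zero, zero_sub]
  refine irreducible_of_totalDegree_eq_one (le_antisymm ?_ ?_) fun x hx => ?_
  · exact (totalDegree_sub _ _).trans (max_le ((totalDegree_mul _ _).trans (by simp)) (by simp))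
  · simpa using le_totalDegree (mem_support_iff.2 (hcoeff.trans_ne (neg_ne_zero.2 one_ne_zero)))
  · exact isUnit_of_dvd_unit (hcoeff ▸ hx (Finsupp.single j 1)) isUnit_one.neg

theorem isRelPrime_C_mul_X_sub_X {c : F} (hc : Function.Injective fun k : ℕ => c ^ k)
    {i j a b : Fin n} (hij : i < j) (hba : b < a) :
    IsRelPrime (C c * X i - X j : MvPolynomial (Fin n) F) (C c * X a - X b) := by
  rw [(irreducible_C_mul_X_sub_X c hij.ne).isRelPrime_iff_not_dvd]
  rintro ⟨u, hu⟩
  let e : Fin n → ℕ := fun k => if k = i then 0 else if k = j then 1 else 3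
  have heval := congrArg (eval fun k => c ^ e k) hu
  have hi : e i = 0 := by simp [e]
  have hj : e j = 1 := by simp [e, hij.ne']
  simp only [map_mul, map_sub, eval_C, eval_X, hi, hj, pow_zero, mul_one, pow_one, sub_self,
    zero_mul, ← pow_succ', sub_eq_zero] at heval
  have he : e a + 1 = e b := hc heval
  simp only [e] at he
  split_ifs at he <;> lia

theorem isRelPrime_tVandermonde_rename_rev {c : F} (hc : Function.Injective fun k : ℕ => c ^ k) :
    IsRelPrime (tVandermonde n c) (rename Fin.revPerm (tVandermonde n c)) := by
  simp only [tVandermonde, map_prod, map_sub, map_mul, rename_C, rename_X]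
  exact IsRelPrime.prod_left fun p hp => IsRelPrime.prod_right fun r hr =>
    isRelPrime_C_mul_X_sub_X hc (mem_increasingPairs.1 hp)
      (Fin.rev_lt_rev.2 (mem_increasingPairs.1 hr))

variable {tv : K} {T : ℕ → P n →ₗ[K] P n} {S : P n}

theorem permFrac_mul (σ τ : Equiv.Perm (Fin n)) (z : Frac n F) :
    permFrac (σ * τ) z = permFrac σ (permFrac τ z) := by
  obtain ⟨x, y, -, rfl⟩ := IsFractionRing.div_surjective (A := MvPolynomial (Fin n) F) z
  simp only [map_div₀, permFrac_toFrac, rename_rename, Equiv.Perm.coe_mul]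

theorem permFrac_div_tVandermonde (hT : IsDL n tv T) (hS : ∀ k, k + 1 < n → T k S = -S)
    (σ : Equiv.Perm (Fin n)) :
    permFrac σ (toFrac S / toFrac (tVandermonde n tv)) =
      toFrac S / toFrac (tVandermonde n tv) := by
  induction σ using perm_induction with
  | one => simp only [map_div₀, permFrac_toFrac, Equiv.Perm.coe_one, rename_id_apply]
  | mul_swap σ a b hab _ ih =>
    suffices hswap : permFrac (Equiv.swap a b) (toFrac S / toFrac (tVandermonde n tv)) =
        toFrac S / toFrac (tVandermonde n tv) by rw [permFrac_mul, hswap, ih]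
    have h := congrArg toFrac (X_sub_X_mul_T hT hab S)
    have h₁ := toFrac_C_mul_var_sub_var_ne_zero tv (show a ≠ b by lia)
    have h₂ := toFrac_C_mul_var_sub_var_ne_zero tv (show b ≠ a by lia)
    have hΔ : (toFrac (tVandermonde n tv) : Frac n K) ≠ 0 :=
      (map_ne_zero_iff _ toFrac_injective).2 (tVandermonde_ne_zero tv)
    rw [hS a (by lia)] at h
    simp only [map_mul, map_add, map_sub, map_neg, toFrac_X, ← permFrac_toFrac] at h
    rw [map_div₀, permFrac_swap_tVandermonde tv hab]
    field_simp
    linear_combination -h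

/-- Antisymmetry makes `S / Δ_t` invariant under all permutations of the variables. For the longest
one this says that `Δ_t` divides `S * w₀ Δ_t`, and `Δ_t` is coprime to `w₀ Δ_t`. -/
theorem exists_isSymmetric_eq_tVandermonde_mul (hT : IsDL n tv T)
    (htv : Function.Injective fun k : ℕ => tv ^ k) (hS : ∀ k, k + 1 < n → T k S = -S) :
    ∃ g : P n, g.IsSymmetric ∧ S = tVandermonde n tv * g := by
  have hΔ (σ : Equiv.Perm (Fin n)) : toFrac (rename σ (tVandermonde n tv)) ≠ 0 :=
    (map_ne_zero_iff _ toFrac_injective).2 <|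
      (map_ne_zero_iff _ (rename_injective σ σ.injective)).2 (tVandermonde_ne_zero tv)
  have hΔ₁ : toFrac (tVandermonde n tv) ≠ 0 := by simpa using hΔ 1
  have hinv (σ : Equiv.Perm (Fin n)) : rename σ S * tVandermonde n tv =
      S * rename σ (tVandermonde n tv) := by
    have h := permFrac_div_tVandermonde hT hS σ
    rw [map_div₀, permFrac_toFrac, permFrac_toFrac, div_eq_div_iff (hΔ σ) hΔ₁] at h
    exact toFrac_injective (by simpa only [map_mul] using h)
  obtain ⟨g, rfl⟩ : tVandermonde n tv ∣ S :=
    (isRelPrime_tVandermonde_rename_rev htv).dvd_of_dvd_mul_right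
      (hinv Fin.revPerm ▸ dvd_mul_left _ _)
  refine ⟨g, fun σ => ?_, rfl⟩
  refine mul_left_cancel₀ (mul_ne_zero (tVandermonde_ne_zero tv)
    ((map_ne_zero_iff _ (rename_injective σ σ.injective)).2 (tVandermonde_ne_zero tv))) ?_
  have h := hinv σ
  rw [map_mul] at h
  linear_combination h

end Divisibility

section Weight

variable {n : ℕ} {F : Type*} [Field F]

/-- The span of the monomials `x^ν` with `∑ i, ν i ^ 2 < c`. The operators `T_k` preserve this
filtration, and on its graded pieces they act on dominant monomials by permutations. -/
noncomputable def lowWeight (F : Type*) [Field F] (n c : ℕ) :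
    Submodule F (MvPolynomial (Fin n) F) :=
  restrictSupport F {ν | ν ⬝ᵥ ν < c}

theorem monomial_mem_lowWeight {ν : Fin n →₀ ℕ} {c : ℕ} (h : ν ⬝ᵥ ν < c) :
    monomial ν 1 ∈ lowWeight F n c :=
  (monomial_mem_restrictSupport F).2 (Or.inl h)

theorem coeff_of_mem_lowWeight {ν : Fin n →₀ ℕ} {f : MvPolynomial (Fin n) F}
    (hf : f ∈ lowWeight F n (ν ⬝ᵥ ν)) : coeff ν f = 0 :=
  notMem_support_iff.1 fun h => lt_irrefl (ν ⬝ᵥ ν) ((mem_restrictSupport_iff F).1 hf h)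

theorem lowWeight_mono {c d : ℕ} (h : c ≤ d) : lowWeight F n c ≤ lowWeight F n d :=
  restrictSupport_mono F fun _ hν => lt_of_lt_of_le hν h

theorem lowWeight_le_comap {L : MvPolynomial (Fin n) F →ₗ[F] MvPolynomial (Fin n) F}
    (hL : ∀ ν : Fin n →₀ ℕ, L (monomial ν 1) ∈ lowWeight F n (ν ⬝ᵥ ν + 1)) (c : ℕ) :
    lowWeight F n c ≤ (lowWeight F n c).comap L := by
  conv_lhs => rw [lowWeight, restrictSupport_eq_span]
  refine Submodule.span_le.2 ?_
  rintro _ ⟨ν, hν, rfl⟩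
  exact lowWeight_mono hν (hL ν)

theorem mapDomain_dotProduct_self (σ : Equiv.Perm (Fin n)) (ν : Fin n →₀ ℕ) :
    ν.mapDomain σ ⬝ᵥ ν.mapDomain σ = ν ⬝ᵥ ν := by
  rw [← comp_equiv_dotProduct_comp_equiv _ _ σ]
  congr 1 <;> exact funext fun i => Finsupp.mapDomain_apply σ.injective ν i

theorem add_single_add_single_dotProduct_self_lt {ν : Fin n →₀ ℕ} {a b : Fin n} (hab : a ≠ b)
    (h : ν a = ν b) {k l : ℕ} (hk : 0 < k) (hl : 0 < l) :
    ⇑(ν + Finsupp.single a k + Finsupp.single b l) ⬝ᵥ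
        ⇑(ν + Finsupp.single a k + Finsupp.single b l) <
      ⇑(ν + Finsupp.single a (k + l)) ⬝ᵥ ⇑(ν + Finsupp.single a (k + l)) := by
  simp only [Finsupp.coe_add, Finsupp.single_eq_pi_single, add_dotProduct, dotProduct_add,
    single_dotProduct, dotProduct_single, Pi.add_apply, Pi.single_eq_same, Pi.single_eq_of_ne hab,
    Pi.single_eq_of_ne hab.symm, h]
  nlinarith

theorem rename_swap_monomial_of_eq {ν : Fin n →₀ ℕ} {a b : Fin n} (h : ν a = ν b) (c : F) :
    rename (Equiv.swap a b) (monomial ν c) = monomial ν c := by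
  rw [rename_monomial]
  refine congrArg (monomial · c) (Finsupp.ext fun i => ?_)
  rw [Finsupp.mapDomain_equiv_apply, Equiv.symm_swap, Equiv.swap_apply_def]
  split_ifs with hi hi <;> simp [hi, h]

end Weight

section MonomialAction

variable {n : ℕ} {tv : K} {T : ℕ → P n →ₗ[K] P n} {a b : Fin n}

theorem T_X_pow_succ (hT : IsDL n tv T) (hab : (a : ℕ) + 1 = b) (d : ℕ) :
    T a (X a ^ (d + 1)) =
      X b ^ (d + 1) + (1 - tv) • ∑ i ∈ range d, X a ^ (i + 1) * X b ^ (d - i) := by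
  have hne : (X a - X b : P n) ≠ 0 := by
    simpa using C_mul_X_sub_X_ne_zero (1 : K) (show a ≠ b by lia)
  have hgeom : (X a - X b : P n) * ∑ i ∈ range d, X a ^ (i + 1) * X b ^ (d - i) =
      X a * X b * (X a ^ d - X b ^ d) := by
    rw [← (Commute.all (X a : P n) (X b)).geom_sum₂_mul, mul_sum, sum_mul, mul_sum]
    refine sum_congr rfl fun i hi => ?_
    rw [show d - i = (d - 1 - i) + 1 by have := mem_range.1 hi; lia]
    ring
  refine mul_left_cancel₀ hne ?_
  rw [X_sub_X_mul_T hT hab, map_pow, rename_X, Equiv.swap_apply_left, smul_eq_C_mul, C_sub, C_1]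
  linear_combination (C tv - 1) * hgeom

theorem T_monomial_sub_rename_mem (hT : IsDL n tv T) (hab : (a : ℕ) + 1 = b) {ν : Fin n →₀ ℕ}
    (h : ν b < ν a) :
    T a (monomial ν 1) - rename (Equiv.swap a b) (monomial ν 1) ∈ lowWeight K n (ν ⬝ᵥ ν) := by
  have hne : a ≠ b := by lia
  obtain ⟨d, hd⟩ : ∃ d, ν a = ν b + (d + 1) := ⟨ν a - ν b - 1, by lia⟩
  obtain ⟨ρ, hρ, rfl⟩ : ∃ ρ : Fin n →₀ ℕ, ρ a = ρ b ∧ ρ + Finsupp.single a (d + 1) = ν := by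
    refine ⟨ν - Finsupp.single a (d + 1), ?_, tsub_add_cancel_of_le ?_⟩
    · simp [hd, hne]
    · exact Finsupp.single_le_iff.2 (by lia)
  have hsymm := rename_swap_monomial_of_eq hρ (1 : K)
  rw [monomial_add_single, T_mul_of_rename_swap_eq hT hab hsymm, T_X_pow_succ hT hab, map_mul,
    hsymm, map_pow, rename_X, Equiv.swap_apply_left, mul_add, add_sub_cancel_left, mul_smul_comm,
    mul_sum]
  refine Submodule.smul_mem _ _ (Submodule.sum_mem _ fun i hi => ?_)
  rw [← mul_assoc, ← monomial_add_single, ← monomial_add_single]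
  have hi' := mem_range.1 hi
  refine monomial_mem_lowWeight ?_
  rw [show d + 1 = (i + 1) + (d - i) by lia]
  exact add_single_add_single_dotProduct_self_lt hne hρ (by lia) (by lia)

theorem T_mem_lowWeight (hT : IsDL n tv T) (hab : (a : ℕ) + 1 = b) {c : ℕ} {f : P n}
    (hf : f ∈ lowWeight K n c) : T a f ∈ lowWeight K n c := by
  refine lowWeight_le_comap (fun ν => ?_) c hf
  have hswap (ν : Fin n →₀ ℕ) :
      rename (Equiv.swap a b) (monomial ν 1) ∈ lowWeight K n (ν ⬝ᵥ ν + 1) := by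
    rw [rename_monomial]
    exact monomial_mem_lowWeight (by rw [mapDomain_dotProduct_self]; exact Nat.lt_succ_self _)
  have hdesc {ν : Fin n →₀ ℕ} (h : ν b < ν a) :
      T a (monomial ν 1) ∈ lowWeight K n (ν ⬝ᵥ ν + 1) :=
    (Submodule.sub_mem_iff_left _ (hswap ν)).1
      (lowWeight_mono (Nat.le_succ _) (T_monomial_sub_rename_mem hT hab h))
  have hsymm {f : P n} (hf : rename (Equiv.swap a b) f = f)
      (hmem : f ∈ lowWeight K n (ν ⬝ᵥ ν + 1)) : T a f ∈ lowWeight K n (ν ⬝ᵥ ν + 1) :=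
    T_eq_smul_of_rename_swap_eq hT hab hf ▸ Submodule.smul_mem _ _ hmem
  have hν : monomial ν (1 : K) ∈ lowWeight K n (ν ⬝ᵥ ν + 1) :=
    monomial_mem_lowWeight (Nat.lt_succ_self _)
  rcases lt_trichotomy (ν b) (ν a) with h | h | h
  · exact hdesc h
  · exact hsymm (rename_swap_monomial_of_eq h.symm 1) hν
  · have hsum := hsymm (f := monomial ν 1 + rename (Equiv.swap a b) (monomial ν 1))
      (by rw [map_add, rename_rename, ← Equiv.Perm.coe_mul, Equiv.swap_mul_self, Equiv.Perm.coe_one,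
        rename_id_apply, add_comm]) (Submodule.add_mem _ hν (hswap ν))
    rw [map_add, rename_monomial] at hsum
    refine (Submodule.add_mem_iff_left _ ?_).1 hsum
    rw [← mapDomain_dotProduct_self (Equiv.swap a b) ν]
    exact hdesc (by simpa [Finsupp.mapDomain_equiv_apply] using h)

end MonomialAction

section Symmetrizer

variable {n : ℕ} {tv : K} {T : ℕ → P n →ₗ[K] P n} {Tw : Equiv.Perm (Fin n) → P n →ₗ[K] P n}

theorem Tw_mul_swap_apply (hTw : IsTsigma n T Tw) {σ : Equiv.Perm (Fin n)} {a b : Fin n}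
    (hab : (a : ℕ) + 1 = b) (h : σ a < σ b) (f : P n) :
    Tw (σ * Equiv.swap a b) f = Tw σ (T a f) := by
  have hinv := inversions_mul_swap hab h
  rw [← sPerm_eq_swap hab] at hinv ⊢
  exact LinearMap.congr_fun (hTw.2 σ a (by lia) hinv) f

theorem Tw_mem_lowWeight (hT : IsDL n tv T) (hTw : IsTsigma n T Tw) (σ : Equiv.Perm (Fin n))
    {c : ℕ} {f : P n} (hf : f ∈ lowWeight K n c) : Tw σ f ∈ lowWeight K n c := by
  induction σ using perm_induction generalizing f with
  | one => rwa [hTw.1]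
  | mul_swap σ a b hab h ih =>
    rw [Tw_mul_swap_apply hTw hab h]
    exact ih (T_mem_lowWeight hT hab hf)

theorem Tw_monomial_sub_rename_mem (hT : IsDL n tv T) (hTw : IsTsigma n T Tw)
    (σ : Equiv.Perm (Fin n)) {ν : Fin n →₀ ℕ} (hν : ∀ i j, i < j → σ j < σ i → ν j < ν i) :
    Tw σ (monomial ν 1) - rename σ (monomial ν 1) ∈ lowWeight K n (ν ⬝ᵥ ν) := by
  induction σ using perm_induction generalizing ν with
  | one => simp [hTw.1]
  | mul_swap σ a b hab h ih =>
    have hlt : a < b := by lia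
    have hstep := Tw_mem_lowWeight hT hTw σ (T_monomial_sub_rename_mem hT hab
      (hν a b hlt (by simpa using h)))
    have hrec := ih (ν := ν.mapDomain (Equiv.swap a b)) fun i j hij hσ => by
      rw [Finsupp.mapDomain_equiv_apply, Finsupp.mapDomain_equiv_apply, Equiv.symm_swap]
      refine hν _ _ ((swap_lt_swap_iff hab ?_ ?_).2 hij) (by simpa using hσ)
      · rintro ⟨⟩
        exact h.not_gt hσ
      · rintro ⟨⟩
        exact hlt.not_gt hij
    rw [mapDomain_dotProduct_self, ← rename_monomial, rename_rename, ← Equiv.Perm.coe_mul] at hrec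
    rw [map_sub] at hstep
    rw [Tw_mul_swap_apply hTw hab h]
    simpa only [sub_add_sub_cancel] using Submodule.add_mem _ hstep hrec

theorem coeff_Tw_monomial_self (hT : IsDL n tv T) (hTw : IsTsigma n T Tw)
    (σ : Equiv.Perm (Fin n)) {ν : Fin n →₀ ℕ} (hν : StrictAnti ν) :
    coeff ν (Tw σ (monomial ν 1)) = if σ = 1 then 1 else 0 := by
  have h := coeff_of_mem_lowWeight
    (Tw_monomial_sub_rename_mem hT hTw σ (ν := ν) fun i j hij _ => hν hij)
  rw [coeff_sub, sub_eq_zero] at h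
  rw [h, rename_monomial, coeff_monomial]
  refine if_congr ⟨fun heq => Equiv.ext fun i => hν.injective ?_, ?_⟩ rfl rfl
  · rw [Equiv.Perm.one_apply, ← Finsupp.mapDomain_apply σ.injective ν i, heq]
  · rintro rfl
    exact Finsupp.mapDomain_id

theorem coeff_Uminus_monomial_self (hT : IsDL n tv T) (hTw : IsTsigma n T Tw)
    {ν : Fin n →₀ ℕ} (hν : StrictAnti ν) : coeff ν (Uminus n tv Tw (monomial ν 1)) = 1 := by
  have hinv : inversions (1 : Equiv.Perm (Fin n)) = 0 :=
    card_eq_zero.2 (filter_eq_empty_iff.2 fun p _ hp => hp.1.not_gt hp.2)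
  simp [Uminus, coeff_sum, coeff_Tw_monomial_self hT hTw _ hν, hinv]

theorem coeff_Uminus_of_mem_lowWeight (hT : IsDL n tv T) (hTw : IsTsigma n T Tw)
    {ν : Fin n →₀ ℕ} {f : P n} (hf : f ∈ lowWeight K n (ν ⬝ᵥ ν)) :
    coeff ν (Uminus n tv Tw f) = 0 := by
  refine coeff_of_mem_lowWeight ?_
  rw [Uminus, LinearMap.sum_apply]
  exact Submodule.sum_mem _ fun σ _ => Submodule.smul_mem _ _ (Tw_mem_lowWeight hT hTw σ hf)

end Symmetrizer

section Dominance

variable {n : ℕ} {μ ν ρ : Fin n → ℕ}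

theorem sum_filter_lt_le_of_domLE (hμ : Antitone μ) (h : domLE n ρ ν) (c : ℕ) :
    ∑ i with c < μ i, ρ i ≤ ∑ i with c < μ i, ν i := by
  rcases (univ.filter fun i => c < μ i).eq_empty_or_nonempty with hs | hs
  · rw [hs, sum_empty, sum_empty]
  have hmax := (mem_filter.1 (max'_mem _ hs)).2
  have hIic : (univ.filter fun i => c < μ i) = univ.filter (· ≤ max' _ hs) :=
    filter_congr fun i _ => ⟨fun hi => le_max' _ _ (mem_filter.2 ⟨mem_univ i, hi⟩),
      fun hi => hmax.trans_le (hμ hi)⟩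
  rw [hIic]
  exact h.2 _

theorem dotProduct_eq_sum_filter_lt {M : ℕ} (hM : ∀ i, μ i ≤ M) :
    μ ⬝ᵥ ν = ∑ c ∈ range M, ∑ i with c < μ i, ν i := by
  simp only [sum_filter]
  rw [sum_comm]
  refine sum_congr rfl fun i _ => ?_
  have hcard : #{c ∈ range M | c < μ i} = μ i := by
    rw [show {c ∈ range M | c < μ i} = range (μ i) by
      ext c; simpa using fun h => h.trans_le (hM i), card_range]
  rw [← sum_filter, sum_const, hcard, smul_eq_mul]

theorem dotProduct_le_of_domLE (hμ : Antitone μ) (h : domLE n ρ ν) : μ ⬝ᵥ ρ ≤ μ ⬝ᵥ ν := by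
  have hM (i : Fin n) : μ i ≤ ∑ j, μ j := single_le_sum (fun _ _ => Nat.zero_le _) (mem_univ i)
  rw [dotProduct_eq_sum_filter_lt hM, dotProduct_eq_sum_filter_lt hM]
  exact sum_le_sum fun c _ => sum_filter_lt_le_of_domLE hμ h c

theorem two_mul_dotProduct_lt (h : μ ≠ ν) : 2 * (μ ⬝ᵥ ν) < μ ⬝ᵥ μ + ν ⬝ᵥ ν := by
  obtain ⟨i, hi⟩ := Function.ne_iff.1 h
  simp only [dotProduct, mul_sum, ← sum_add_distrib]
  refine sum_lt_sum (fun j _ => by nlinarith [two_mul_le_add_sq (μ j) (ν j)])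
    ⟨i, mem_univ i, ?_⟩
  zify at hi ⊢
  nlinarith [sq_pos_of_ne_zero (sub_ne_zero.2 hi)]

theorem dotProduct_self_lt_of_domLT (hμ : Antitone μ) (h : domLT n μ ν) : μ ⬝ᵥ μ < ν ⬝ᵥ ν := by
  linarith [dotProduct_le_of_domLE hμ h.1, two_mul_dotProduct_lt h.2]

theorem coeff_eq_one_of_isQASMac {qv tv : K} {T : ℕ → P n →ₗ[K] P n}
    {Tw : Equiv.Perm (Fin n) → P n →ₗ[K] P n} {S : P n} (hT : IsDL n tv T)
    (hTw : IsTsigma n T Tw) (hν : StrictAnti ν) (hS : IsQASMac n qv tv T Tw ν S) :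
    coeff (Finsupp.equivFunOnFinite.symm ν) S = 1 := by
  obtain ⟨v, hv⟩ := hS.2.1
  rw [hv, coeff_add, xmon, coeff_Uminus_monomial_self hT hTw hν, add_eq_left]
  refine finsum_mem_induction (fun f : P n => coeff (Finsupp.equivFunOnFinite.symm ν) f = 0)
    (coeff_zero _) (fun _ _ hf hg => by rw [coeff_add, hf, hg, add_zero]) fun μ hμ => ?_
  rw [coeff_smul, coeff_Uminus_of_mem_lowWeight hT hTw, smul_zero]
  exact monomial_mem_lowWeight (dotProduct_self_lt_of_domLT hμ.1.antitone hμ.2)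

end Dominance

section Comparison

variable {n : ℕ} {T T' : ℕ → P n →ₗ[K] P n} {g : P n}

theorem eigen_of_tVandermonde_mul {qv tv : K} {κ : Fin n → ℕ} (hT : IsDL n tv T)
    (hT' : IsDL n (qv * tv) T') (hqv : qv ≠ 0) (htv : tv ≠ 0) (hg : g.IsSymmetric)
    (he : (∑ i, Yop n qv tv T i) (tVandermonde n tv * g) =
      (∑ i : Fin n, qv ^ (κ i + (n - 1 - (i : ℕ))) * (tv ^ (i : ℕ))⁻¹) • (tVandermonde n tv * g)) :
    (∑ i, Yop n qv (qv * tv) T' i) g =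
      (∑ i : Fin n, qv ^ κ i * ((qv * tv) ^ (i : ℕ))⁻¹) • g := by
  have hsum : ∑ i : Fin n, qv ^ (κ i + (n - 1 - (i : ℕ))) * (tv ^ (i : ℕ))⁻¹ =
      qv ^ (n - 1) * ∑ i : Fin n, qv ^ κ i * ((qv * tv) ^ (i : ℕ))⁻¹ := by
    rw [mul_sum]
    refine sum_congr rfl fun i _ => ?_
    rw [show n - 1 = (n - 1 - (i : ℕ)) + i by lia, Nat.add_sub_cancel]
    field_simp
    ring
  rw [sum_Yop_tVandermonde_mul hT hT' hqv htv hg, hsum, mul_smul,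
    ← mul_smul_comm (∑ i : Fin n, _) (tVandermonde n tv)] at he
  exact mul_left_cancel₀ (tVandermonde_ne_zero tv) (smul_right_injective _ (pow_ne_zero _ hqv) he)

theorem coeff_staircase_add_tVandermonde_mul {κ : Fin n →₀ ℕ} (hT : IsDL n (q * t) T)
    (hg : g.IsSymmetric) (he : (∑ i, Yop n q (q * t) T i) g =
      (∑ i : Fin n, q ^ κ i * ((q * t) ^ (i : ℕ))⁻¹) • g) :
    coeff (staircase n + κ) (tVandermonde n t * g) = t ^ (n * (n - 1) / 2) * coeff κ g := by
  rcases eq_or_ne g 0 with rfl | hg₀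
  · simp only [mul_zero, coeff_zero]
  rw [MonomialOrder.coeff_mul_of_add_of_degree_le (m := MonomialOrder.lex)
    (congrArg _ (lex_degree_tVandermonde t_ne_zero)).le
    (congrArg _ (lex_degree_eq_of_eigen hT hg hg₀ he)).le, coeff_staircase_tVandermonde t_ne_zero]

theorem strictAnti_add_staircase {κ : Fin n → ℕ} (hκ : Antitone κ) :
    StrictAnti fun i => κ i + (n - 1 - (i : ℕ)) := fun i j hij =>
  add_lt_add_of_le_of_lt (hκ hij.le) (by lia)

end Comparison

end Macdonald

open Macdonald

theorem stmt_17 (n : ℕ) (κ : Fin n → ℕ) (hκ : Antitone κ)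
    -- Demazure–Lustig operators and T_σ for parameter t, and the operators for parameter q·t
    (T : ℕ → P n →ₗ[K] P n) (hT : IsDL n t T)
    (Tw : Equiv.Perm (Fin n) → P n →ₗ[K] P n) (hTw : IsTsigma n T Tw)
    (T' : ℕ → P n →ₗ[K] P n) (hT' : IsDL n (q * t) T')
    -- the symmetric Macdonald polynomial P_κ(x;q,qt)
    (Pp : P n) (hPp : IsSymMac n q (q * t) T' κ Pp)
    -- the q-antisymmetric Macdonald polynomial S_{κ+δ}(x;q,t)
    (S : P n) (hS : IsQASMac n q t T Tw (fun i => κ i + (n - 1 - (i : ℕ))) S) :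
    S = C ((t ^ (n * (n - 1) / 2))⁻¹) *
        (∏ p ∈ univ.filter fun p : Fin n × Fin n => p.1 < p.2, (C t * X p.1 - X p.2)) *
        Pp := by
  obtain ⟨hsymm, hcoeff, -, heigen⟩ := hPp
  obtain ⟨g, hg, rfl⟩ := exists_isSymmetric_eq_tVandermonde_mul hT pow_t_injective hS.1
  have hgeigen := eigen_of_tVandermonde_mul hT hT' q_ne_zero t_ne_zero hg hS.2.2
  obtain ⟨a, rfl⟩ : ∃ a : K, g = a • Pp :=
    ⟨_, eq_smul_of_eigen hT' hsymm hg hcoeff heigen hgeigen⟩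
  have hlead := coeff_eq_one_of_isQASMac hT hTw (strictAnti_add_staircase hκ) hS
  have hexp : Finsupp.equivFunOnFinite.symm (fun i : Fin n => κ i + (n - 1 - (i : ℕ))) =
      staircase n + Finsupp.equivFunOnFinite.symm κ := Finsupp.ext fun i => add_comm _ _
  rw [mul_smul_comm] at hlead ⊢
  rw [hexp, coeff_smul, coeff_staircase_add_tVandermonde_mul (κ := Finsupp.equivFunOnFinite.symm κ)
    hT' hsymm heigen, hcoeff, mul_one, smul_eq_mul] at hlead
  rw [eq_inv_of_mul_eq_one_left hlead, smul_eq_C_mul, mul_assoc, tVandermonde, increasingPairs]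
end

section
/- Let η∈ℕ^n, let η^R be the weakly increasing rearrangement of η, and let f_j := #{i : η_i=j} for j≥0. Assume the non-symmetric Macdonald polynomial E_{η^R} and the symmetric Macdonald polynomial P_{η^+} exist. Then U^+ E_{η^R} = t^{n(n−1)/2}·( ∏_{j=0}^{η^+_1} [f_j]_{t^{−1}}! )·P_{η^+}, where [m]_s! := ∏_{k=1}^m (1−s^k)/(1−s). -/
/- STATEMENT 18: U⁺ E_{η^R} = t^{n(n−1)/2}·(∏_{j=0}^{η⁺_1} [f_j]_{t⁻¹}!)·P_{η⁺}, where η^R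
is the weakly increasing rearrangement of η, f_j = #{i : η_i = j} and
[m]_s! = ∏_{k=1}^m (1−s^k)/(1−s). -/

open Finset MvPolynomial

namespace Stmt18

/-- leg colength l'_η(i) -/
def legCo (n : ℕ) (η : Fin n → ℕ) (i : Fin n) : ℕ :=
  (univ.filter fun k => k < i ∧ η i ≤ η k).card +
  (univ.filter fun k => i < k ∧ η i < η k).card

/-- leg length l(s) of the node s = (i,j) -/
def leg (n : ℕ) (η : Fin n → ℕ) (i : Fin n) (j : ℕ) : ℕ :=
  (univ.filter fun k => i < k ∧ j ≤ η k ∧ η k ≤ η i).card +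
  (univ.filter fun k => k < i ∧ j ≤ η k + 1 ∧ η k + 1 ≤ η i).card

/-- The field K = ℚ(q,t). -/
abbrev K : Type := FractionRing (MvPolynomial (Fin 2) ℚ)

noncomputable def q : K := algebraMap (MvPolynomial (Fin 2) ℚ) K (X 0)
noncomputable def t : K := algebraMap (MvPolynomial (Fin 2) ℚ) K (X 1)

/-- The polynomial ring K[x_1,…,x_n]. -/
abbrev P (n : ℕ) : Type := MvPolynomial (Fin n) K

/-- the automorphism s_k exchanging x_k and x_{k+1} (0-indexed; identity out of range) -/
noncomputable def sOp (n : ℕ) (k : ℕ) : P n →ₗ[K] P n :=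
  if h : k + 1 < n then
    (rename (Equiv.swap (⟨k, Nat.lt_of_succ_lt h⟩ : Fin n) ⟨k + 1, h⟩)).toLinearMap
  else LinearMap.id

/-- τ_1 : x_1 ↦ qv·x_1 (the first variable is 0-indexed) -/
noncomputable def tauOp (n : ℕ) (qv : K) : P n →ₗ[K] P n :=
  (aeval (fun j : Fin n => if (j : ℕ) = 0 then C qv * X j else X j)).toLinearMap

/-- ω := s_{n−1}⋯s_2 s_1 τ_1 -/
noncomputable def omegaOp (n : ℕ) (qv : K) : P n →ₗ[K] P n :=
  (List.range (n - 1)).foldl (fun acc k => sOp n k ∘ₗ acc) (tauOp n qv)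

/-- The defining property of the Demazure–Lustig operators T_k (0-indexed), for the
parameter value tv: (x_k − x_{k+1})·(T_k f) = (x_k − x_{k+1})·tv·f
+ (tv·x_k − x_{k+1})·(s_k f − f), i.e. T_k f is the polynomial quotient from the usual
definition. -/
def IsDL (n : ℕ) (tv : K) (T : ℕ → P n →ₗ[K] P n) : Prop :=
  ∀ k, ∀ hk : k + 1 < n, ∀ f : P n,
    (X (⟨k, Nat.lt_of_succ_lt hk⟩ : Fin n) - X ⟨k + 1, hk⟩) * T k f =
      (X (⟨k, Nat.lt_of_succ_lt hk⟩ : Fin n) - X ⟨k + 1, hk⟩) * (C tv * f) +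
      (C tv * X (⟨k, Nat.lt_of_succ_lt hk⟩ : Fin n) - X ⟨k + 1, hk⟩) * (sOp n k f - f)

/-- T_k⁻¹ = tv⁻¹ − 1 + tv⁻¹ T_k -/
noncomputable def Tinv (n : ℕ) (tv : K) (T : ℕ → P n →ₗ[K] P n) (k : ℕ) : P n →ₗ[K] P n :=
  tv⁻¹ • LinearMap.id - LinearMap.id + tv⁻¹ • T k

/-- The Cherednik operator Y_i (0-indexed i):
Y_i = tv^{i+1−n}·T_i⋯T_{n−2}·ω·T_0⁻¹⋯T_{i−1}⁻¹. -/
noncomputable def Yop (n : ℕ) (qv tv : K) (T : ℕ → P n →ₗ[K] P n) (i : Fin n) :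
    P n →ₗ[K] P n :=
  (tv ^ (n - 1 - (i : ℕ)))⁻¹ •
    (((List.range' (i : ℕ) (n - 1 - (i : ℕ))).foldr (fun k acc => T k ∘ₗ acc) LinearMap.id) ∘ₗ
      omegaOp n qv ∘ₗ
      ((List.range (i : ℕ)).foldr (fun k acc => Tinv n tv T k ∘ₗ acc) LinearMap.id))

/-- the decreasing rearrangement η⁺ of η -/
noncomputable def sortDesc (n : ℕ) (η : Fin n → ℕ) : Fin n → ℕ :=
  fun i => η (Tuple.sort η i.rev)

/-- dominance order on n-tuples (of equal sum) -/
def domLE (n : ℕ) (ν μ : Fin n → ℕ) : Prop :=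
  (∑ i, ν i = ∑ i, μ i) ∧
  ∀ p : Fin n, ∑ i ∈ univ.filter (· ≤ p), ν i ≤ ∑ i ∈ univ.filter (· ≤ p), μ i

def domLT (n : ℕ) (ν μ : Fin n → ℕ) : Prop := domLE n ν μ ∧ ν ≠ μ

/-- the order ≺ : ν ≺ η iff ν⁺ < η⁺, or ν⁺ = η⁺ and ν < η (dominance order) -/
noncomputable def prec (n : ℕ) (ν η : Fin n → ℕ) : Prop :=
  domLT n (sortDesc n ν) (sortDesc n η) ∨ (sortDesc n ν = sortDesc n η ∧ domLT n ν η)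

/-- E is the non-symmetric Macdonald polynomial for the composition η (with parameters
qv, tv and Demazure–Lustig operators T): it has the triangular form
E = x^η + Σ_{ν≺η} b_{ην} x^ν and satisfies Y_i E = qv^{η_i}·tv^{−l'_η(i)}·E for all i. -/
noncomputable def IsNSMac (n : ℕ) (qv tv : K) (T : ℕ → P n →ₗ[K] P n)
    (η : Fin n → ℕ) (E : P n) : Prop :=
  coeff (Finsupp.equivFunOnFinite.symm η) E = 1 ∧
  (∀ ν : Fin n →₀ ℕ, coeff ν E ≠ 0 → (ν : Fin n → ℕ) = η ∨ prec n (ν : Fin n → ℕ) η) ∧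
  ∀ i : Fin n, Yop n qv tv T i E = (qv ^ η i / tv ^ legCo n η i) • E

/-- the adjacent transposition s_k as a permutation (identity out of range, 0-indexed) -/
def sPerm (n : ℕ) (k : ℕ) : Equiv.Perm (Fin n) :=
  if h : k + 1 < n then Equiv.swap ⟨k, Nat.lt_of_succ_lt h⟩ ⟨k + 1, h⟩ else 1

/-- the length l(σ) of a permutation, i.e. its number of inversions -/
def inversions {n : ℕ} (σ : Equiv.Perm (Fin n)) : ℕ :=
  (univ.filter fun p : Fin n × Fin n => p.1 < p.2 ∧ σ p.2 < σ p.1).card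

/-- The defining property of σ ↦ T_σ: T_1 = id and T_{σ·s_k} = T_σ ∘ T_k whenever
l(σ·s_k) = l(σ)+1; by the braid relations this determines T_σ = T_{i_1}⋯T_{i_p} for any
reduced word σ = s_{i_1}⋯s_{i_p}. -/
def IsTsigma (n : ℕ) (T : ℕ → P n →ₗ[K] P n)
    (Tw : Equiv.Perm (Fin n) → P n →ₗ[K] P n) : Prop :=
  Tw 1 = LinearMap.id ∧
  ∀ σ : Equiv.Perm (Fin n), ∀ k, k + 1 < n →
    inversions (σ * sPerm n k) = inversions σ + 1 →
    Tw (σ * sPerm n k) = Tw σ ∘ₗ T k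

/-- U⁺ := Σ_σ T_σ -/
noncomputable def Uplus (n : ℕ) (Tw : Equiv.Perm (Fin n) → P n →ₗ[K] P n) :
    P n →ₗ[K] P n := ∑ σ : Equiv.Perm (Fin n), Tw σ

/-- U⁻ := Σ_σ (−tv)^{−l(σ)} T_σ -/
noncomputable def Uminus (n : ℕ) (tv : K) (Tw : Equiv.Perm (Fin n) → P n →ₗ[K] P n) :
    P n →ₗ[K] P n := ∑ σ : Equiv.Perm (Fin n), ((-tv) ^ inversions σ)⁻¹ • Tw σ

/-- the monomial x^η -/
noncomputable def xmon (n : ℕ) (η : Fin n → ℕ) : P n :=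
  monomial (Finsupp.equivFunOnFinite.symm η) 1

/-- Pp is the symmetric Macdonald polynomial for the partition κ (with parameters qv, tv
and Demazure–Lustig operators T): it is symmetric, of the triangular form
m_κ + Σ_{μ<κ} u_{κμ} m_μ, and satisfies (Σ_i Y_i) Pp = (Σ_i qv^{κ_i}·tv^{1−i}) Pp. -/
noncomputable def IsSymMac (n : ℕ) (qv tv : K) (T : ℕ → P n →ₗ[K] P n)
    (κ : Fin n → ℕ) (Pp : P n) : Prop :=
  Pp.IsSymmetric ∧
  coeff (Finsupp.equivFunOnFinite.symm κ) Pp = 1 ∧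
  (∀ ν : Fin n →₀ ℕ, coeff ν Pp ≠ 0 →
    sortDesc n (ν : Fin n → ℕ) = κ ∨ domLT n (sortDesc n (ν : Fin n → ℕ)) κ) ∧
  (∑ i : Fin n, Yop n qv tv T i) Pp = (∑ i : Fin n, qv ^ κ i * (tv ^ (i : ℕ))⁻¹) • Pp

/-- the weakly increasing rearrangement η^R of η -/
noncomputable def sortAsc (n : ℕ) (η : Fin n → ℕ) : Fin n → ℕ :=
  fun i => η (Tuple.sort η i)

/-- the q-factorial [m]_s! = ∏_{k=1}^m (1−s^k)/(1−s) -/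
noncomputable def qfact (s : K) (m : ℕ) : K :=
  ∏ k ∈ Finset.range m, (1 - s ^ (k + 1)) / (1 - s)

end Stmt18

open Stmt18

/-!
The operator `D = ∑ᵢ Yᵢ` commutes with every `T_k`, hence with `U⁺`, so `U⁺ E_{η^R}` is an
eigenvector of `D` with the eigenvalue of `P_{η⁺}`; it is symmetric because `T_k U⁺ = t U⁺`. On
symmetric polynomials `D` is triangular with respect to the sum of the squares of the exponents,
with diagonal entries separating partitions, so a symmetric eigenvector of `D` with the eigenvalue
of `P_{η⁺}` is determined by its coefficient at `x^{η⁺}`.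

If `x^κ` is dominant and `h` has no exponent with a larger sum of squares, then the coefficient of
`x^κ` in `T_σ h` is `t^{l(σ)}` times that of `x^{κ ∘ σ}` in `h`. The only exponent of `E_{η^R}`
with a sum of squares as large as that of `η⁺` is `η^R`, so the coefficient sought is the sum of
`t^{l(σ)}` over a coset of the stabilizer of `η⁺`. Reversal turns it into
`t^{n(n-1)/2} ∑_τ t^{-l(τ)}` over the stabilizer, which Lehmer codes evaluate.
-/

namespace Stmt18

section Permutations

variable {n k : ℕ}

lemma sPerm_eq_swap (hk : k + 1 < n) : sPerm n k = Equiv.swap ⟨k, by omega⟩ ⟨k + 1, hk⟩ :=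
  dif_pos hk

lemma sPerm_apply_left (hk : k + 1 < n) : sPerm n k ⟨k, by omega⟩ = ⟨k + 1, hk⟩ := by
  rw [sPerm_eq_swap hk, Equiv.swap_apply_left]

lemma sPerm_apply_right (hk : k + 1 < n) : sPerm n k ⟨k + 1, hk⟩ = ⟨k, by omega⟩ := by
  rw [sPerm_eq_swap hk, Equiv.swap_apply_right]

lemma sPerm_val (hk : k + 1 < n) (i : Fin n) :
    (sPerm n k i : ℕ) = if (i : ℕ) = k then k + 1 else if (i : ℕ) = k + 1 then k else i := by
  rw [sPerm_eq_swap hk, Equiv.swap_apply_def]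
  simp only [Fin.ext_iff, apply_ite Fin.val]

@[simp]
lemma sPerm_mul_self (n k : ℕ) : sPerm n k * sPerm n k = 1 := by
  unfold sPerm
  split_ifs <;> simp

@[simp]
lemma sPerm_apply_sPerm (n k : ℕ) (i : Fin n) : sPerm n k (sPerm n k i) = i :=
  DFunLike.congr_fun (sPerm_mul_self n k) i

@[simp]
lemma sPerm_inv (n k : ℕ) : (sPerm n k)⁻¹ = sPerm n k :=
  inv_eq_of_mul_eq_one_left (sPerm_mul_self n k)

@[simp]
lemma mul_sPerm_mul_sPerm (σ : Equiv.Perm (Fin n)) (k : ℕ) : σ * sPerm n k * sPerm n k = σ := by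
  rw [mul_assoc, sPerm_mul_self, mul_one]

lemma sPerm_lt_sPerm_iff (hk : k + 1 < n) {i j : Fin n} :
    sPerm n k i < sPerm n k j ↔
      (i = ⟨k + 1, hk⟩ ∧ j = ⟨k, by omega⟩) ∨ (i < j ∧ ¬(i = ⟨k, by omega⟩ ∧ j = ⟨k + 1, hk⟩)) := by
  simp only [Fin.lt_def, sPerm_val hk, Fin.ext_iff]
  split_ifs <;> omega

/-! ### Inversions -/

@[simp]
lemma inversions_one : inversions (1 : Equiv.Perm (Fin n)) = 0 :=
  card_eq_zero.mpr (filter_eq_empty_iff.mpr fun _ _ hp => hp.1.asymm hp.2)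

lemma inversions_mul_sPerm (hk : k + 1 < n) {σ : Equiv.Perm (Fin n)}
    (hσ : σ ⟨k, by omega⟩ < σ ⟨k + 1, hk⟩) :
    inversions (σ * sPerm n k) = inversions σ + 1 := by
  have reindex : inversions (σ * sPerm n k) =
      #{p : Fin n × Fin n | sPerm n k p.1 < sPerm n k p.2 ∧ σ p.2 < σ p.1} := by
    unfold inversions
    refine card_equiv ((sPerm n k).prodCongr (sPerm n k)) fun p => ?_
    rw [mem_filter, mem_filter]
    simp
  have new_inversion :
      (univ.filter fun p : Fin n × Fin n => sPerm n k p.1 < sPerm n k p.2 ∧ σ p.2 < σ p.1) =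
        insert (⟨k + 1, hk⟩, ⟨k, by omega⟩)
          (univ.filter fun p : Fin n × Fin n => p.1 < p.2 ∧ σ p.2 < σ p.1) := by
    ext ⟨i, j⟩
    simp only [mem_filter, mem_univ, true_and, mem_insert, Prod.mk.injEq, sPerm_lt_sPerm_iff hk]
    constructor
    · tauto
    · rintro (⟨rfl, rfl⟩ | ⟨hij, hinv⟩)
      · exact ⟨Or.inl ⟨rfl, rfl⟩, hσ⟩
      · refine ⟨Or.inr ⟨hij, ?_⟩, hinv⟩
        rintro ⟨rfl, rfl⟩
        exact hσ.asymm hinv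
  rw [reindex, new_inversion, card_insert_of_notMem (by simp), inversions]

lemma inversions_mul_sPerm_add_one (hk : k + 1 < n) {σ : Equiv.Perm (Fin n)}
    (hσ : σ ⟨k + 1, hk⟩ < σ ⟨k, by omega⟩) :
    inversions (σ * sPerm n k) + 1 = inversions σ := by
  simpa using (inversions_mul_sPerm hk (σ := σ * sPerm n k)
    (by simpa [sPerm_apply_left hk, sPerm_apply_right hk] using hσ)).symm

lemma inversions_mul_sPerm_le (hk : k + 1 < n) (σ : Equiv.Perm (Fin n)) :
    inversions (σ * sPerm n k) ≤ inversions σ + 1 := by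
  rcases lt_or_gt_of_ne (σ.injective.ne (show (⟨k, by omega⟩ : Fin n) ≠ ⟨k + 1, hk⟩ by simp))
    with ascent | descent
  · exact (inversions_mul_sPerm hk ascent).le
  · have := inversions_mul_sPerm_add_one hk descent
    omega

lemma inversions_inv (σ : Equiv.Perm (Fin n)) : inversions σ⁻¹ = inversions σ :=
  card_equiv ((Equiv.prodComm _ _).trans (σ⁻¹.prodCongr σ⁻¹)) fun p => by
    simp [and_comm]

lemma inversions_sPerm_mul_le (hk : k + 1 < n) (σ : Equiv.Perm (Fin n)) :
    inversions (sPerm n k * σ) ≤ inversions σ + 1 := by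
  rw [← inversions_inv σ, ← inversions_inv (sPerm n k * σ), mul_inv_rev, sPerm_inv]
  exact inversions_mul_sPerm_le hk σ⁻¹

lemma exists_descent {σ : Equiv.Perm (Fin n)} (hσ : σ ≠ 1) :
    ∃ k, ∃ hk : k + 1 < n, σ ⟨k + 1, hk⟩ < σ ⟨k, by omega⟩ := by
  contrapose! hσ
  cases n with
  | zero => exact Subsingleton.elim _ _
  | succ n =>
    exact (Equiv.Perm.monotone_iff _).mp (Fin.monotone_iff_le_succ.mpr fun i => hσ i (by omega))

/-- Every permutation is reached from the identity by right multiplications with adjacent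
transpositions, each increasing the length. -/
lemma perm_induction_ascents {p : Equiv.Perm (Fin n) → Prop} (one : p 1)
    (mul_sPerm : ∀ σ k, ∀ hk : k + 1 < n, σ ⟨k, by omega⟩ < σ ⟨k + 1, hk⟩ → p σ →
      p (σ * sPerm n k)) (σ : Equiv.Perm (Fin n)) : p σ := by
  induction hN : inversions σ using Nat.strong_induction_on generalizing σ with
  | _ N ih =>
    by_cases hσ : σ = 1
    · exact hσ ▸ one
    · obtain ⟨k, hk, descent⟩ := exists_descent hσ
      have shorter := inversions_mul_sPerm_add_one hk descent
      simpa using mul_sPerm (σ * sPerm n k) k hk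
        (by simpa [sPerm_apply_left hk, sPerm_apply_right hk] using descent)
        (ih _ (by omega) _ rfl)

lemma card_filter_fst_lt_snd (n : ℕ) :
    #{p : Fin n × Fin n | p.1 < p.2} = n * (n - 1) / 2 := by
  rw [← sum_range_id n, ← Fin.sum_univ_eq_sum_range (fun i => i) n, card_filter,
    Fintype.sum_prod_type_right]
  refine sum_congr rfl fun j _ => ?_
  rw [← card_filter, filter_gt_eq_Iio, Fin.card_Iio]

lemma inversions_mul_revPerm_add (σ : Equiv.Perm (Fin n)) :
    inversions (σ * Fin.revPerm) + inversions σ = n * (n - 1) / 2 := by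
  have reversed : inversions (σ * Fin.revPerm) =
      #{p : Fin n × Fin n | p.1 < p.2 ∧ ¬σ p.2 < σ p.1} :=
    card_equiv ((Equiv.prodComm _ _).trans (Fin.revPerm.prodCongr Fin.revPerm)) fun p => by
      simp only [mem_filter, mem_univ, true_and, Equiv.Perm.mul_apply, Fin.revPerm_apply,
        Equiv.trans_apply, Equiv.prodComm_apply, Equiv.prodCongr_apply, Prod.map, Prod.fst_swap,
        Prod.snd_swap, Fin.rev_lt_rev, not_lt]
      refine and_congr_right fun hp => ⟨le_of_lt, fun hle => hle.lt_of_ne ?_⟩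
      simpa using hp.ne'
  rw [reversed, ← card_filter_fst_lt_snd, add_comm, inversions, ← filter_filter, ← filter_filter,
    card_filter_add_card_filter_not]

end Permutations

/-! ### The Lehmer code and the stabilizer of a partition -/

section LehmerCode

variable {n : ℕ}

/-- The Lehmer code of a permutation: its `i`-th entry counts the inversions `(i, j)`. -/
def lehmerCode (σ : Equiv.Perm (Fin n)) (i : Fin n) : ℕ :=
  #{j | i < j ∧ σ j < σ i}

lemma inversions_eq_sum_lehmerCode (σ : Equiv.Perm (Fin n)) :
    inversions σ = ∑ i, lehmerCode σ i := by
  simp only [inversions, lehmerCode, card_filter, Fintype.sum_prod_type]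

lemma lehmerCode_lt {σ τ : Equiv.Perm (Fin n)} {i : Fin n} (agree : ∀ j < i, σ j = τ j)
    (hi : σ i < τ i) : lehmerCode σ i < lehmerCode τ i := by
  have later : ∀ j, i ≤ j → i ≤ τ⁻¹ (σ j) := fun j hij => by
    by_contra! hlt
    have back : σ (τ⁻¹ (σ j)) = σ j := by simpa using agree _ hlt
    exact (hlt.trans_le hij).ne (σ.injective back)
  have inserted : #(insert i ({j | i < j ∧ σ j < σ i} : Finset (Fin n))) = lehmerCode σ i + 1 :=
    card_insert_of_notMem (by simp)
  rw [← Nat.succ_le_iff, Nat.succ_eq_add_one, ← inserted,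
    ← card_map (τ⁻¹ * σ : Equiv.Perm (Fin n)).toEmbedding]
  refine card_le_card fun j hj => ?_
  obtain ⟨k, hk, rfl⟩ := mem_map.mp hj
  have hik : i ≤ k ∧ σ k ≤ σ i := by
    rcases mem_insert.mp hk with rfl | hk
    · exact ⟨le_rfl, le_rfl⟩
    · exact ⟨(mem_filter.mp hk).2.1.le, (mem_filter.mp hk).2.2.le⟩
  have below : τ (τ⁻¹ (σ k)) < τ i := by simpa using hik.2.trans_lt hi
  have above : i < τ⁻¹ (σ k) := (later k hik.1).lt_of_ne fun h => below.ne (by rw [← h])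
  exact mem_filter.mpr ⟨mem_univ _, above, below⟩

lemma lehmerCode_injective : Function.Injective (lehmerCode (n := n)) := by
  intro σ τ h
  by_contra hne
  have differ : ∃ i, σ i ≠ τ i := by
    contrapose! hne
    exact Equiv.ext hne
  obtain ⟨i, hi, first⟩ := wellFounded_lt.has_min {i | σ i ≠ τ i} differ
  have agree : ∀ j < i, σ j = τ j := fun j hj => not_not.mp fun hne => first j hne hj
  rcases lt_or_gt_of_ne hi with hlt | hgt
  · exact (lehmerCode_lt agree hlt).ne (congrFun h i)
  · exact (lehmerCode_lt (fun j hj => (agree j hj).symm) hgt).ne' (congrFun h i)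

lemma prod_card_filter_lt {α M : Type*} [LinearOrder α] [CommMonoid M] (A : Finset α)
    (g : ℕ → M) : ∏ i ∈ A, g #{j ∈ A | i < j} = ∏ m ∈ range #A, g m := by
  induction A using Finset.induction_on_min with
  | empty => simp
  | insert a A ha ih =>
    have haA : a ∉ A := fun h => (ha a h).false
    rw [prod_insert haA, card_insert_of_notMem haA, prod_range_succ, mul_comm, ← ih]
    congr 1
    · refine prod_congr rfl fun i hi => ?_
      rw [filter_insert, if_neg (ha i hi).asymm]
    · rw [filter_insert, if_neg (lt_irrefl a), filter_true_of_mem ha]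

lemma prod_card_filter_lt_fiber {α β M : Type*} [Fintype α] [LinearOrder α] [DecidableEq β]
    [CommMonoid M] (f : α → β) {S : Finset β} (hS : ∀ i, f i ∈ S) (g : ℕ → M) :
    ∏ i, g #{j | i < j ∧ f j = f i} = ∏ b ∈ S, ∏ m ∈ range #{i | f i = b}, g m := by
  rw [← prod_fiberwise_of_maps_to fun i _ => hS i]
  refine prod_congr rfl fun b _ => ?_
  rw [← prod_card_filter_lt]
  refine prod_congr rfl fun i hi => ?_
  rw [filter_filter, (mem_filter.mp hi).2]
  simp only [and_comm]

variable {β : Type*} [LinearOrder β] {κ : Fin n → β}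

lemma lehmerCode_le_of_comp_eq (hκ : Antitone κ) {τ : Equiv.Perm (Fin n)} (hτ : κ ∘ τ = κ)
    (i : Fin n) : lehmerCode τ i ≤ #{j | i < j ∧ κ j = κ i} := by
  refine card_le_card fun j hj => ?_
  obtain ⟨hij, hinv⟩ := (mem_filter.mp hj).2
  refine mem_filter.mpr ⟨mem_univ j, hij, (hκ hij.le).antisymm ?_⟩
  simpa only [← Function.comp_apply (f := κ), hτ] using hκ hinv.le

/-- The image is contained in a box of the same cardinality as the stabilizer. -/
lemma image_lehmerCode_stabilizer (hκ : Antitone κ) :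
    ({τ | κ ∘ τ = κ} : Finset (Equiv.Perm (Fin n))).image lehmerCode =
      Fintype.piFinset fun i => range (#{j | i < j ∧ κ j = κ i} + 1) := by
  apply eq_of_subset_of_card_le
  · intro c hc
    obtain ⟨τ, hτ, rfl⟩ := mem_image.mp hc
    simpa [Nat.lt_succ_iff] using lehmerCode_le_of_comp_eq hκ (mem_filter.mp hτ).2
  · have card_stabilizer := DomMulAct.stabilizer_card' κ
    rw [card_image_of_injective _ lehmerCode_injective, Fintype.card_piFinset]
    simp only [Fintype.card_subtype] at card_stabilizer
    simp only [card_range, prod_card_filter_lt_fiber κ (S := univ.image κ) (by simp) (· + 1),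
      prod_range_add_one_eq_factorial, card_stabilizer, le_refl]

lemma sum_pow_inversions_stabilizer {R : Type*} [CommSemiring R] (hκ : Antitone κ) (s : R)
    {S : Finset β} (hS : ∀ i, κ i ∈ S) :
    ∑ τ ∈ ({τ | κ ∘ τ = κ} : Finset (Equiv.Perm (Fin n))), s ^ inversions τ =
      ∏ b ∈ S, ∏ m ∈ range #{i | κ i = b}, ∑ c ∈ range (m + 1), s ^ c := by
  rw [← prod_card_filter_lt_fiber κ hS fun m => ∑ c ∈ range (m + 1), s ^ c, prod_univ_sum,
    ← image_lehmerCode_stabilizer hκ, sum_image lehmerCode_injective.injOn]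
  refine sum_congr rfl fun τ _ => ?_
  rw [inversions_eq_sum_lehmerCode, prod_pow_eq_pow_sum]

end LehmerCode

/-! ### Rearrangements, dominance and sums of squares -/

section Rearrangement

variable {n : ℕ}

lemma sortAsc_monotone (η : Fin n → ℕ) : Monotone (sortAsc n η) :=
  Tuple.monotone_sort η

lemma sortDesc_antitone (η : Fin n → ℕ) : Antitone (sortDesc n η) :=
  fun _ _ hij => sortAsc_monotone η (Fin.rev_le_rev.mpr hij)

lemma sortDesc_eq_comp (η : Fin n → ℕ) :
    sortDesc n η = η ∘ (Tuple.sort η * Fin.revPerm : Equiv.Perm (Fin n)) :=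
  rfl

lemma sortDesc_comp_perm (η : Fin n → ℕ) (σ : Equiv.Perm (Fin n)) :
    sortDesc n (η ∘ σ) = sortDesc n η :=
  congrArg (· ∘ Fin.rev) (Tuple.comp_perm_comp_sort_eq_comp_sort (f := η) (σ := σ))

lemma sortDesc_sortAsc (η : Fin n → ℕ) : sortDesc n (sortAsc n η) = sortDesc n η :=
  sortDesc_comp_perm η (Tuple.sort η)

lemma comp_perm_eq_sortDesc {η : Fin n → ℕ} {σ : Equiv.Perm (Fin n)} (hσ : Antitone (η ∘ σ)) :
    η ∘ σ = sortDesc n η := by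
  rw [sortDesc_eq_comp]
  exact Tuple.unique_antitone hσ (sortDesc_eq_comp η ▸ sortDesc_antitone η)

/-- The sum `∑ᵢ q^κᵢ t^(1-i)` (with `i` counted from one): the eigenvalue of `∑ᵢ Yᵢ` on the
symmetric Macdonald polynomial indexed by `κ`. -/
noncomputable def eigenvalue (qv tv : K) (κ : Fin n → ℕ) : K :=
  ∑ i : Fin n, qv ^ κ i * (tv ^ (i : ℕ))⁻¹

lemma legCo_stable_sort (η : Fin n → ℕ) (j : Fin n) :
    legCo n η (Tuple.sort (OrderDual.toDual ∘ η) j) = j := by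
  set σ := Tuple.sort (OrderDual.toDual ∘ η) with hσ
  obtain ⟨sorted, stable⟩ := Tuple.eq_sort_iff.mp hσ
  have precedes {l m : Fin n} (hlm : l < m) :
      σ l < σ m ∧ η (σ m) ≤ η (σ l) ∨ σ m < σ l ∧ η (σ m) < η (σ l) := by
    have hle : η (σ m) ≤ η (σ l) := sorted hlm.le
    rcases lt_or_gt_of_ne (σ.injective.ne hlm.ne) with hσlm | hσlm
    · exact Or.inl ⟨hσlm, hle⟩
    · exact Or.inr ⟨hσlm, hle.lt_of_ne fun h => hσlm.asymm (stable l m hlm h.symm)⟩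
  have counted : (univ.filter fun k => k < σ j ∧ η (σ j) ≤ η k ∨ σ j < k ∧ η (σ j) < η k) =
      (Iio j).map σ.toEmbedding := by
    ext k
    obtain ⟨l, rfl⟩ := σ.surjective k
    simp only [mem_filter, mem_univ, true_and, mem_map_equiv, Equiv.symm_apply_apply, mem_Iio]
    refine ⟨fun h => ?_, precedes⟩
    by_contra! hjl
    rcases hjl.eq_or_lt with rfl | hjl
    · simp at h
    · rcases precedes hjl with ⟨h1, h2⟩ | ⟨h1, h2⟩ <;> rcases h with ⟨h3, h4⟩ | ⟨h3, h4⟩ <;> omega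
  have disjoint : Disjoint (univ.filter fun k => k < σ j ∧ η (σ j) ≤ η k)
      (univ.filter fun k => σ j < k ∧ η (σ j) < η k) :=
    disjoint_filter.mpr fun k _ h1 h2 => h1.1.asymm h2.1
  rw [legCo, ← card_union_of_disjoint disjoint, ← filter_or, counted, card_map, Fin.card_Iio]

lemma sum_pow_div_pow_legCo (qv tv : K) (η : Fin n → ℕ) :
    ∑ i, qv ^ η i / tv ^ legCo n η i = eigenvalue qv tv (sortDesc n η) := by
  set σ := Tuple.sort (OrderDual.toDual ∘ η) with hσ
  have antitone : Antitone (η ∘ σ) := Tuple.monotone_sort (OrderDual.toDual ∘ η)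
  rw [← Equiv.sum_comp σ, eigenvalue, ← comp_perm_eq_sortDesc antitone]
  simp only [hσ, legCo_stable_sort, div_eq_mul_inv, Function.comp_apply]

lemma last_mul_sum_le_sum_mul {R : Type*} [CommRing R] [LinearOrder R] [IsStrictOrderedRing R]
    {a d : Fin (n + 1) → R} (ha : Antitone a) (hd : ∀ p, 0 ≤ ∑ i ∈ Iic p, d i) :
    a (Fin.last n) * ∑ i, d i ≤ ∑ i, a i * d i := by
  induction n with
  | zero => simp
  | succ n ih =>
    have partial_sum (p : Fin (n + 1)) : ∑ i ∈ Iic p, d i.castSucc = ∑ i ∈ Iic p.castSucc, d i :=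
      (Fin.sum_Iic_castSucc d p).symm
    have initial := ih (ha.comp_monotone Fin.strictMono_castSucc.monotone)
      fun p => (hd p.castSucc).trans_eq (partial_sum p).symm
    have nonneg : 0 ≤ ∑ i : Fin (n + 1), d i.castSucc := by
      simpa [← partial_sum, ← Fin.top_eq_last] using hd (Fin.last n).castSucc
    rw [Fin.sum_univ_castSucc d, Fin.sum_univ_castSucc fun i => a i * d i, mul_add]
    exact add_le_add_left ((mul_le_mul_of_nonneg_right (ha (Fin.le_last _)) nonneg).trans initial) _

/-- Abel summation. -/
lemma sum_mul_nonneg_of_antitone {R : Type*} [CommRing R] [LinearOrder R] [IsStrictOrderedRing R]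
    {a d : Fin n → R} (ha : Antitone a) (hd : ∀ p, 0 ≤ ∑ i ∈ Iic p, d i) (total : ∑ i, d i = 0) :
    0 ≤ ∑ i, a i * d i := by
  cases n with
  | zero => simp
  | succ n => simpa [total] using last_mul_sum_le_sum_mul ha hd

/-- The sum of the squares of the exponents, a numerical refinement of the dominance order. -/
def sumSq {ι : Type*} [Fintype ι] (ν : ι → ℕ) : ℕ :=
  ∑ i, ν i ^ 2

lemma sumSq_comp_perm {ι : Type*} [Fintype ι] (ν : ι → ℕ) (σ : Equiv.Perm ι) :
    sumSq (ν ∘ σ) = sumSq ν :=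
  Equiv.sum_comp σ fun i => ν i ^ 2

lemma sumSq_sortDesc (ν : Fin n → ℕ) : sumSq (sortDesc n ν) = sumSq ν := by
  rw [sortDesc_eq_comp, sumSq_comp_perm]

lemma sumSq_lt_sumSq {ι : Type*} [Fintype ι] {ν μ : ι → ℕ} (hne : ν ≠ μ)
    (h : 0 ≤ ∑ i, (ν i : ℤ) * (μ i - ν i)) : sumSq ν < sumSq μ := by
  obtain ⟨i, hi⟩ := Function.ne_iff.mp hne
  have hi' : (μ i : ℤ) - ν i ≠ 0 := by omega
  have distance : 0 < ∑ i, ((μ i : ℤ) - ν i) ^ 2 :=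
    sum_pos' (fun _ _ => sq_nonneg _) ⟨i, mem_univ i, by positivity⟩
  have expand : ∑ i, (μ i : ℤ) ^ 2 =
      ∑ i, (ν i : ℤ) ^ 2 + 2 * ∑ i, (ν i : ℤ) * (μ i - ν i) + ∑ i, ((μ i : ℤ) - ν i) ^ 2 := by
    rw [mul_sum, ← sum_add_distrib, ← sum_add_distrib]
    exact sum_congr rfl fun i _ => by ring
  zify [sumSq]
  linarith

lemma sum_Iic_sub_nonneg {ν μ : Fin n → ℕ} (h : domLE n ν μ) (p : Fin n) :
    0 ≤ ∑ i ∈ Iic p, ((μ i : ℤ) - ν i) := by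
  rw [sum_sub_distrib, sub_nonneg, ← filter_ge_eq_Iic]
  exact_mod_cast h.2 p

lemma sum_sub_eq_zero {ν μ : Fin n → ℕ} (h : domLE n ν μ) : ∑ i, ((μ i : ℤ) - ν i) = 0 := by
  rw [sum_sub_distrib, sub_eq_zero]
  exact_mod_cast h.1.symm

lemma sumSq_lt_of_domLT {ν μ : Fin n → ℕ} (hν : Antitone ν) (h : domLT n ν μ) :
    sumSq ν < sumSq μ :=
  sumSq_lt_sumSq h.2 <| sum_mul_nonneg_of_antitone (fun _ _ hij => Nat.cast_le.mpr (hν hij))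
    (sum_Iic_sub_nonneg h.1) (sum_sub_eq_zero h.1)

lemma sumSq_lt_of_domLT_monotone {ν α : Fin n → ℕ} (hα : Monotone α) (h : domLT n ν α) :
    sumSq α < sumSq ν := by
  have abel := sum_mul_nonneg_of_antitone (a := fun i => -(α i : ℤ))
    (fun _ _ hij => neg_le_neg (Nat.cast_le.mpr (hα hij))) (sum_Iic_sub_nonneg h.1)
    (sum_sub_eq_zero h.1)
  refine sumSq_lt_sumSq h.2.symm (abel.trans_eq ?_)
  exact sum_congr rfl fun i _ => by ring

end Rearrangement

/-! ### Coefficients and bounded exponents -/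

section Coefficients

variable {n : ℕ} {R : Type*} [CommSemiring R]

/-- The coefficient of `x^ν`, as a linear functional, with the exponent given as a tuple. -/
noncomputable def coeffAt (ν : Fin n → ℕ) : MvPolynomial (Fin n) R →ₗ[R] R :=
  lcoeff R (Finsupp.equivFunOnFinite.symm ν)

lemma coeffAt_apply (ν : Fin n → ℕ) (f : MvPolynomial (Fin n) R) :
    coeffAt ν f = coeff (Finsupp.equivFunOnFinite.symm ν) f :=
  rfl

lemma coeffAt_coe (m : Fin n →₀ ℕ) (f : MvPolynomial (Fin n) R) : coeffAt ⇑m f = coeff m f := by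
  rw [coeffAt_apply, Finsupp.equivFunOnFinite_symm_coe]

lemma coeffAt_C_mul (ν : Fin n → ℕ) (c : R) (f : MvPolynomial (Fin n) R) :
    coeffAt ν (C c * f) = c * coeffAt ν f :=
  coeff_C_mul _ _ _

lemma coeffAt_add_single_X_mul (ν : Fin n → ℕ) (i : Fin n) (f : MvPolynomial (Fin n) R) :
    coeffAt (ν + Pi.single i 1) (X i * f) = coeffAt ν f := by
  have exponent : Finsupp.equivFunOnFinite.symm (ν + Pi.single i 1) =
      Finsupp.single i 1 + Finsupp.equivFunOnFinite.symm ν := by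
    ext j
    simp [Finsupp.single_apply, Pi.single_apply, add_comm, eq_comm]
  rw [coeffAt_apply, exponent, coeff_X_mul, coeffAt_apply]

lemma coeffAt_X_mul_of_eq_zero {ν : Fin n → ℕ} {i : Fin n} (hν : ν i = 0)
    (f : MvPolynomial (Fin n) R) : coeffAt ν (X i * f) = 0 := by
  rw [coeffAt_apply, coeff_X_mul', if_neg (by simpa using hν)]

lemma coeffAt_rename_perm (ν : Fin n → ℕ) (σ : Equiv.Perm (Fin n)) (f : MvPolynomial (Fin n) R) :
    coeffAt ν (rename σ f) = coeffAt (ν ∘ σ) f := by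
  have exponent : Finsupp.equivFunOnFinite.symm ν =
      Finsupp.mapDomain σ (Finsupp.equivFunOnFinite.symm (ν ∘ σ)) := by
    ext j
    obtain ⟨i, rfl⟩ := σ.surjective j
    simp [Finsupp.mapDomain_apply σ.injective]
  rw [coeffAt_apply, exponent, coeff_rename_mapDomain _ σ.injective, coeffAt_apply]

lemma coeffAt_comp_perm {f : MvPolynomial (Fin n) R} (hf : f.IsSymmetric) (ν : Fin n → ℕ)
    (σ : Equiv.Perm (Fin n)) : coeffAt (ν ∘ σ) f = coeffAt ν f := by
  rw [← coeffAt_rename_perm, hf σ]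

lemma coeffAt_sortDesc {f : MvPolynomial (Fin n) R} (hf : f.IsSymmetric) (ν : Fin n → ℕ) :
    coeffAt (sortDesc n ν) f = coeffAt ν f := by
  rw [sortDesc_eq_comp, coeffAt_comp_perm hf]

/-- The polynomials all of whose exponents have sum of squares at most `M`. -/
noncomputable def boundedExponents (n : ℕ) (R : Type*) [CommSemiring R] (M : ℕ) :
    Submodule R (MvPolynomial (Fin n) R) :=
  restrictSupport R {ν | sumSq ν ≤ M}

lemma mem_boundedExponents_iff {M : ℕ} {f : MvPolynomial (Fin n) R} :
    f ∈ boundedExponents n R M ↔ ∀ ν, M < sumSq ν → coeffAt ν f = 0 := by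
  rw [boundedExponents, mem_restrictSupport_iff]
  constructor
  · intro h ν hν
    by_contra hne
    exact hν.not_ge (h (mem_support_iff.mpr hne))
  · intro h ν hν
    by_contra! hlt
    exact mem_support_iff.mp hν (coeffAt_coe ν f ▸ h ν (not_le.mp hlt))

lemma sumSq_add_single (ν : Fin n → ℕ) (i : Fin n) :
    sumSq (ν + Pi.single i 1) = sumSq ν + 2 * ν i + 1 := by
  have others : ∑ j ∈ univ.erase i, (ν + Pi.single i 1 : Fin n → ℕ) j ^ 2 =
      ∑ j ∈ univ.erase i, ν j ^ 2 :=
    sum_congr rfl fun j hj => by simp [(mem_erase.mp hj).1]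
  rw [sumSq, sumSq, ← add_sum_erase _ _ (mem_univ i), ← add_sum_erase _ _ (mem_univ i), others,
    Pi.add_apply, Pi.single_eq_same]
  ring

lemma exists_eq_add_single {ν : Fin n → ℕ} {i : Fin n} {d : ℕ} (h : ν i = d + 1) :
    ∃ β : Fin n → ℕ, ν = β + Pi.single i 1 ∧ β i = d := by
  refine ⟨Function.update ν i d, ?_, by simp⟩
  ext j
  by_cases hj : j = i
  · subst hj
    simp [h]
  · simp [hj]

end Coefficients

/-! ### Demazure–Lustig operators -/

section DemazureLustig

variable {n k : ℕ}

lemma sOp_apply (n k : ℕ) (f : P n) : sOp n k f = rename (sPerm n k) f := by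
  unfold sOp sPerm
  split_ifs <;> simp

lemma coeffAt_sOp (ν : Fin n → ℕ) (f : P n) :
    coeffAt ν (sOp n k f) = coeffAt (ν ∘ sPerm n k) f := by
  rw [sOp_apply, coeffAt_rename_perm]

variable {tv : K} {T : ℕ → P n →ₗ[K] P n}

lemma coeffAt_T_sub (hT : IsDL n tv T) (hk : k + 1 < n) (f : P n) (β : Fin n → ℕ) :
    coeffAt (β + Pi.single ⟨k + 1, hk⟩ 1) (T k f) -
        coeffAt (β + Pi.single ⟨k, by omega⟩ 1) (T k f) =
      tv * coeffAt ((β + Pi.single ⟨k + 1, hk⟩ 1) ∘ sPerm n k) f -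
        coeffAt ((β + Pi.single ⟨k, by omega⟩ 1) ∘ sPerm n k) f +
        (1 - tv) * coeffAt (β + Pi.single ⟨k, by omega⟩ 1) f := by
  have relation := congrArg (coeffAt (β + Pi.single ⟨k, by omega⟩ 1 + Pi.single ⟨k + 1, hk⟩ 1))
    (hT k hk f)
  have left (g : P n) : coeffAt (β + Pi.single ⟨k, by omega⟩ 1 + Pi.single ⟨k + 1, hk⟩ 1)
      (X ⟨k, by omega⟩ * g) = coeffAt (β + Pi.single ⟨k + 1, hk⟩ 1) g := by
    rw [add_right_comm, coeffAt_add_single_X_mul]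
  simp only [sub_mul, mul_assoc, map_add, map_sub, coeffAt_C_mul, left, coeffAt_add_single_X_mul,
    coeffAt_sOp] at relation
  linear_combination relation

lemma coeffAt_T_of_right_eq_zero (hT : IsDL n tv T) (hk : k + 1 < n) (f : P n) {ν : Fin n → ℕ}
    (hν : ν ⟨k + 1, hk⟩ = 0) : coeffAt ν (T k f) = tv * coeffAt (ν ∘ sPerm n k) f := by
  have relation := congrArg (coeffAt (ν + Pi.single ⟨k, by omega⟩ 1)) (hT k hk f)
  have right (g : P n) :
      coeffAt (ν + Pi.single ⟨k, by omega⟩ 1) (X ⟨k + 1, hk⟩ * g) = 0 :=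
    coeffAt_X_mul_of_eq_zero (by simp [hν]) g
  simp only [sub_mul, mul_assoc, map_add, map_sub, coeffAt_C_mul, right, coeffAt_add_single_X_mul,
    coeffAt_sOp] at relation
  linear_combination relation

lemma coeffAt_T_of_left_eq_zero (hT : IsDL n tv T) (hk : k + 1 < n) (f : P n) {ν : Fin n → ℕ}
    (hν : ν ⟨k, by omega⟩ = 0) :
    coeffAt ν (T k f) = (tv - 1) * coeffAt ν f + coeffAt (ν ∘ sPerm n k) f := by
  have relation := congrArg (coeffAt (ν + Pi.single ⟨k + 1, hk⟩ 1)) (hT k hk f)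
  have left (g : P n) :
      coeffAt (ν + Pi.single ⟨k + 1, hk⟩ 1) (X ⟨k, by omega⟩ * g) = 0 :=
    coeffAt_X_mul_of_eq_zero (by simp [hν]) g
  simp only [sub_mul, mul_assoc, map_add, map_sub, coeffAt_C_mul, left, coeffAt_add_single_X_mul,
    coeffAt_sOp] at relation
  linear_combination -relation

/-- Moving a unit from the smaller to the larger of two exponents increases the sum of squares, so
all but one term of the recursion vanish. -/
lemma coeffAt_T_of_right_le (hT : IsDL n tv T) (hk : k + 1 < n) {f : P n} {M : ℕ}
    (hf : f ∈ boundedExponents n K M) {ν : Fin n → ℕ} (hM : M ≤ sumSq ν)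
    (hν : ν ⟨k + 1, hk⟩ ≤ ν ⟨k, by omega⟩) :
    coeffAt ν (T k f) = tv * coeffAt (ν ∘ sPerm n k) f := by
  induction hd : ν ⟨k + 1, hk⟩ generalizing ν with
  | zero => exact coeffAt_T_of_right_eq_zero hT hk f hd
  | succ d ih =>
    obtain ⟨β, rfl, hβ⟩ := exists_eq_add_single hd
    have hle : d + 1 ≤ β ⟨k, by omega⟩ := by simpa [hβ] using hν
    have larger : M < sumSq (β + Pi.single ⟨k, by omega⟩ 1) := by
      rw [sumSq_add_single] at hM ⊢
      omega
    have vanish := mem_boundedExponents_iff.mp hf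
    have recursion := coeffAt_T_sub hT hk f β
    rw [ih larger.le (by simp [hβ]; omega) (by simp [hβ]),
      vanish _ larger, vanish _ (by rwa [sumSq_comp_perm])] at recursion
    linear_combination recursion

lemma coeffAt_T_of_left_le (hT : IsDL n tv T) (hk : k + 1 < n) {f : P n} {M : ℕ}
    (hf : f ∈ boundedExponents n K M) {ν : Fin n → ℕ} (hM : M ≤ sumSq ν)
    (hν : ν ⟨k, by omega⟩ ≤ ν ⟨k + 1, hk⟩) :
    coeffAt ν (T k f) = (tv - 1) * coeffAt ν f + coeffAt (ν ∘ sPerm n k) f := by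
  induction hd : ν ⟨k, Nat.lt_of_succ_lt hk⟩ generalizing ν with
  | zero => exact coeffAt_T_of_left_eq_zero hT hk f hd
  | succ d ih =>
    obtain ⟨β, rfl, hβ⟩ := exists_eq_add_single hd
    have hle : d + 1 ≤ β ⟨k + 1, hk⟩ := by simpa [hβ] using hν
    have larger : M < sumSq (β + Pi.single ⟨k + 1, hk⟩ 1) := by
      rw [sumSq_add_single] at hM ⊢
      omega
    have vanish := mem_boundedExponents_iff.mp hf
    have recursion := coeffAt_T_sub hT hk f β
    rw [ih larger.le (by simp [hβ]; omega) (by simp [hβ]),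
      vanish _ larger, vanish (_ ∘ _) (by rwa [sumSq_comp_perm])] at recursion
    linear_combination -recursion

lemma T_mem_boundedExponents (hT : IsDL n tv T) (hk : k + 1 < n) {f : P n} {M : ℕ}
    (hf : f ∈ boundedExponents n K M) : T k f ∈ boundedExponents n K M := by
  have vanish := mem_boundedExponents_iff.mp hf
  refine mem_boundedExponents_iff.mpr fun ν hν => ?_
  have swapped : coeffAt (ν ∘ sPerm n k) f = 0 := vanish _ (by rwa [sumSq_comp_perm])
  rcases le_total (ν ⟨k + 1, hk⟩) (ν ⟨k, by omega⟩) with h | h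
  · rw [coeffAt_T_of_right_le hT hk hf hν.le h, swapped, mul_zero]
  · rw [coeffAt_T_of_left_le hT hk hf hν.le h, swapped, vanish ν hν, mul_zero, add_zero]

lemma X_sub_X_ne_zero {σ R : Type*} [CommRing R] [Nontrivial R] {i j : σ} (h : i ≠ j) :
    (X i - X j : MvPolynomial σ R) ≠ 0 :=
  sub_ne_zero.mpr (X_injective.ne h)

lemma T_mul_self (hT : IsDL n tv T) (hk : k + 1 < n) :
    T k * T k = (tv - 1) • T k + tv • 1 := by
  refine LinearMap.ext fun f => ?_
  have relation := hT k hk f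
  have applied_twice := hT k hk (T k f)
  have swapped := congrArg (rename (sPerm n k)) relation
  have involutive (g : P n) : rename (sPerm n k) (rename (sPerm n k) g) = g := by
    rw [rename_rename, ← Equiv.Perm.coe_mul, sPerm_mul_self, Equiv.Perm.coe_one, rename_id_apply]
  simp only [sOp_apply, map_mul, map_add, map_sub, rename_X, rename_C, involutive,
    sPerm_apply_left hk, sPerm_apply_right hk] at relation applied_twice swapped
  have distinct := X_sub_X_ne_zero (R := K) (show (⟨k, by omega⟩ : Fin n) ≠ ⟨k + 1, hk⟩ by simp)
  apply mul_left_cancel₀ distinct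
  apply mul_left_cancel₀ distinct
  simp only [Module.End.mul_apply, LinearMap.add_apply, LinearMap.smul_apply, Module.End.one_apply,
    smul_eq_C_mul, map_sub, map_one]
  set x : P n := X ⟨k, by omega⟩
  set y : P n := X ⟨k + 1, hk⟩
  linear_combination (x - y) * applied_twice - (C tv * x - y) * swapped +
    (x - C tv * x) * relation

lemma sOp_eq_self_of_T_eq_smul (hT : IsDL n tv T) (hk : k + 1 < n) {f : P n}
    (hf : T k f = tv • f) : sOp n k f = f := by
  have relation := hT k hk f
  rw [hf, smul_eq_C_mul] at relation
  have product : (C tv * X (⟨k, by omega⟩ : Fin n) - X ⟨k + 1, hk⟩) * (sOp n k f - f) = 0 := by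
    linear_combination -relation
  have nonzero : (C tv * X (⟨k, by omega⟩ : Fin n) - X ⟨k + 1, hk⟩ : P n) ≠ 0 := by
    intro h
    have := congrArg (coeff (Finsupp.single (⟨k + 1, hk⟩ : Fin n) 1)) h
    simp [coeff_C_mul, coeff_X, Finsupp.single_left_inj] at this
  exact sub_eq_zero.mp ((mul_eq_zero.mp product).resolve_left nonzero)

lemma T_eq_smul_of_isSymmetric (hT : IsDL n tv T) (hk : k + 1 < n) {f : P n}
    (hf : f.IsSymmetric) : T k f = tv • f := by
  have relation := hT k hk f
  rw [sOp_apply, hf, sub_self, mul_zero, add_zero] at relation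
  rw [smul_eq_C_mul]
  exact mul_left_cancel₀ (X_sub_X_ne_zero (by simp)) relation

lemma isSymmetric_of_T_eq_smul (hT : IsDL n tv T) {f : P n}
    (hf : ∀ k, k + 1 < n → T k f = tv • f) : f.IsSymmetric := by
  intro σ
  induction σ using perm_induction_ascents with
  | one => rw [Equiv.Perm.coe_one, rename_id_apply]
  | mul_sPerm σ k hk _ ih =>
    have invariant := sOp_eq_self_of_T_eq_smul hT hk (hf k hk)
    rw [sOp_apply] at invariant
    rw [Equiv.Perm.coe_mul, ← rename_rename, invariant, ih]

end DemazureLustig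

/-! ### The operators `T_σ` and the symmetrizer -/

section Symmetrizer

variable {n k : ℕ} {tv : K} {T : ℕ → P n →ₗ[K] P n} {Tw : Equiv.Perm (Fin n) → P n →ₗ[K] P n}

lemma Tw_mul_sPerm (hTw : IsTsigma n T Tw) (hk : k + 1 < n) {σ : Equiv.Perm (Fin n)}
    (hσ : σ ⟨k, by omega⟩ < σ ⟨k + 1, hk⟩) : Tw (σ * sPerm n k) = Tw σ * T k :=
  hTw.2 σ k hk (inversions_mul_sPerm hk hσ)

lemma Tw_one (hTw : IsTsigma n T Tw) : Tw 1 = 1 :=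
  hTw.1

lemma Tw_sPerm_mul (hTw : IsTsigma n T Tw) (hk : k + 1 < n) {σ : Equiv.Perm (Fin n)}
    (hσ : inversions (sPerm n k * σ) = inversions σ + 1) :
    Tw (sPerm n k * σ) = T k * Tw σ := by
  induction σ using perm_induction_ascents with
  | one =>
    have ascent : (1 : Equiv.Perm (Fin n)) ⟨k, by omega⟩ <
        (1 : Equiv.Perm (Fin n)) ⟨k + 1, hk⟩ := by simp
    rw [mul_one, ← one_mul (sPerm n k), Tw_mul_sPerm hTw hk ascent, Tw_one hTw, one_mul, mul_one]
  | mul_sPerm σ j hj ascent ih =>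
    have longer := inversions_mul_sPerm hj ascent
    rw [← mul_assoc] at hσ ⊢
    have length : inversions (sPerm n k * σ) = inversions σ + 1 := by
      have lower := inversions_mul_sPerm_le hj (sPerm n k * σ)
      have upper := inversions_sPerm_mul_le hk σ
      omega
    rw [show Tw (sPerm n k * σ * sPerm n j) = Tw (sPerm n k * σ) * T j from
      hTw.2 _ j hj (by omega), ih length, Tw_mul_sPerm hTw hj ascent, mul_assoc]

lemma Tw_sPerm_mul_of_ascent (hTw : IsTsigma n T Tw) (hk : k + 1 < n) {σ : Equiv.Perm (Fin n)}
    (hσ : σ⁻¹ ⟨k, by omega⟩ < σ⁻¹ ⟨k + 1, hk⟩) : Tw (sPerm n k * σ) = T k * Tw σ := by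
  refine Tw_sPerm_mul hTw hk ?_
  rw [← inversions_inv, mul_inv_rev, sPerm_inv, inversions_mul_sPerm hk hσ, inversions_inv]

lemma sum_perm_eq_sum_ascents {M : Type*} [AddCommMonoid M] (hk : k + 1 < n)
    (F : Equiv.Perm (Fin n) → M) :
    ∑ σ, F σ = ∑ σ : Equiv.Perm (Fin n) with σ⁻¹ ⟨k, by omega⟩ < σ⁻¹ ⟨k + 1, hk⟩,
      (F σ + F (sPerm n k * σ)) := by
  rw [sum_add_distrib, ← sum_filter_add_sum_filter_not univ
    (fun σ : Equiv.Perm (Fin n) => σ⁻¹ ⟨k, by omega⟩ < σ⁻¹ ⟨k + 1, hk⟩)]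
  congr 1
  refine (sum_equiv (Equiv.mulLeft (sPerm n k)) (fun σ => ?_) fun σ _ => rfl).symm
  have distinct : σ⁻¹ ⟨k, by omega⟩ ≠ σ⁻¹ ⟨k + 1, hk⟩ := σ⁻¹.injective.ne (by simp)
  simp only [mem_filter, mem_univ, true_and, Equiv.coe_mulLeft, mul_inv_rev, sPerm_inv,
    Equiv.Perm.mul_apply, sPerm_apply_left hk, sPerm_apply_right hk]
  exact ⟨fun h => h.asymm, fun h => (not_lt.mp h).lt_of_ne' distinct.symm⟩

lemma Uplus_eq_one_add_T_mul (hTw : IsTsigma n T Tw) (hk : k + 1 < n) :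
    Uplus n Tw = (1 + T k) *
      ∑ σ : Equiv.Perm (Fin n) with σ⁻¹ ⟨k, by omega⟩ < σ⁻¹ ⟨k + 1, hk⟩, Tw σ := by
  rw [Uplus, sum_perm_eq_sum_ascents hk, mul_sum]
  refine sum_congr rfl fun σ hσ => ?_
  rw [Tw_sPerm_mul_of_ascent hTw hk (mem_filter.mp hσ).2, add_mul, one_mul]

lemma T_mul_Uplus (hT : IsDL n tv T) (hTw : IsTsigma n T Tw) (hk : k + 1 < n) :
    T k * Uplus n Tw = tv • Uplus n Tw := by
  have absorb : T k * (1 + T k) = tv • (1 + T k) := by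
    rw [mul_add, mul_one, T_mul_self hT hk, sub_smul tv 1 (T k), one_smul, smul_add]
    abel
  rw [Uplus_eq_one_add_T_mul hTw hk, ← mul_assoc, absorb, smul_mul_assoc]

lemma isSymmetric_Uplus (hT : IsDL n tv T) (hTw : IsTsigma n T Tw) (f : P n) :
    (Uplus n Tw f).IsSymmetric :=
  isSymmetric_of_T_eq_smul hT fun _ hk => LinearMap.congr_fun (T_mul_Uplus hT hTw hk) f

lemma coeffAt_Tw (hT : IsDL n tv T) (hTw : IsTsigma n T Tw) {κ : Fin n → ℕ} (hκ : Antitone κ)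
    (σ : Equiv.Perm (Fin n)) {f : P n} (hf : f ∈ boundedExponents n K (sumSq κ)) :
    coeffAt κ (Tw σ f) = tv ^ inversions σ * coeffAt (κ ∘ σ) f := by
  induction σ using perm_induction_ascents generalizing f with
  | one => simp [Tw_one hTw]
  | mul_sPerm σ k hk ascent ih =>
    rw [Tw_mul_sPerm hTw hk ascent, inversions_mul_sPerm hk ascent, Module.End.mul_apply,
      ih (T_mem_boundedExponents hT hk hf),
      coeffAt_T_of_right_le hT hk hf (sumSq_comp_perm κ σ).ge (hκ ascent.le), pow_succ, mul_assoc,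
      Equiv.Perm.coe_mul, Function.comp_assoc]

end Symmetrizer

/-! ### Cherednik elements of an affine braid monoid -/

section AffineBraid

variable {M : Type*} [Monoid M] {n : ℕ}

/-- The relations among the generators `T 0, …, T (n - 2)`, their inverses `T'`, and the rotation
`W` of the affine braid group of type `GL n`; nothing is required of `T k` and `T' k` for larger
`k`. -/
structure IsAffineBraid (n : ℕ) (T T' : ℕ → M) (W : M) : Prop where
  mul_inverse : ∀ k, k + 1 < n → T k * T' k = 1
  inverse_mul : ∀ k, k + 1 < n → T' k * T k = 1
  braid : ∀ k, k + 2 < n → T k * T (k + 1) * T k = T (k + 1) * T k * T (k + 1)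
  comm : ∀ i j, i + 1 < j → j + 1 < n → Commute (T i) (T j)
  shift : ∀ k, k + 2 < n → SemiconjBy W (T (k + 1)) (T k)

/-- The product `S i * S (i + 1) * ⋯ * S (i + d - 1)`. -/
def segmentProd (S : ℕ → M) (i d : ℕ) : M :=
  ((List.range' i d).map S).prod

/-- The product `T_i ⋯ T_{n-2} W T_0⁻¹ ⋯ T_{i-1}⁻¹`, a power of the parameter away from `Y_i`. -/
def cherednikElement (n : ℕ) (T T' : ℕ → M) (W : M) (i : ℕ) : M :=
  segmentProd T i (n - 1 - i) * W * segmentProd T' 0 i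

lemma segmentProd_zero (S : ℕ → M) (i : ℕ) : segmentProd S i 0 = 1 :=
  rfl

lemma segmentProd_succ (S : ℕ → M) (i d : ℕ) :
    segmentProd S i (d + 1) = S i * segmentProd S (i + 1) d := by
  rw [segmentProd, List.range'_succ, List.map_cons, List.prod_cons, segmentProd]

lemma segmentProd_add (S : ℕ → M) (i d e : ℕ) :
    segmentProd S i (d + e) = segmentProd S i d * segmentProd S (i + d) e := by
  rw [segmentProd, ← List.range'_append_1, List.map_append, List.prod_append, segmentProd,
    segmentProd]

lemma segmentProd_succ_last (S : ℕ → M) (i d : ℕ) :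
    segmentProd S i (d + 1) = segmentProd S i d * S (i + d) := by
  rw [segmentProd_add, segmentProd_succ, segmentProd_zero, mul_one]

lemma segmentProd_commute {S : ℕ → M} {x : M} {i d : ℕ}
    (h : ∀ l, i ≤ l → l < i + d → Commute (S l) x) : Commute (segmentProd S i d) x := by
  refine Commute.list_prod_left _ _ fun y hy => ?_
  obtain ⟨l, hl, rfl⟩ := List.mem_map.mp hy
  rw [List.mem_range'_1] at hl
  exact h l hl.1 hl.2

lemma segmentProd_semiconjBy {S U : ℕ → M} {i d k : ℕ} (hik : i ≤ k) (hkd : k + 1 < i + d)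
    (braid : SemiconjBy (S k * S (k + 1)) (U k) (U (k + 1)))
    (below : ∀ l, i ≤ l → l < k → Commute (S l) (U (k + 1)))
    (above : ∀ l, k + 1 < l → l < i + d → Commute (S l) (U k)) :
    SemiconjBy (segmentProd S i d) (U k) (U (k + 1)) := by
  obtain ⟨a, rfl⟩ := Nat.exists_eq_add_of_le hik
  obtain ⟨b, rfl⟩ : ∃ b, d = a + (b + 1 + 1) := ⟨d - a - 2, by omega⟩
  rw [segmentProd_add, segmentProd_succ, segmentProd_succ, ← mul_assoc (S _)]
  have left := segmentProd_commute (S := S) (i := i) (d := a) below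
  have right : Commute (segmentProd S (i + a + 1 + 1) b) (U (i + a)) :=
    segmentProd_commute fun l hl hl' => above l (by omega) (by omega)
  exact SemiconjBy.mul_left left (SemiconjBy.mul_left braid right)

lemma semiconjBy_symm_of_inverse {a a' x y : M} (h : SemiconjBy a x y) (haa' : a * a' = 1)
    (ha'a : a' * a = 1) : SemiconjBy a' y x :=
  SemiconjBy.units_inv_symm_left (a := ⟨a, a', haa', ha'a⟩) h

namespace IsAffineBraid

variable {T T' : ℕ → M} {W : M}

lemma commute_of_far (h : IsAffineBraid n T T' W) {i j : ℕ} (hi : i + 1 < n) (hj : j + 1 < n)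
    (hij : i + 1 < j ∨ j + 1 < i) : Commute (T i) (T j) :=
  hij.elim (h.comm i j · hj) fun hji => (h.comm j i hji hi).symm

lemma inverse_commute_of_far (h : IsAffineBraid n T T' W) {i j : ℕ} (hi : i + 1 < n)
    (hj : j + 1 < n) (hij : i + 1 < j ∨ j + 1 < i) : Commute (T' i) (T j) :=
  semiconjBy_symm_of_inverse (h.commute_of_far hi hj hij) (h.mul_inverse i hi) (h.inverse_mul i hi)

lemma mul_semiconjBy (h : IsAffineBraid n T T' W) {k : ℕ} (hk : k + 2 < n) :
    SemiconjBy (T k * T (k + 1)) (T k) (T (k + 1)) := by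
  rw [SemiconjBy, h.braid k hk, mul_assoc]

lemma inverse_mul_inverse_semiconjBy (h : IsAffineBraid n T T' W) {k : ℕ} (hk : k + 2 < n) :
    SemiconjBy (T' k * T' (k + 1)) (T k) (T (k + 1)) := by
  have forward : SemiconjBy (T (k + 1) * T k) (T (k + 1)) (T k) := by
    rw [SemiconjBy, ← h.braid k hk, mul_assoc]
  refine semiconjBy_symm_of_inverse forward ?_ ?_
  · rw [mul_assoc, ← mul_assoc (T k), h.mul_inverse k (by omega), one_mul, h.mul_inverse (k + 1) hk]
  · rw [mul_assoc, ← mul_assoc (T' (k + 1)), h.inverse_mul (k + 1) hk, one_mul,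
      h.inverse_mul k (by omega)]

lemma commute_cherednikElement (h : IsAffineBraid n T T' W) {k i : ℕ} (hk : k + 1 < n) (hi : i < n)
    (hik : i ≠ k) (hik' : i ≠ k + 1) : Commute (cherednikElement n T T' W i) (T k) := by
  rcases lt_or_gt_of_ne hik with hlt | hgt
  · obtain ⟨k, rfl⟩ := Nat.exists_eq_add_one_of_ne_zero (show k ≠ 0 by omega)
    have outer : SemiconjBy (segmentProd T i (n - 1 - i)) (T k) (T (k + 1)) :=
      segmentProd_semiconjBy (by omega) (by omega) (h.mul_semiconjBy hk)
        (fun l _ _ => h.commute_of_far (by omega) hk (by omega))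
        fun l _ _ => h.commute_of_far (by omega) (by omega) (by omega)
    have inner : Commute (segmentProd T' 0 i) (T (k + 1)) :=
      segmentProd_commute fun l _ _ => h.inverse_commute_of_far (by omega) hk (by omega)
    exact SemiconjBy.mul_left (SemiconjBy.mul_left outer (h.shift k hk)) inner
  · have outer : Commute (segmentProd T i (n - 1 - i)) (T k) :=
      segmentProd_commute fun l _ _ => h.commute_of_far (by omega) hk (by omega)
    have inner : SemiconjBy (segmentProd T' 0 i) (T k) (T (k + 1)) :=
      segmentProd_semiconjBy (by omega) (by omega) (h.inverse_mul_inverse_semiconjBy (by omega))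
        (fun l _ _ => h.inverse_commute_of_far (by omega) (by omega) (by omega))
        fun l _ _ => h.inverse_commute_of_far (by omega) (by omega) (by omega)
    exact SemiconjBy.mul_left (SemiconjBy.mul_left outer (h.shift k (by omega))) inner

lemma mul_cherednikElement_mul (h : IsAffineBraid n T T' W) {k : ℕ} (hk : k + 1 < n) :
    T k * cherednikElement n T T' W (k + 1) * T k = cherednikElement n T T' W k := by
  have length : n - 1 - k = n - 1 - (k + 1) + 1 := by omega
  rw [cherednikElement, cherednikElement, length, segmentProd_succ T k,
    segmentProd_succ_last T' 0, zero_add]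
  simp only [mul_assoc, h.inverse_mul k hk, mul_one]

end IsAffineBraid

end AffineBraid

section HeckeAlgebra

variable {F R : Type*} [Field F] [Ring R] [Algebra F R] {n : ℕ} {c : F}

lemma commute_inv_smul_mul_mul_add {T : R} (hc : c ≠ 0) (hT : T * T = (c - 1) • T + c • 1)
    (y : R) : Commute T (c⁻¹ • (T * y * T) + y) := by
  have left : T * (T * y * T) = (c - 1) • (T * y * T) + c • (y * T) := by
    rw [← mul_assoc, ← mul_assoc, hT]
    simp only [add_mul, smul_mul_assoc, one_mul]
  have right : T * y * T * T = (c - 1) • (T * y * T) + c • (T * y) := by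
    rw [mul_assoc, hT]
    simp only [mul_add, mul_smul_comm, mul_one]
  rw [Commute, SemiconjBy, mul_add, add_mul, mul_smul_comm, smul_mul_assoc, left, right, smul_add,
    smul_add, inv_smul_smul₀ hc, inv_smul_smul₀ hc]
  abel

lemma mul_hecke_inverse {T : R} (hc : c ≠ 0) (hT : T * T = (c - 1) • T + c • 1) :
    T * (c⁻¹ • 1 - 1 + c⁻¹ • T) = 1 := by
  simp only [mul_add, mul_sub, mul_smul_comm, mul_one, hT, smul_add, sub_smul, one_smul, smul_sub,
    inv_smul_smul₀ hc]
  abel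

lemma hecke_inverse_mul {T : R} (hc : c ≠ 0) (hT : T * T = (c - 1) • T + c • 1) :
    (c⁻¹ • 1 - 1 + c⁻¹ • T) * T = 1 := by
  refine Eq.trans ?_ (mul_hecke_inverse hc hT)
  simp only [add_mul, sub_mul, smul_mul_assoc, one_mul, mul_add, mul_sub, mul_smul_comm, mul_one]

lemma IsAffineBraid.commute_sum_cherednikElement {T T' : ℕ → R} {W : R}
    (h : IsAffineBraid n T T' W) (hc : c ≠ 0) {k : ℕ} (hk : k + 1 < n)
    (hT : T k * T k = (c - 1) • T k + c • 1) :
    Commute (T k) (∑ i : Fin n, (c ^ (n - 1 - (i : ℕ)))⁻¹ • cherednikElement n T T' W i) := by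
  have pair : Commute (T k) ((c ^ (n - 1 - k))⁻¹ • cherednikElement n T T' W k +
      (c ^ (n - 1 - (k + 1)))⁻¹ • cherednikElement n T T' W (k + 1)) := by
    have length : n - 1 - k = n - 1 - (k + 1) + 1 := by omega
    rw [← h.mul_cherednikElement_mul hk, length, pow_succ, mul_inv, mul_smul, ← smul_add]
    exact (commute_inv_smul_mul_mul_add hc hT _).smul_right _
  rw [← add_sum_erase _ _ (mem_univ (⟨k, by omega⟩ : Fin n)),
    ← add_sum_erase _ _ (show (⟨k + 1, hk⟩ : Fin n) ∈ univ.erase ⟨k, by omega⟩ by simp),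
    ← add_assoc]
  refine pair.add_right (Commute.sum_right _ _ _ fun i hi => ?_)
  simp only [mem_erase, ne_eq, Fin.ext_iff, mem_univ, and_true] at hi
  exact ((h.commute_cherednikElement hk i.2 hi.2 hi.1).symm).smul_right _

end HeckeAlgebra

/-! ### The Demazure–Lustig operators and `ω` as affine Hecke generators -/

section PermutationRelations

variable {n k : ℕ}

lemma sPerm_braid (hk : k + 2 < n) :
    sPerm n k * sPerm n (k + 1) * sPerm n k = sPerm n (k + 1) * sPerm n k * sPerm n (k + 1) := by
  ext i
  simp only [Equiv.Perm.mul_apply, sPerm_val (show k + 1 < n by omega), sPerm_val hk]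
  split_ifs <;> omega

lemma sPerm_commute {i j : ℕ} (hij : i + 1 < j) (hj : j + 1 < n) :
    Commute (sPerm n i) (sPerm n j) := by
  ext l
  simp only [Equiv.Perm.mul_apply, sPerm_val (show i + 1 < n by omega), sPerm_val hj]
  split_ifs <;> omega

lemma segmentProd_sPerm_val {i d : ℕ} (h : i + d < n) (j : Fin n) :
    (segmentProd (sPerm n) i d j : ℕ) =
      if i ≤ j ∧ j < i + d then (j : ℕ) + 1 else if (j : ℕ) = i + d then i else j := by
  induction d generalizing j with
  | zero =>
    rw [segmentProd_zero, Equiv.Perm.one_apply]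
    split_ifs <;> omega
  | succ d ih =>
    rw [segmentProd_succ_last, Equiv.Perm.mul_apply, ih (by omega), sPerm_val (by omega)]
    split_ifs <;> omega

lemma segmentProd_sPerm_apply_last {i d : ℕ} (h : i + d < n) :
    segmentProd (sPerm n) i d ⟨i + d, h⟩ = ⟨i, by omega⟩ := by
  ext
  simp [segmentProd_sPerm_val h]

end PermutationRelations

section BraidRelations

variable {n k : ℕ} {T : ℕ → P n →ₗ[K] P n} {Tw : Equiv.Perm (Fin n) → P n →ₗ[K] P n}

lemma Tw_sPerm (hTw : IsTsigma n T Tw) (hk : k + 1 < n) : Tw (sPerm n k) = T k := by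
  have step := Tw_mul_sPerm hTw hk (σ := 1) (by simp)
  rwa [one_mul, Tw_one hTw, one_mul] at step

lemma T_braid (hTw : IsTsigma n T Tw) (hk : k + 2 < n) :
    T k * T (k + 1) * T k = T (k + 1) * T k * T (k + 1) := by
  have hk' : k + 1 < n := by omega
  have ascent {j : ℕ} {σ : Equiv.Perm (Fin n)} (hj : j + 1 < n)
      (hσ : (σ ⟨j, by omega⟩ : ℕ) < σ ⟨j + 1, hj⟩) : Tw (σ * sPerm n j) = Tw σ * T j :=
    Tw_mul_sPerm hTw hj hσ
  rw [← Tw_sPerm hTw hk', ← Tw_sPerm hTw hk]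
  have left : Tw (sPerm n k * sPerm n (k + 1) * sPerm n k) = T k * T (k + 1) * T k := by
    rw [ascent hk', ascent hk, Tw_sPerm hTw hk'] <;>
      simp only [Equiv.Perm.mul_apply, sPerm_val hk, sPerm_val hk'] <;> split_ifs <;> omega
  have right : Tw (sPerm n (k + 1) * sPerm n k * sPerm n (k + 1)) =
      T (k + 1) * T k * T (k + 1) := by
    rw [ascent hk, ascent hk', Tw_sPerm hTw hk] <;>
      simp only [Equiv.Perm.mul_apply, sPerm_val hk, sPerm_val hk'] <;> split_ifs <;> omega
  rw [Tw_sPerm hTw hk', Tw_sPerm hTw hk, ← left, ← right, sPerm_braid hk]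

lemma T_commute (hTw : IsTsigma n T Tw) {i j : ℕ} (hij : i + 1 < j) (hj : j + 1 < n) :
    Commute (T i) (T j) := by
  have hi : i + 1 < n := by omega
  have left : Tw (sPerm n i * sPerm n j) = T i * T j := by
    rw [Tw_mul_sPerm hTw hj, Tw_sPerm hTw hi]
    simp only [Fin.lt_def, sPerm_val hi]
    split_ifs <;> omega
  have right : Tw (sPerm n j * sPerm n i) = T j * T i := by
    rw [Tw_mul_sPerm hTw hi, Tw_sPerm hTw hj]
    simp only [Fin.lt_def, sPerm_val hj]
    split_ifs <;> omega
  rw [Commute, SemiconjBy, ← left, ← right, sPerm_commute hij hj]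

end BraidRelations

section Scaling

variable {σ R : Type*} [CommSemiring R]

/-- The substitution `x_j ↦ c_j x_j`. -/
noncomputable def scaling (c : σ → R) : MvPolynomial σ R →ₐ[R] MvPolynomial σ R :=
  aeval fun j => C (c j) * X j

lemma scaling_X (c : σ → R) (j : σ) : scaling c (X j) = C (c j) * X j :=
  aeval_X _ j

lemma scaling_monomial (c : σ → R) (m : σ →₀ ℕ) (a : R) :
    scaling c (monomial m a) = monomial m ((m.prod fun j e => c j ^ e) * a) := by
  have constants : C (m.prod fun j e => c j ^ e) =
      m.prod fun j e => (C (c j) : MvPolynomial σ R) ^ e := by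
    simp only [Finsupp.prod, map_prod, map_pow]
  rw [scaling, aeval_monomial, monomial_eq, C_mul, algebraMap_eq, constants]
  simp only [mul_pow, Finsupp.prod_mul]
  ring

lemma coeff_scaling (c : σ → R) (m : σ →₀ ℕ) (f : MvPolynomial σ R) :
    coeff m (scaling c f) = (m.prod fun j e => c j ^ e) * coeff m f := by
  classical
  induction f using MvPolynomial.induction_on' with
  | add f g hf hg => rw [map_add, coeff_add, coeff_add, hf, hg, mul_add]
  | monomial m' a =>
    rw [scaling_monomial, coeff_monomial, coeff_monomial]
    split_ifs with h
    · rw [h]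
    · rw [mul_zero]

lemma scaling_rename (c : σ → R) (ρ : σ → σ) (f : MvPolynomial σ R) :
    scaling c (rename ρ f) = rename ρ (scaling (c ∘ ρ) f) := by
  have : (scaling c).comp (rename ρ) = (rename ρ).comp (scaling (c ∘ ρ)) :=
    algHom_ext fun j => by simp [scaling_X]
  exact DFunLike.congr_fun this f

end Scaling

section Rotation

variable {n k : ℕ} {qv tv : K} {T : ℕ → P n →ₗ[K] P n}

/-- The factors by which `τ_1` scales the variables. -/
noncomputable def firstFactor (n : ℕ) (qv : K) (j : Fin n) : K :=
  if (j : ℕ) = 0 then qv else 1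

lemma tauOp_apply (qv : K) (f : P n) : tauOp n qv f = scaling (firstFactor n qv) f := by
  have images : (fun j : Fin n => if (j : ℕ) = 0 then C qv * X j else X j) =
      fun j => C (firstFactor n qv j) * X j := by
    ext1 j
    rw [firstFactor]
    split_ifs <;> simp
  rw [tauOp, images, scaling, AlgHom.toLinearMap_apply]

/-- The permutation `s_{n-1} ⋯ s_1` by which `ω` acts on the variables: it sends the first index to
the last one and decreases all others by one. -/
def rotation (n : ℕ) : Equiv.Perm (Fin n) :=
  (segmentProd (sPerm n) 0 (n - 1))⁻¹

lemma rotation_zero (hn : 0 < n) : rotation n ⟨0, hn⟩ = ⟨n - 1, by omega⟩ := by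
  rw [rotation, Equiv.Perm.inv_eq_iff_eq]
  ext
  simp [segmentProd_sPerm_val (show 0 + (n - 1) < n by omega)]

lemma rotation_succ (hk : k + 1 < n) : rotation n ⟨k + 1, hk⟩ = ⟨k, by omega⟩ := by
  rw [rotation, Equiv.Perm.inv_eq_iff_eq]
  ext
  rw [segmentProd_sPerm_val (by omega), if_pos ⟨by omega, by simp; omega⟩]

lemma rotation_mul_sPerm (hk : k + 2 < n) :
    rotation n * sPerm n (k + 1) = sPerm n k * rotation n := by
  have conj : SemiconjBy (segmentProd (sPerm n) 0 (n - 1)) (sPerm n k) (sPerm n (k + 1)) :=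
    segmentProd_semiconjBy (by omega) (by omega)
      (by rw [SemiconjBy, sPerm_braid hk, mul_assoc])
      (fun l _ _ => sPerm_commute (by omega) hk)
      fun l _ _ => (sPerm_commute (by omega) (by omega)).symm
  exact conj.inv_symm_left

lemma foldl_sOp_apply (m : ℕ) (A : P n →ₗ[K] P n) (f : P n) :
    (List.range m).foldl (fun acc k => sOp n k ∘ₗ acc) A f =
      rename ((segmentProd (sPerm n) 0 m)⁻¹ : Equiv.Perm (Fin n)) (A f) := by
  induction m with
  | zero => simp [segmentProd_zero]
  | succ m ih =>
    rw [List.range_succ, List.foldl_append, List.foldl_cons, List.foldl_nil, LinearMap.comp_apply,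
      ih, sOp_apply, rename_rename, segmentProd_succ_last, zero_add, mul_inv_rev, sPerm_inv,
      Equiv.Perm.coe_mul]

lemma omegaOp_apply (qv : K) (f : P n) :
    omegaOp n qv f = rename (rotation n) (scaling (firstFactor n qv) f) := by
  rw [omegaOp, foldl_sOp_apply, tauOp_apply, rotation]

lemma omegaOp_rename_sPerm (hk : k + 2 < n) (f : P n) :
    omegaOp n qv (rename (sPerm n (k + 1)) f) = rename (sPerm n k) (omegaOp n qv f) := by
  have invariant : firstFactor n qv ∘ sPerm n (k + 1) = firstFactor n qv := by
    ext j
    simp only [firstFactor, Function.comp_apply, sPerm_val hk]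
    congr 1
    split_ifs <;> simp <;> omega
  rw [omegaOp_apply, omegaOp_apply, scaling_rename, invariant, rename_rename, rename_rename,
    ← Equiv.Perm.coe_mul, rotation_mul_sPerm hk, Equiv.Perm.coe_mul]

lemma omegaOp_semiconjBy (hT : IsDL n tv T) (hk : k + 2 < n) :
    SemiconjBy (omegaOp n qv) (T (k + 1)) (T k) := by
  refine LinearMap.ext fun f => ?_
  have hk' : k + 1 < n := by omega
  have hmul (f g : P n) : omegaOp n qv (f * g) = omegaOp n qv f * omegaOp n qv g := by
    simp only [omegaOp_apply, map_mul]
  have hC (a : K) : omegaOp n qv (C a) = C a := by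
    rw [omegaOp_apply, ← algebraMap_eq, AlgHom.commutes, AlgHom.commutes]
  have hX {j : ℕ} (hj : j + 1 < n) : omegaOp n qv (X ⟨j + 1, hj⟩) = X ⟨j, by omega⟩ := by
    simp [omegaOp_apply, scaling_X, firstFactor, rotation_succ hj]
  have image := congrArg (omegaOp n qv) (hT (k + 1) hk f)
  simp only [sOp_apply, map_add, map_sub, hmul, hC, hX, omegaOp_rename_sPerm hk] at image
  have relation := hT k hk' (omegaOp n qv f)
  rw [sOp_apply] at relation
  exact mul_left_cancel₀ (X_sub_X_ne_zero (by simp)) (image.trans relation.symm)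

lemma coeffAt_omegaOp (hn : 0 < n) (f : P n) (ν : Fin n → ℕ) :
    coeffAt ν (omegaOp n qv f) = qv ^ ν ⟨n - 1, by omega⟩ * coeffAt (ν ∘ rotation n) f := by
  have factor : ((Finsupp.equivFunOnFinite.symm (ν ∘ rotation n)).prod
      fun j e => firstFactor n qv j ^ e) = qv ^ ν ⟨n - 1, by omega⟩ := by
    rw [Finsupp.prod_fintype _ _ fun j => pow_zero _, prod_eq_single ⟨0, hn⟩]
    · simp [firstFactor, rotation_zero hn]
    · intro j _ hj
      rw [firstFactor, if_neg (Fin.val_ne_iff.mpr hj), one_pow]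
    · simp
  rw [omegaOp_apply, coeffAt_rename_perm, coeffAt_apply, coeff_scaling, factor, coeffAt_apply]

lemma omegaOp_mem_boundedExponents (hn : 0 < n) {f : P n} {M : ℕ}
    (hf : f ∈ boundedExponents n K M) : omegaOp n qv f ∈ boundedExponents n K M := by
  refine mem_boundedExponents_iff.mpr fun ν hν => ?_
  rw [coeffAt_omegaOp hn, mem_boundedExponents_iff.mp hf _ (by rwa [sumSq_comp_perm]), mul_zero]

end Rotation

/-! ### The Cherednik operators -/

section Cherednik

variable {n k : ℕ} {qv tv : K} {T : ℕ → P n →ₗ[K] P n} {Tw : Equiv.Perm (Fin n) → P n →ₗ[K] P n}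

lemma foldr_comp_eq_prod (S : ℕ → P n →ₗ[K] P n) (l : List ℕ) :
    l.foldr (fun k acc => S k ∘ₗ acc) LinearMap.id = (l.map S).prod := by
  induction l with
  | nil => rfl
  | cons k l ih => rw [List.foldr_cons, ih, List.map_cons, List.prod_cons, Module.End.mul_eq_comp]

lemma Yop_eq_smul_cherednikElement (qv tv : K) (T : ℕ → P n →ₗ[K] P n) (i : Fin n) :
    Yop n qv tv T i =
      (tv ^ (n - 1 - (i : ℕ)))⁻¹ • cherednikElement n T (Tinv n tv T) (omegaOp n qv) i := by
  rw [Yop, foldr_comp_eq_prod, foldr_comp_eq_prod, List.range_eq_range', cherednikElement,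
    mul_assoc]
  rfl

lemma isAffineBraid_T (ht : tv ≠ 0) (hT : IsDL n tv T) (hTw : IsTsigma n T Tw) :
    IsAffineBraid n T (Tinv n tv T) (omegaOp n qv) where
  mul_inverse _ hk := mul_hecke_inverse (R := Module.End K (P n)) ht (T_mul_self hT hk)
  inverse_mul _ hk := hecke_inverse_mul (R := Module.End K (P n)) ht (T_mul_self hT hk)
  braid _ hk := T_braid hTw hk
  comm _ _ hij hj := T_commute hTw hij hj
  shift _ hk := omegaOp_semiconjBy hT hk

lemma T_commute_sum_Yop (ht : tv ≠ 0) (hT : IsDL n tv T) (hTw : IsTsigma n T Tw)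
    (hk : k + 1 < n) : Commute (T k) (∑ i, Yop n qv tv T i) := by
  simp only [Yop_eq_smul_cherednikElement]
  exact IsAffineBraid.commute_sum_cherednikElement (R := Module.End K (P n))
    (isAffineBraid_T ht hT hTw) ht hk (T_mul_self hT hk)

lemma Tw_commute_sum_Yop (ht : tv ≠ 0) (hT : IsDL n tv T) (hTw : IsTsigma n T Tw)
    (σ : Equiv.Perm (Fin n)) : Commute (Tw σ) (∑ i, Yop n qv tv T i) := by
  induction σ using perm_induction_ascents with
  | one => rw [Tw_one hTw]; exact Commute.one_left _
  | mul_sPerm σ k hk ascent ih =>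
    rw [Tw_mul_sPerm hTw hk ascent]
    exact ih.mul_left (T_commute_sum_Yop ht hT hTw hk)

lemma Uplus_commute_sum_Yop (ht : tv ≠ 0) (hT : IsDL n tv T) (hTw : IsTsigma n T Tw) :
    Commute (Uplus n Tw) (∑ i, Yop n qv tv T i) :=
  Commute.sum_left _ _ _ fun σ _ => Tw_commute_sum_Yop ht hT hTw σ

lemma Tinv_apply_of_isSymmetric (ht : tv ≠ 0) (hT : IsDL n tv T) (hk : k + 1 < n) {f : P n}
    (hf : f.IsSymmetric) : Tinv n tv T k f = tv⁻¹ • f := by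
  simp only [Tinv, LinearMap.add_apply, LinearMap.sub_apply, LinearMap.smul_apply,
    LinearMap.id_apply, T_eq_smul_of_isSymmetric hT hk hf, inv_smul_smul₀ ht, sub_add_cancel]

lemma segmentProd_Tinv_apply_of_isSymmetric (ht : tv ≠ 0) (hT : IsDL n tv T) {i d : ℕ}
    (h : i + d < n) {f : P n} (hf : f.IsSymmetric) :
    segmentProd (Tinv n tv T) i d f = (tv ^ d)⁻¹ • f := by
  induction d with
  | zero => simp [segmentProd_zero]
  | succ d ih =>
    rw [segmentProd_succ_last, Module.End.mul_apply,
      Tinv_apply_of_isSymmetric (k := i + d) ht hT h hf, map_smul, ih (by omega), smul_smul,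
      pow_succ', mul_inv]

lemma coeffAt_segmentProd_T (hT : IsDL n tv T) {i d : ℕ} (h : i + d < n) {μ : Fin n → ℕ}
    (hμ : Antitone μ) {f : P n} (hf : f ∈ boundedExponents n K (sumSq μ)) :
    coeffAt μ (segmentProd T i d f) =
      tv ^ d * coeffAt (μ ∘ (segmentProd (sPerm n) i d : Equiv.Perm (Fin n))) f := by
  induction d generalizing f with
  | zero => simp [segmentProd_zero]
  | succ d ih =>
    have sorted : (μ ∘ (segmentProd (sPerm n) i d : Equiv.Perm (Fin n))) (⟨i + d + 1, h⟩ : Fin n) ≤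
        (μ ∘ (segmentProd (sPerm n) i d : Equiv.Perm (Fin n))) ⟨i + d, by omega⟩ := by
      refine hμ (Fin.le_def.mpr ?_)
      simp only [segmentProd_sPerm_val (show i + d < n by omega)]
      split_ifs <;> omega
    rw [segmentProd_succ_last, Module.End.mul_apply,
      ih (by omega) (T_mem_boundedExponents (k := i + d) hT h hf),
      coeffAt_T_of_right_le (k := i + d) hT h hf (sumSq_comp_perm _ _).ge sorted,
      segmentProd_succ_last, Equiv.Perm.coe_mul, ← Function.comp_assoc, pow_succ, mul_assoc]

lemma coeffAt_Yop (ht : tv ≠ 0) (hT : IsDL n tv T) {μ : Fin n → ℕ} (hμ : Antitone μ) {f : P n}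
    (hf : f ∈ boundedExponents n K (sumSq μ)) (hsymm : f.IsSymmetric) (i : Fin n) :
    coeffAt μ (Yop n qv tv T i f) = qv ^ μ i * (tv ^ (i : ℕ))⁻¹ * coeffAt μ f := by
  have hn : 0 < n := i.pos
  have hlast : (i : ℕ) + (n - 1 - i) = n - 1 := by omega
  have image : segmentProd (sPerm n) (i : ℕ) (n - 1 - i) ⟨n - 1, by omega⟩ = i := by
    simpa only [hlast] using segmentProd_sPerm_apply_last (show (i : ℕ) + (n - 1 - i) < n by omega)
  simp only [Yop_eq_smul_cherednikElement, cherednikElement, LinearMap.smul_apply,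
    Module.End.mul_apply, map_smul, smul_eq_mul,
    segmentProd_Tinv_apply_of_isSymmetric ht hT (show 0 + (i : ℕ) < n by omega) hsymm,
    coeffAt_segmentProd_T hT (show (i : ℕ) + (n - 1 - i) < n by omega) hμ
      (omegaOp_mem_boundedExponents hn hf),
    coeffAt_omegaOp hn, Function.comp_apply, image, coeffAt_comp_perm hsymm]
  field_simp

lemma coeffAt_sum_Yop (ht : tv ≠ 0) (hT : IsDL n tv T) {μ : Fin n → ℕ} (hμ : Antitone μ) {f : P n}
    (hf : f ∈ boundedExponents n K (sumSq μ)) (hsymm : f.IsSymmetric) :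
    coeffAt μ ((∑ i, Yop n qv tv T i) f) = eigenvalue qv tv μ * coeffAt μ f := by
  rw [LinearMap.sum_apply, map_sum, eigenvalue, sum_mul]
  exact sum_congr rfl fun i _ => coeffAt_Yop ht hT hμ hf hsymm i

end Cherednik

section SymmetricEigenvectors

variable {n : ℕ} {qv tv c : K} {T : ℕ → P n →ₗ[K] P n}

lemma exists_antitone_exponent_of_ne_zero {R : Type*} [CommSemiring R]
    {f : MvPolynomial (Fin n) R} (hsymm : f.IsSymmetric) (hf : f ≠ 0) :
    ∃ μ, Antitone μ ∧ coeffAt μ f ≠ 0 ∧ f ∈ boundedExponents n R (sumSq μ) := by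
  obtain ⟨m, hm, maximal⟩ :=
    exists_max_image f.support (fun m => sumSq ⇑m) (support_nonempty.mpr hf)
  refine ⟨sortDesc n m, sortDesc_antitone _, ?_, mem_boundedExponents_iff.mpr fun ν hν => ?_⟩
  · rwa [coeffAt_sortDesc hsymm, coeffAt_coe, ← mem_support_iff]
  · rw [sumSq_sortDesc] at hν
    by_contra hne
    exact hν.not_ge (maximal _ (mem_support_iff.mpr hne))

/-- On symmetric polynomials `∑ Yᵢ` is triangular with respect to `sumSq`, so its eigenvalue on `f`
is that of a maximal exponent of `f`. -/
lemma eq_zero_of_sum_Yop_eq_smul (ht : tv ≠ 0) (hT : IsDL n tv T) {κ : Fin n → ℕ}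
    (separated : ∀ μ, Antitone μ → eigenvalue qv tv μ = c → μ = κ) {f : P n}
    (hsymm : f.IsSymmetric) (eigen : (∑ i, Yop n qv tv T i) f = c • f) (hκ : coeffAt κ f = 0) :
    f = 0 := by
  by_contra hf
  obtain ⟨μ, hμ, hne, bounded⟩ := exists_antitone_exponent_of_ne_zero hsymm hf
  have leading := congrArg (coeffAt μ) eigen
  rw [coeffAt_sum_Yop ht hT hμ bounded hsymm, map_smul, smul_eq_mul] at leading
  rw [separated μ hμ (mul_right_cancel₀ hne leading)] at hne
  exact hne hκ

lemma eq_smul_of_sum_Yop_eq_smul (ht : tv ≠ 0) (hT : IsDL n tv T) {κ : Fin n → ℕ}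
    (separated : ∀ μ, Antitone μ → eigenvalue qv tv μ = c → μ = κ) {f g : P n}
    (hf : f.IsSymmetric) (hg : g.IsSymmetric) (eigen_f : (∑ i, Yop n qv tv T i) f = c • f)
    (eigen_g : (∑ i, Yop n qv tv T i) g = c • g) (hκ : coeffAt κ g = 1) :
    f = coeffAt κ f • g := by
  refine sub_eq_zero.mp (eq_zero_of_sum_Yop_eq_smul ht hT separated ?_ ?_ ?_)
  · exact hf.sub (hg.smul _)
  · rw [map_sub, map_smul, eigen_f, eigen_g, smul_sub, smul_comm]
  · rw [map_sub, map_smul, hκ, smul_eq_mul, mul_one, sub_self]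

end SymmetricEigenvectors

/-! ### The leading coefficient of `U⁺ E` -/

section LeadingCoefficient

variable {n : ℕ} {qv tv : K} {T : ℕ → P n →ₗ[K] P n} {Tw : Equiv.Perm (Fin n) → P n →ₗ[K] P n}

lemma IsNSMac.sum_Yop_apply {η : Fin n → ℕ} {E : P n} (hE : IsNSMac n qv tv T η E) :
    (∑ i, Yop n qv tv T i) E = eigenvalue qv tv (sortDesc n η) • E := by
  rw [LinearMap.sum_apply, ← sum_pow_div_pow_legCo, sum_smul]
  exact sum_congr rfl fun i _ => hE.2.2 i

lemma IsNSMac.eq_or_sumSq_lt {α : Fin n → ℕ} (hα : Monotone α) {E : P n}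
    (hE : IsNSMac n qv tv T α E) {ν : Fin n → ℕ} (hν : coeffAt ν E ≠ 0) :
    ν = α ∨ sumSq ν < sumSq α := by
  rcases hE.2.1 _ hν with h | h | ⟨same_sort, h⟩
  · exact Or.inl h
  · right
    rw [← sumSq_sortDesc ν, ← sumSq_sortDesc α]
    exact sumSq_lt_of_domLT (sortDesc_antitone ν) h
  · have increase := sumSq_lt_of_domLT_monotone hα h
    rw [← sumSq_sortDesc α, ← same_sort, sumSq_sortDesc] at increase
    exact absurd increase (lt_irrefl _)

lemma IsNSMac.mem_boundedExponents {α : Fin n → ℕ} (hα : Monotone α) {E : P n}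
    (hE : IsNSMac n qv tv T α E) : E ∈ boundedExponents n K (sumSq α) := by
  refine mem_boundedExponents_iff.mpr fun ν hν => ?_
  by_contra hne
  rcases hE.eq_or_sumSq_lt hα hne with rfl | hlt
  · exact lt_irrefl _ hν
  · exact lt_asymm hν hlt

lemma IsNSMac.coeffAt_eq_ite {α : Fin n → ℕ} (hα : Monotone α) {E : P n}
    (hE : IsNSMac n qv tv T α E) {ν : Fin n → ℕ} (hν : sumSq ν = sumSq α) :
    coeffAt ν E = if ν = α then 1 else 0 := by
  split_ifs with h
  · rw [h]
    exact hE.1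
  · by_contra hne
    exact (hE.eq_or_sumSq_lt hα hne).elim h hν.not_lt

lemma coeffAt_Uplus (ht : tv ≠ 0) (hT : IsDL n tv T) (hTw : IsTsigma n T Tw) {κ : Fin n → ℕ}
    (hκ : Antitone κ) {f : P n} (hf : f ∈ boundedExponents n K (sumSq κ))
    (leading : ∀ σ : Equiv.Perm (Fin n),
      coeffAt (κ ∘ σ) f = if κ ∘ σ = κ ∘ Fin.rev then 1 else 0) :
    coeffAt κ (Uplus n Tw f) = tv ^ (n * (n - 1) / 2) *
      ∑ τ ∈ ({τ | κ ∘ τ = κ} : Finset (Equiv.Perm (Fin n))), tv⁻¹ ^ inversions τ := by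
  have same_coset (τ : Equiv.Perm (Fin n)) :
      κ ∘ (τ * Fin.revPerm : Equiv.Perm (Fin n)) = κ ∘ Fin.rev ↔ κ ∘ τ = κ :=
    Fin.rev_surjective.injective_comp_right.eq_iff (a := κ ∘ τ) (b := κ)
  have length (τ : Equiv.Perm (Fin n)) :
      tv ^ inversions (τ * Fin.revPerm) = tv ^ (n * (n - 1) / 2) * tv⁻¹ ^ inversions τ := by
    rw [← inversions_mul_revPerm_add τ, pow_add, inv_pow,
      mul_inv_cancel_right₀ (pow_ne_zero _ ht)]
  rw [Uplus, LinearMap.sum_apply, map_sum, ← Equiv.sum_comp (Equiv.mulRight Fin.revPerm), mul_sum,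
    sum_filter]
  refine sum_congr rfl fun τ _ => ?_
  rw [Equiv.coe_mulRight, coeffAt_Tw hT hTw hκ _ hf, leading, length]
  simp only [same_coset, mul_ite, mul_one, mul_zero]

lemma qfact_eq_prod_geom_sum {s : K} (hs : s ≠ 1) (m : ℕ) :
    qfact s m = ∏ k ∈ range m, ∑ c ∈ range (k + 1), s ^ c := by
  refine prod_congr rfl fun k _ => ?_
  rw [geom_sum_eq hs, ← neg_sub, ← neg_sub s 1, neg_div_neg_eq]

lemma card_filter_sortDesc_eq (η : Fin n → ℕ) (j : ℕ) :
    #{i | sortDesc n η i = j} = #{i | η i = j} := by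
  refine card_equiv (Tuple.sort η * Fin.revPerm : Equiv.Perm (Fin n)) fun i => ?_
  rw [mem_filter_univ, mem_filter_univ, sortDesc_eq_comp, Function.comp_apply]

lemma coeffAt_sortDesc_Uplus (ht0 : tv ≠ 0) (ht1 : tv ≠ 1) (hT : IsDL n tv T)
    (hTw : IsTsigma n T Tw) {η : Fin n → ℕ} {E : P n} (hE : IsNSMac n qv tv T (sortAsc n η) E)
    {S : Finset ℕ} (hS : ∀ i, sortDesc n η i ∈ S) :
    coeffAt (sortDesc n η) (Uplus n Tw E) =
      tv ^ (n * (n - 1) / 2) * ∏ j ∈ S, qfact tv⁻¹ #{i | η i = j} := by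
  have reversed : sortAsc n η = sortDesc n η ∘ Fin.revPerm := by
    ext i
    simp [sortDesc, sortAsc]
  have sumSq_eq (σ : Equiv.Perm (Fin n)) : sumSq (sortDesc n η ∘ σ) = sumSq (sortAsc n η) := by
    rw [reversed, sumSq_comp_perm, sumSq_comp_perm]
  have bounded : E ∈ boundedExponents n K (sumSq (sortDesc n η)) := by
    simpa only [reversed, sumSq_comp_perm] using hE.mem_boundedExponents (sortAsc_monotone η)
  rw [coeffAt_Uplus ht0 hT hTw (sortDesc_antitone η) bounded fun σ => by
    rw [hE.coeffAt_eq_ite (sortAsc_monotone η) (sumSq_eq σ), reversed]; rfl,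
    sum_pow_inversions_stabilizer (sortDesc_antitone η) _ hS]
  simp only [card_filter_sortDesc_eq, qfact_eq_prod_geom_sum (inv_ne_one.mpr ht1)]

end LeadingCoefficient

/-! ### The field `ℚ(q, t)` -/

section Generic

variable {n : ℕ}

lemma t_ne_zero : t ≠ 0 := by
  rw [t, Ne, FaithfulSMul.algebraMap_eq_zero_iff]
  exact X_ne_zero _

lemma t_ne_one : t ≠ 1 := by
  rw [t, Ne, FaithfulSMul.algebraMap_eq_one_iff]
  intro h
  have := congrArg (coeff (Finsupp.single (1 : Fin 2) 1)) h
  simp [coeff_one, eq_comm] at this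

lemma t_pow_mul_eigenvalue (ν : Fin n → ℕ) :
    t ^ n * eigenvalue q t ν = algebraMap (MvPolynomial (Fin 2) ℚ) K
      (∑ i : Fin n, monomial (Finsupp.single 0 (ν i) + Finsupp.single 1 (n - (i : ℕ))) 1) := by
  rw [eigenvalue, mul_sum, map_sum]
  refine sum_congr rfl fun i _ => ?_
  have split : t ^ n = t ^ (n - (i : ℕ)) * t ^ (i : ℕ) := by
    rw [← pow_add, Nat.sub_add_cancel i.is_le']
  have image : algebraMap (MvPolynomial (Fin 2) ℚ) K
      (monomial (Finsupp.single 0 (ν i) + Finsupp.single 1 (n - (i : ℕ))) 1) =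
        q ^ ν i * t ^ (n - (i : ℕ)) := by
    rw [q, t, ← map_pow, ← map_pow, ← map_mul, X_pow_eq_monomial, X_pow_eq_monomial, monomial_mul,
      one_mul]
  rw [image, split]
  field_simp [t_ne_zero]

lemma coeff_sum_monomial_eq_ite {R : Type*} [CommSemiring R] (ν : Fin n → ℕ) (i : Fin n) (e : ℕ) :
    coeff (Finsupp.single 0 e + Finsupp.single 1 (n - (i : ℕ)))
      (∑ j : Fin n, monomial (Finsupp.single 0 (ν j) + Finsupp.single 1 (n - (j : ℕ))) 1 :
        MvPolynomial (Fin 2) R) = if ν i = e then 1 else 0 := by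
  rw [coeff_sum, sum_eq_single i]
  · simp only [coeff_monomial, add_left_inj, (Finsupp.single_injective (0 : Fin 2)).eq_iff]
  · intro j _ hj
    rw [coeff_monomial, if_neg]
    intro same
    have row : n - (j : ℕ) = n - (i : ℕ) := by simpa using DFunLike.congr_fun same 1
    exact hj (Fin.ext (by omega))
  · simp

lemma eigenvalue_injective : Function.Injective (eigenvalue (n := n) q t) := by
  intro μ κ h
  have polynomials := congrArg (t ^ n * ·) h
  simp only [t_pow_mul_eigenvalue] at polynomials
  replace polynomials := FaithfulSMul.algebraMap_injective (MvPolynomial (Fin 2) ℚ) K polynomials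
  ext i
  have coefficients :=
    congrArg (coeff (Finsupp.single 0 (κ i) + Finsupp.single 1 (n - (i : ℕ)))) polynomials
  rw [coeff_sum_monomial_eq_ite, coeff_sum_monomial_eq_ite, if_pos rfl] at coefficients
  by_contra hne
  rw [if_neg hne] at coefficients
  exact zero_ne_one coefficients

end Generic

end Stmt18

theorem stmt_18_general {qv tv : K} (ht0 : tv ≠ 0) (ht1 : tv ≠ 1) (n : ℕ) (hn : 0 < n)
    (η : Fin n → ℕ)
    (separated : ∀ μ : Fin n → ℕ, Antitone μ →
      eigenvalue qv tv μ = eigenvalue qv tv (sortDesc n η) → μ = sortDesc n η)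
    (T : ℕ → P n →ₗ[K] P n) (hT : IsDL n tv T)
    (Tw : Equiv.Perm (Fin n) → P n →ₗ[K] P n) (hTw : IsTsigma n T Tw)
    (E : P n) (hE : IsNSMac n qv tv T (sortAsc n η) E)
    (Pp : P n) (hPp : IsSymMac n qv tv T (sortDesc n η) Pp) :
    Uplus n Tw E =
      C (tv ^ (n * (n - 1) / 2) *
          ∏ j ∈ Finset.range (sortDesc n η ⟨0, hn⟩ + 1),
            qfact tv⁻¹ ((univ.filter fun i : Fin n => η i = j).card)) * Pp := by
  obtain ⟨symm_P, leading_P, -, eigen_P⟩ := hPp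
  have eigen_E : (∑ i, Yop n qv tv T i) (Uplus n Tw E) =
      eigenvalue qv tv (sortDesc n η) • Uplus n Tw E := by
    have commute := LinearMap.congr_fun (Uplus_commute_sum_Yop (qv := qv) ht0 hT hTw).eq E
    rw [Module.End.mul_apply, Module.End.mul_apply, hE.sum_Yop_apply, map_smul] at commute
    rw [← commute, sortDesc_sortAsc]
  have bound (i : Fin n) : sortDesc n η i ∈ range (sortDesc n η ⟨0, hn⟩ + 1) :=
    mem_range_succ_iff.mpr (sortDesc_antitone η (Fin.mk_le_of_le_val i.val.zero_le))
  rw [← coeffAt_sortDesc_Uplus ht0 ht1 hT hTw hE bound, ← smul_eq_C_mul]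
  exact eq_smul_of_sum_Yop_eq_smul ht0 hT separated (isSymmetric_Uplus hT hTw E) symm_P eigen_E
    eigen_P leading_P

theorem stmt_18 (n : ℕ) (hn : 0 < n) (η : Fin n → ℕ)
    (T : ℕ → P n →ₗ[K] P n) (hT : IsDL n t T)
    (Tw : Equiv.Perm (Fin n) → P n →ₗ[K] P n) (hTw : IsTsigma n T Tw)
    (E : P n) (hE : IsNSMac n q t T (sortAsc n η) E)
    (Pp : P n) (hPp : IsSymMac n q t T (sortDesc n η) Pp) :
    Uplus n Tw E =
      C (t ^ (n * (n - 1) / 2) *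
          ∏ j ∈ Finset.range (sortDesc n η ⟨0, hn⟩ + 1),
            qfact t⁻¹ ((univ.filter fun i : Fin n => η i = j).card)) * Pp :=
  stmt_18_general t_ne_zero t_ne_one n hn η (fun _ _ h => eigenvalue_injective h) T hT Tw hTw E hE
    Pp hPp
end
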